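/- arXiv:2503.01575 — 2 statements merged into one kernel-verified Lean document; each statement's English description precedes it below -/
import Mathlib

section
/- Let ε>0, 0<α<1, and β∈[0, ε/(1+ε)). Let {a_n}_{n≥1} and {b_n}_{n≥1} be sequences of positive integers such that n^{1+ε} < a_n ≤ a_{n+1} and b_n ≤ a_n^β · 2^{(log₂ a_n)^α} for all n. If limsup_{n→∞} a_n^{(1/(1−β)+1)^{−n}} = ∞, then for every sequence {c_n}_{n≥1} of positive integers, the infinite product ∏_{n=1}^∞ (1 + b_n/(a_n c_n)) converges to an irrational real number. -/
open Filter

/-- selection -/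
lemma sel (γ K : ℝ) (hγ : 0 < γ) (hK : K = 1 / γ + 1) (hK2 : 2 ≤ K) (L : ℕ → ℝ)
    (M : ℝ) (hM : 1 ≤ M) (k : ℕ) (hk : 1 ≤ k)
    (hS : ∑ i ∈ Finset.range k, L i ≤ γ * M * K ^ k) (n : ℕ) (hkn : k ≤ n)
    (hn : 2 * M * K ^ n < L n) :
    ∃ N, k ≤ N ∧ N ≤ n ∧ K ^ N ≤ L N ∧
      ∑ i ∈ Finset.range N, L i ≤ γ * L N * (1 - 1 / (2 * ((N : ℝ) + 1) ^ 2)) ∧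
      ∑ i ∈ Finset.range N, L i ≤ 2 * γ * M * K ^ N := by
  classical
  have hKpos : 0 < K := by linarith
  have hex : ∃ m, k ≤ m ∧ M * (2 - 1 / ((m : ℝ) + 1)) * K ^ m < L m := by
    refine ⟨n, hkn, lt_of_le_of_lt ?_ hn⟩
    have : 0 ≤ 1 / ((n : ℝ) + 1) := by positivity
    have h2 : M * (2 - 1 / ((n : ℝ) + 1)) ≤ 2 * M := by nlinarith
    exact mul_le_mul_of_nonneg_right h2 (by positivity)
  obtain ⟨hkN, hN⟩ := Nat.find_spec hex
  have hmin : ∀ j, j < Nat.find hex → k ≤ j → L j ≤ M * (2 - 1 / ((j : ℝ) + 1)) * K ^ j := by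
    intro j hj hkj
    by_contra hcon
    exact Nat.find_min hex hj ⟨hkj, not_le.mp hcon⟩
  have hNn : Nat.find hex ≤ n := by
    by_contra hcon
    have h1 := hmin n (not_le.mp hcon) hkn
    have : 0 ≤ 1 / ((n : ℝ) + 1) := by positivity
    have h2 : M * (2 - 1 / ((n : ℝ) + 1)) ≤ 2 * M := by nlinarith
    have := mul_le_mul_of_nonneg_right h2 (show 0 ≤ K ^ n by positivity)
    linarith
  generalize Nat.find hex = N at *
  have hN1 : (1 : ℝ) ≤ N := by exact_mod_cast hk.trans hkN
  have hKN : 0 < K ^ N := by positivity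
  have hgeom : ∑ j ∈ Finset.Ico k N, K ^ j = γ * (K ^ N - K ^ k) := by
    rw [geom_sum_Ico (by linarith) hkN]
    have : K - 1 = 1 / γ := by linarith
    rw [this]; field_simp
  have hPN : 1 ≤ 2 - 1 / (N : ℝ) := by
    have : 1 / (N : ℝ) ≤ 1 := by rw [div_le_one (by linarith)]; exact hN1
    linarith
  have hSN : ∑ i ∈ Finset.range N, L i ≤ γ * M * (2 - 1 / (N : ℝ)) * K ^ N := by
    rw [← Finset.sum_range_add_sum_Ico _ hkN]
    have h1 : ∑ i ∈ Finset.Ico k N, L i ≤ ∑ i ∈ Finset.Ico k N, M * (2 - 1 / (N : ℝ)) * K ^ i := by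
      apply Finset.sum_le_sum
      intro i hi
      rw [Finset.mem_Ico] at hi
      refine (hmin i hi.2 hi.1).trans ?_
      have h3 : ((i : ℝ) + 1) ≤ N := by exact_mod_cast hi.2
      have h4 : 1 / (N : ℝ) ≤ 1 / ((i : ℝ) + 1) := by
        apply one_div_le_one_div_of_le (by positivity) h3
      have : 0 < K ^ i := by positivity
      gcongr
    rw [← Finset.mul_sum, hgeom] at h1
    have h2 : γ * M * K ^ k ≤ γ * M * K ^ k * (2 - 1 / (N : ℝ)) :=
      le_mul_of_one_le_right (by positivity) hPN
    nlinarith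
  have hP : 1 ≤ 2 - 1 / ((N : ℝ) + 1) := by
    have : 1 / ((N : ℝ) + 1) ≤ 1 := by rw [div_le_one (by linarith)]; linarith
    linarith
  refine ⟨N, hkN, hNn, ?_, hSN.trans ?_, hSN.trans ?_⟩
  · refine le_trans ?_ hN.le
    exact le_mul_of_one_le_left hKN.le (by nlinarith)
  · have hc : 0 ≤ 1 - 1 / (2 * ((N : ℝ) + 1) ^ 2) := by
      have : 1 / (2 * ((N : ℝ) + 1) ^ 2) ≤ 1 := by
        rw [div_le_one (by positivity)]; nlinarith
      linarith
    have h1 : 2 - 1 / (N : ℝ) ≤ (2 - 1 / ((N : ℝ) + 1)) * (1 - 1 / (2 * ((N : ℝ) + 1) ^ 2)) := by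
      have hN0 : (0:ℝ) < N := by linarith
      rw [← sub_nonneg]
      have : (2 - 1 / ((N : ℝ) + 1)) * (1 - 1 / (2 * ((N : ℝ) + 1) ^ 2)) - (2 - 1 / (N : ℝ))
        = (2 * ((N:ℝ)+1)^2 - N * (2 * N + 1)) / (2 * N * (N+1)^3) := by
        field_simp; ring
      rw [this]
      apply div_nonneg _ (by positivity)
      nlinarith
    calc γ * M * (2 - 1 / (N : ℝ)) * K ^ N = γ * M * K ^ N * (2 - 1 / (N : ℝ)) := by ring
      _ ≤ γ * M * K ^ N * ((2 - 1 / ((N : ℝ) + 1)) * (1 - 1 / (2 * ((N : ℝ) + 1) ^ 2))) := by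
        gcongr
      _ = γ * (M * (2 - 1 / ((N : ℝ) + 1)) * K ^ N) * (1 - 1 / (2 * ((N : ℝ) + 1) ^ 2)) := by ring
      _ ≤ _ := by gcongr
  · have : 0 ≤ 1 / (N : ℝ) := by positivity
    have : γ * M * K ^ N * (2 - 1 / (N : ℝ)) ≤ γ * M * K ^ N * 2 := by gcongr; linarith
    linarith

/-- choice of N, n -/
lemma choice (γ K δ : ℝ) (hγ : 0 < γ) (hδ : 0 < δ) (hK : K = 1 / γ + 1) (hK2 : 2 ≤ K) (L : ℕ → ℝ)
    (hLm : Monotone L)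
    (hL : ∀ M : ℝ, ∀ k : ℕ, ∃ n, k ≤ n ∧ M * K ^ n < L n) (N1 : ℕ) :
    ∃ N n, N1 ≤ N ∧ N ≤ n ∧ K ^ N ≤ L N ∧
      ∑ i ∈ Finset.range N, L i ≤ γ * L N * (1 - 1 / (2 * ((N : ℝ) + 1) ^ 2)) ∧
      (∀ j, N ≤ j → j < n → (j : ℝ) ≤ L j) ∧
      ∑ i ∈ Finset.range N, L i ≤ δ / 2 * L n := by
  classical
  have hKpos : 0 < K := by linarith
  have key : ∀ (M : ℝ) (hM : 1 ≤ M) (k n : ℕ) (_ : 1 ≤ k) (_ : N1 ≤ k) (_ : k ≤ n)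
      (_ : ∑ i ∈ Finset.range k, L i ≤ γ * M * K ^ k)
      (_ : ∀ j, k ≤ j → j < n → (j : ℝ) ≤ L j)
      (_ : (2 * M + 4 * γ * M / δ) * K ^ n < L n), 
      ∃ N n, N1 ≤ N ∧ N ≤ n ∧ K ^ N ≤ L N ∧
      ∑ i ∈ Finset.range N, L i ≤ γ * L N * (1 - 1 / (2 * ((N : ℝ) + 1) ^ 2)) ∧
      (∀ j, N ≤ j → j < n → (j : ℝ) ≤ L j) ∧
      ∑ i ∈ Finset.range N, L i ≤ δ / 2 * L n := by
    intro M hM k n hk hk1 hkn hS hj hn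
    have hM0 : 0 < M := by linarith
    have hp1 : 0 < 4 * γ * M / δ * K ^ n := by positivity
    have hp2 : 0 < 2 * M * K ^ n := by positivity
    rw [add_mul] at hn
    obtain ⟨N, h1, h2, h3, h4, h5⟩ := sel γ K hγ hK hK2 L M hM k hk hS n hkn (by linarith)
    refine ⟨N, n, hk1.trans h1, h2, h3, h4, fun j hNj hjn => hj j (h1.trans hNj) hjn, h5.trans ?_⟩
    calc 2 * γ * M * K ^ N ≤ 2 * γ * M * K ^ n := by
          gcongr; linarith
      _ = δ / 2 * (4 * γ * M / δ * K ^ n) := by field_simp; ring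
      _ ≤ _ := by gcongr; linarith
  by_cases hcase : ∃ k0 : ℕ, ∀ j, k0 ≤ j → (j : ℝ) ≤ L j
  · obtain ⟨k0, hk0⟩ := hcase
    set k := k0 + N1 + 1
    set M := 1 + |∑ i ∈ Finset.range k, L i| / (γ * K ^ k)
    have hM : 1 ≤ M := by
      have : 0 ≤ |∑ i ∈ Finset.range k, L i| / (γ * K ^ k) := by positivity
      simp only [M]; linarith
    obtain ⟨n, hn1, hn2⟩ := hL (2 * M + 4 * γ * M / δ) k
    refine key M hM k n (by omega) (by omega) hn1 ?_ (fun j hj _ => hk0 j (by omega)) hn2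
    have : γ * M * K ^ k = γ * K ^ k + |∑ i ∈ Finset.range k, L i| := by
      simp only [M]; field_simp
    rw [this]
    have := le_abs_self (∑ i ∈ Finset.range k, L i)
    have : 0 < γ * K ^ k := by positivity
    linarith
  · push Not at hcase
    -- k^2 ≤ γ K^k eventually
    have hev : ∀ᶠ k : ℕ in atTop, ((k:ℝ)) ^ 2 ≤ γ * K ^ k := by
      have := isLittleO_pow_const_const_pow_of_one_lt (R := ℝ) 2 (r := K) (by linarith)
      filter_upwards [this.bound hγ] with k hk
      simpa [abs_of_pos hKpos] using hk
    obtain ⟨k1, hk1⟩ := eventually_atTop.mp hev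
    obtain ⟨k0, hk0, hk0'⟩ := hcase (k1 + N1 + 1)
    obtain ⟨n, hn1, hn2⟩ := hL (2 * 1 + 4 * γ * 1 / δ) (k0 + 1)
    -- largest bad index below n
    let B := (Finset.range n).filter (fun j => L j < (j : ℝ))
    have hB : B.Nonempty := ⟨k0, by simp only [B, Finset.mem_filter, Finset.mem_range]; exact ⟨by omega, hk0'⟩⟩
    have hmem := B.max'_mem hB
    have hmax : ∀ j ∈ B, j ≤ B.max' hB := fun j hj => B.le_max' j hj
    have hge := hmax k0 (by simp only [B, Finset.mem_filter, Finset.mem_range]; exact ⟨by omega, hk0'⟩)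
    generalize B.max' hB = k' at *
    simp only [B, Finset.mem_filter, Finset.mem_range] at hmem hmax
    refine key 1 le_rfl (k' + 1) n (by omega) (by omega) (by omega) ?_ ?_ hn2
    · have h1 : ∑ i ∈ Finset.range (k' + 1), L i ≤ ∑ i ∈ Finset.range (k' + 1), (k' : ℝ) := by
        apply Finset.sum_le_sum
        intro i hi
        rw [Finset.mem_range] at hi
        exact (hLm (by omega)).trans hmem.2.le
      rw [Finset.sum_const, Finset.card_range, nsmul_eq_mul] at h1
      have h2 := hk1 (k' + 1) (by omega)
      push_cast at h1 h2
      nlinarith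
    · intro j hj hjn
      by_contra hcon
      have := hmax j ⟨hjn, not_le.mp hcon⟩
      omega
lemma growth (γ α : ℝ) (hγ : 0 < γ) (hα : 0 < α ∧ α < 1) :
    Tendsto (fun x : ℝ => γ * x / (2 * (Real.logb 2 x + 1) ^ 2) - 2 * x ^ α) atTop atTop := by
  obtain ⟨h0, h1⟩ := hα
  have ht : Tendsto (fun x : ℝ => γ / 4 * x ^ ((1 + α) / 2)) atTop atTop :=
    (tendsto_rpow_atTop (by linarith)).const_mul_atTop (by positivity)
  refine tendsto_atTop_mono' _ ?_ ht
  have hs : 0 < (1 - α) / 4 := by linarith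
  have e1 := (isLittleO_log_rpow_atTop hs).bound (show 0 < Real.log 2 / 2 by
    have := Real.log_pos (show (1:ℝ) < 2 by norm_num); positivity)
  have e2 := (tendsto_rpow_atTop hs).eventually_ge_atTop 2
  have e3 := (tendsto_rpow_atTop (show 0 < (1 - α) / 2 by linarith)).eventually_ge_atTop (8 / γ)
  filter_upwards [e1, e2, e3, eventually_ge_atTop 1] with x e1 e2 e3 hx
  have hx0 : 0 < x := by linarith
  have hl2 := Real.log_pos (show (1:ℝ) < 2 by norm_num)
  rw [Real.norm_of_nonneg (Real.log_nonneg hx), Real.norm_of_nonneg (by positivity)] at e1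
  have hlog0 : 0 ≤ Real.logb 2 x := Real.logb_nonneg (by norm_num) hx
  have hb : Real.logb 2 x + 1 ≤ x ^ ((1 - α) / 4) := by
    have : Real.logb 2 x ≤ x ^ ((1 - α) / 4) / 2 := by
      rw [Real.logb, div_le_iff₀ hl2]; linarith
    linarith
  have hb2 : (Real.logb 2 x + 1) ^ 2 ≤ x ^ ((1 - α) / 2) := by
    calc (Real.logb 2 x + 1) ^ 2 ≤ (x ^ ((1 - α) / 4)) ^ 2 := by gcongr
      _ = _ := by rw [← Real.rpow_natCast, ← Real.rpow_mul hx0.le]; congr 1; push_cast; ring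
  have hxx : x = x ^ ((1 - α) / 2) * x ^ ((1 + α) / 2) := by
    rw [← Real.rpow_add hx0]; ring_nf; simp
  have hxa : x ^ ((1 + α) / 2) = x ^ ((1 - α) / 2) * x ^ α := by
    rw [← Real.rpow_add hx0]; ring_nf
  have f1 : γ / 2 * x ^ ((1 + α) / 2) ≤ γ * x / (2 * (Real.logb 2 x + 1) ^ 2) := by
    rw [le_div_iff₀ (by positivity)]
    nth_rw 3 [hxx]
    have : 0 < x ^ ((1 + α) / 2) := by positivity
    nlinarith [mul_le_mul_of_nonneg_left hb2 (show 0 ≤ γ * x ^ ((1 + α) / 2) by positivity)]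
  have f2 : 2 * x ^ α ≤ γ / 4 * x ^ ((1 + α) / 2) := by
    rw [hxa]
    have h3 : 8 ≤ γ * x ^ ((1 - α) / 2) := by
      rw [div_le_iff₀ hγ] at e3; linarith
    nlinarith [mul_le_mul_of_nonneg_right h3 (show 0 ≤ x ^ α by positivity)]
  linarith

lemma tailB (ε α γ δ : ℝ) (hε : 0 < ε) (hα : 0 < α ∧ α < 1) (hδ : 0 < δ)
    (hp : 1 < (γ - 2 * δ) * (1 + ε)) (L r : ℕ → ℝ) (hLm : Monotone L)
    (hL1 : ∀ i : ℕ, (1 + ε) * Real.logb 2 ((i : ℝ) + 1) ≤ L i) (hL0 : ∀ i, 0 < L i)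
    (hLt : Tendsto L atTop atTop)
    (hr0 : ∀ i, 0 ≤ r i) (hr : ∀ i, r i ≤ 2 ^ (-γ * L i + L i ^ α)) :
    Summable r ∧ ∃ C : ℝ, 0 ≤ C ∧ ∃ n0, ∀ n, n0 ≤ n → ∑' i, r (i + n) ≤ C * 2 ^ (-δ * L n) := by
  set p := (γ - 2 * δ) * (1 + ε) with hpd
  have hs : Summable (fun i : ℕ => 1 / |(i : ℝ) + 1| ^ p) :=
    (Real.summable_one_div_nat_add_rpow 1 p).2 hp
  have hg : 0 < γ - 2 * δ := by
    by_contra hcon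
    nlinarith
  have hevx : ∀ᶠ x : ℝ in atTop, x ^ α ≤ δ * x := by
    have e3 := (tendsto_rpow_atTop (show 0 < 1 - α by linarith [hα.2])).eventually_ge_atTop (1 / δ)
    filter_upwards [e3, eventually_gt_atTop 0] with x h hx
    have : x = x ^ (1 - α) * x ^ α := by rw [← Real.rpow_add hx]; simp
    nth_rw 2 [this]
    rw [div_le_iff₀ hδ] at h
    nlinarith [mul_le_mul_of_nonneg_right h (show 0 ≤ x ^ α by positivity)]
  obtain ⟨n0, hn0⟩ := eventually_atTop.mp (hLt.eventually hevx)
  have hbd : ∀ n, n0 ≤ n → ∀ i, r (i + n) ≤ 2 ^ (-δ * L n) * (1 / |((i + n : ℕ) : ℝ) + 1| ^ p) := by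
    intro n hn i
    set j := i + n
    have hj : L n ≤ L j := hLm (by omega)
    have hj1 : (0:ℝ) < (j : ℝ) + 1 := by positivity
    have h2 : (1 / |((j : ℕ) : ℝ) + 1| ^ p) = 2 ^ (-(γ - 2 * δ) * ((1 + ε) * Real.logb 2 ((j : ℝ) + 1))) := by
      rw [abs_of_pos hj1, one_div, ← Real.rpow_neg hj1.le]
      nth_rw 1 [← Real.rpow_logb (b := 2) (by norm_num) (by norm_num) hj1]
      rw [← Real.rpow_mul (by norm_num)]
      congr 1; rw [hpd]; ring
    rw [h2, ← Real.rpow_add (by norm_num)]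
    refine (hr j).trans ?_
    apply Real.rpow_le_rpow_of_exponent_le (by norm_num)
    have h3 := hn0 j (by omega)
    have h4 := mul_le_mul_of_nonneg_left (hL1 j) hg.le
    have h5 := mul_le_mul_of_nonneg_left hj hδ.le
    linarith
  have hss : ∀ n, Summable (fun i : ℕ => 1 / |((i + n : ℕ) : ℝ) + 1| ^ p) := fun n =>
    (summable_nat_add_iff (f := fun i : ℕ => 1 / |(i : ℝ) + 1| ^ p) n).2 hs
  have hsr : Summable r := by
    rw [← summable_nat_add_iff n0]
    exact Summable.of_nonneg_of_le (fun i => hr0 _) (hbd n0 le_rfl) ((hss n0).mul_left _)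
  refine ⟨hsr, ∑' i : ℕ, 1 / |(i : ℝ) + 1| ^ p, tsum_nonneg (fun i => by positivity), n0, ?_⟩
  intro n hn
  calc ∑' i, r (i + n) ≤ ∑' i, 2 ^ (-δ * L n) * (1 / |((i + n : ℕ) : ℝ) + 1| ^ p) :=
        Summable.tsum_le_tsum (hbd n hn) ((summable_nat_add_iff n).2 hsr) ((hss n).mul_left _)
    _ = 2 ^ (-δ * L n) * ∑' i : ℕ, (1 / |((i + n : ℕ) : ℝ) + 1| ^ p) := tsum_mul_left
    _ ≤ 2 ^ (-δ * L n) * ∑' i : ℕ, 1 / |(i : ℝ) + 1| ^ p := by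
        refine mul_le_mul_of_nonneg_left ?_ (by positivity)
        rw [← hs.sum_add_tsum_nat_add n]
        have : 0 ≤ ∑ i ∈ Finset.range n, 1 / |(i : ℝ) + 1| ^ p :=
          Finset.sum_nonneg (fun i _ => by positivity)
        linarith
    _ = _ := by ring

lemma tailA (α γ : ℝ) (hα : 0 < α ∧ α < 1) (hγ : 0 < γ) : ∃ T C : ℝ, 0 ≤ C ∧
    ∀ (L r : ℕ → ℝ), Monotone L → 
    (∀ i, r i ≤ 2 ^ (-γ * L i + L i ^ α)) →
    ∀ N n, N ≤ n → T ≤ L N → (∀ j, N ≤ j → j < n → (j : ℝ) ≤ L j) →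
    ∑ j ∈ Finset.Ico N n, r j ≤ C * 2 ^ (-γ * L N + 2 * L N ^ α) := by
  have hs : Summable (fun i : ℕ => 4 / ((i : ℝ) + 1) ^ 2) := by
    have := (Real.summable_one_div_nat_add_rpow 1 2).2 (by norm_num)
    refine (this.mul_left 4).congr (fun i => ?_)
    rw [abs_of_pos (by positivity)]
    norm_cast
    simp [div_eq_mul_inv]
  -- x^2 ≤ 2^(x^α) eventually and 2 x^(α-1) ≤ γ
  have e1 := (tendsto_rpow_atTop (show 0 < 1 - α by linarith [hα.2])).eventually_ge_atTop (2 / γ)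
  have e2 := (isLittleO_log_rpow_atTop hα.1).bound (show 0 < Real.log 2 / 2 by
    have := Real.log_pos (show (1:ℝ) < 2 by norm_num); positivity)
  obtain ⟨T, hT⟩ := eventually_atTop.mp ((e1.and e2).and (eventually_ge_atTop 1))
  refine ⟨T, ∑' i : ℕ, 4 / ((i : ℝ) + 1) ^ 2, tsum_nonneg (fun i => by positivity), ?_⟩
  intro L r hLm hr N n hNn hTN hj
  have hbd : ∀ j ∈ Finset.Ico N n, r j ≤ 4 / ((j : ℝ) + 1) ^ 2 * 2 ^ (-γ * L N + 2 * L N ^ α) := by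
    intro j hjm
    rw [Finset.mem_Ico] at hjm
    have hLj : L N ≤ L j := hLm hjm.1
    have hjL := hj j hjm.1 hjm.2
    obtain ⟨⟨a1, a2⟩, a3⟩ := hT (L j) (hTN.trans hLj)
    obtain ⟨⟨b1, b2⟩, b3⟩ := hT (L N) hTN
    refine (hr j).trans ?_
    generalize L j = x at *
    generalize L N = y at *
    have hx0 : 0 < x := by linarith
    have hy0 : 0 < y := by linarith
    have hl2 := Real.log_pos (show (1:ℝ) < 2 by norm_num)
    rw [Real.norm_of_nonneg (Real.log_nonneg a3), Real.norm_of_nonneg (by positivity)] at a2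
    have hx2 : x ^ 2 ≤ 2 ^ (x ^ α) := by
      rw [← Real.log_le_log_iff (by positivity) (by positivity), Real.log_pow,
        Real.log_rpow (by norm_num)]
      push_cast
      linarith
    have hj2 : ((j : ℝ) + 1) ^ 2 / 4 ≤ 2 ^ (x ^ α) := by
      refine le_trans ?_ hx2
      have : ((j : ℝ) + 1) ^ 2 ≤ (2 * x) ^ 2 := by gcongr; linarith
      linarith
    have hw : y = y ^ (1 - α) * y ^ α := by rw [← Real.rpow_add hy0]; simp
    have hw' : x = x ^ (1 - α) * x ^ α := by rw [← Real.rpow_add hx0]; simp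
    have hmon : y ^ (1 - α) ≤ x ^ (1 - α) :=
      Real.rpow_le_rpow hy0.le hLj (by linarith [hα.2])
    have hmon2 : y ^ α ≤ x ^ α := Real.rpow_le_rpow hy0.le hLj hα.1.le
    have h1 : y ^ (1 - α) * (x ^ α - y ^ α) ≤ x - y := by
      have := mul_le_mul_of_nonneg_right hmon (show 0 ≤ x ^ α by positivity)
      nlinarith
    have h2 : 2 ≤ γ * y ^ (1 - α) := by
      rw [div_le_iff₀ hγ] at b1; linarith
    have h3 : -γ * x + 2 * x ^ α ≤ -γ * y + 2 * y ^ α := by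
      have := mul_le_mul_of_nonneg_left h1 hγ.le
      have := mul_le_mul_of_nonneg_right h2 (sub_nonneg.2 hmon2)
      nlinarith
    calc (2:ℝ) ^ (-γ * x + x ^ α)
        = 4 / ((j : ℝ) + 1) ^ 2 * (2 ^ (-γ * x + x ^ α) * (((j : ℝ) + 1) ^ 2 / 4)) := by field_simp
      _ ≤ 4 / ((j : ℝ) + 1) ^ 2 * (2 ^ (-γ * x + x ^ α) * 2 ^ (x ^ α)) := by gcongr
      _ = 4 / ((j : ℝ) + 1) ^ 2 * 2 ^ (-γ * x + 2 * x ^ α) := by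
        rw [← Real.rpow_add (by norm_num)]; ring_nf
      _ ≤ _ := by
        gcongr
        norm_num
  calc ∑ j ∈ Finset.Ico N n, r j ≤ ∑ j ∈ Finset.Ico N n, 4 / ((j : ℝ) + 1) ^ 2 * 2 ^ (-γ * L N + 2 * L N ^ α) :=
        Finset.sum_le_sum hbd
    _ = (∑ j ∈ Finset.Ico N n, 4 / ((j : ℝ) + 1) ^ 2) * 2 ^ (-γ * L N + 2 * L N ^ α) := by
        rw [Finset.sum_mul]
    _ ≤ _ := by
        gcongr
        exact hs.sum_le_tsum _ (fun i _ => by positivity)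

lemma tail (ε α γ K : ℝ) (hε : 0 < ε) (hα : 0 < α ∧ α < 1) (hγ : 1 / (1 + ε) < γ) (hγ1 : γ ≤ 1)
    (hK : K = 1 / γ + 1) (L r : ℕ → ℝ) (hLm : Monotone L)
    (hL1 : ∀ i : ℕ, (1 + ε) * Real.logb 2 ((i : ℝ) + 1) ≤ L i) (hL0 : ∀ i, 0 < L i)
    (hL : ∀ M : ℝ, ∀ k : ℕ, ∃ n, k ≤ n ∧ M * K ^ n < L n)
    (hr0 : ∀ i, 0 ≤ r i) (hr : ∀ i, r i ≤ 2 ^ (-γ * L i + L i ^ α)) :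
    Summable r ∧ ∀ η : ℝ, 0 < η → ∃ N,
      2 ^ (∑ i ∈ Finset.range N, L i) * ∑' i, r (i + N) < η := by
  have hγ0 : 0 < γ := lt_trans (by positivity) hγ
  have hK2 : 2 ≤ K := by
    have : 1 ≤ 1 / γ := by rw [le_div_iff₀ hγ0]; linarith
    linarith
  obtain ⟨δ, hδ, hp⟩ : ∃ δ : ℝ, 0 < δ ∧ 1 < (γ - 2 * δ) * (1 + ε) := by
    refine ⟨(γ - 1 / (1 + ε)) / 4, by linarith, ?_⟩
    have h1 : 1 < γ * (1 + ε) := by rwa [div_lt_iff₀ (by linarith)] at hγ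
    have : (γ - 2 * ((γ - 1 / (1 + ε)) / 4)) * (1 + ε) = (γ * (1 + ε) + 1) / 2 := by
      field_simp; ring
    rw [this]; linarith
  have hLt : Tendsto L atTop atTop := by
    refine tendsto_atTop_mono hL1 (Tendsto.const_mul_atTop (by linarith) ?_)
    refine (Real.tendsto_logb_atTop (by norm_num)).comp ?_
    exact tendsto_atTop_add_const_right _ _ tendsto_natCast_atTop_atTop
  obtain ⟨hsr, C, hC, n0, htB⟩ := tailB ε α γ δ hε hα hδ hp L r hLm hL1 hL0 hLt hr0 hr
  obtain ⟨T, C', hC', htA⟩ := tailA α γ hα hγ0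
  refine ⟨hsr, fun η hη => ?_⟩
  -- limits
  have hz : Tendsto (fun x : ℝ => (2:ℝ) ^ (-x)) atTop (nhds 0) := by
    have := tendsto_rpow_atBot_of_base_gt_one (2:ℝ) (by norm_num)
    exact this.comp tendsto_neg_atTop_atBot
  have z1 : Tendsto (fun x : ℝ => C' * (2:ℝ) ^ (-(γ * x / (2 * (Real.logb 2 x + 1) ^ 2) - 2 * x ^ α)))
      atTop (nhds 0) := by
    simpa using (hz.comp (growth γ α hγ0 hα)).const_mul C'
  have z2 : Tendsto (fun x : ℝ => C * (2:ℝ) ^ (-(δ / 2 * x))) atTop (nhds 0) := by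
    simpa using (hz.comp (tendsto_id.const_mul_atTop (show 0 < δ / 2 by positivity))).const_mul C
  have hev := (((z1.eventually (gt_mem_nhds (half_pos hη))).and
    (z2.eventually (gt_mem_nhds (half_pos hη)))).and (eventually_ge_atTop T)).and (eventually_ge_atTop 1)
  obtain ⟨N1, hN1⟩ := eventually_atTop.mp (hLt.eventually hev)
  obtain ⟨N, n, c1, c2, c3, c4, c5, c6⟩ := choice γ K δ hγ0 hδ hK hK2 L hLm hL (max N1 n0)
  obtain ⟨⟨⟨d1, -⟩, d3⟩, d4⟩ := hN1 N (by omega)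
  obtain ⟨⟨⟨-, d2⟩, -⟩, -⟩ := hN1 n (by omega)
  refine ⟨N, ?_⟩
  have hA := htA L r hLm hr N n c2 d3 c5
  have hB := htB n (by omega)
  have hsplit : ∑' i, r (i + N) = ∑ j ∈ Finset.Ico N n, r j + ∑' i, r (i + n) := by
    have q1 := hsr.sum_add_tsum_nat_add N
    have q2 := hsr.sum_add_tsum_nat_add n
    have q3 := Finset.sum_range_add_sum_Ico r c2
    linarith
  rw [hsplit, mul_add]
  set S := ∑ i ∈ Finset.range N, L i
  have g1 : 2 ^ S * ∑ j ∈ Finset.Ico N n, r j < η / 2 := by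
    refine lt_of_le_of_lt ?_ d1
    calc (2:ℝ) ^ S * ∑ j ∈ Finset.Ico N n, r j ≤ 2 ^ S * (C' * 2 ^ (-γ * L N + 2 * L N ^ α)) := by gcongr
      _ = C' * 2 ^ (S + (-γ * L N + 2 * L N ^ α)) := by rw [Real.rpow_add (by norm_num) S]; ring
      _ ≤ _ := by
        refine mul_le_mul_of_nonneg_left ?_ hC'
        apply Real.rpow_le_rpow_of_exponent_le (by norm_num)
        have hN : (N : ℝ) ≤ Real.logb 2 (L N) := by
          rw [Real.le_logb_iff_rpow_le (by norm_num) (hL0 N), Real.rpow_natCast]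
          exact (pow_le_pow_left₀ (by norm_num) hK2 N).trans c3
        have h1 : γ * L N / (2 * (Real.logb 2 (L N) + 1) ^ 2) ≤ γ * L N / (2 * ((N:ℝ) + 1) ^ 2) := by
          have := hL0 N
          gcongr
        have h2 : γ * L N * (1 - 1 / (2 * ((N : ℝ) + 1) ^ 2)) = γ * L N - γ * L N / (2 * ((N:ℝ) + 1) ^ 2) := by
          ring
        linarith
  have g2 : 2 ^ S * ∑' i, r (i + n) < η / 2 := by
    refine lt_of_le_of_lt ?_ d2
    calc (2:ℝ) ^ S * ∑' i, r (i + n) ≤ 2 ^ S * (C * 2 ^ (-δ * L n)) := by gcongr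
      _ = C * 2 ^ (S + (-δ * L n)) := by rw [Real.rpow_add (by norm_num)]; ring
      _ ≤ _ := by
        refine mul_le_mul_of_nonneg_left ?_ hC
        apply Real.rpow_le_rpow_of_exponent_le (by norm_num)
        linarith
  linarith

lemma irr (u b : ℕ → ℕ) (hu : ∀ i, 0 < u i) (hb : ∀ i, 0 < b i)
    (hs : Summable (fun i => (b i : ℝ) / u i))
    (hη : ∀ η : ℝ, 0 < η → ∃ N, (∏ i ∈ Finset.range N, (u i : ℝ)) * ∑' i, (b (i + N) : ℝ) / u (i + N) < η)
    (P : ℝ) (hP : HasProd (fun i => 1 + (b i : ℝ) / u i) P) : Irrational P := by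
  have hur : ∀ i, (0:ℝ) < u i := fun i => by exact_mod_cast hu i
  have hbr : ∀ i, (0:ℝ) < b i := fun i => by exact_mod_cast hb i
  have ht := hP.tendsto_prod_nat
  set p : ℕ → ℝ := fun n => ∏ i ∈ Finset.range n, (1 + (b i : ℝ) / u i) with hp
  have hpos : ∀ n, 0 < p n := fun n => Finset.prod_pos (fun i _ => by
    have := hur i; have := hbr i; positivity)
  have hmono : StrictMono p := by
    apply strictMono_nat_of_lt_succ
    intro n
    simp only [hp, Finset.prod_range_succ]
    refine lt_mul_of_one_lt_right (hpos n) ?_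
    have := hur n; have := hbr n
    have : 0 < (b n : ℝ) / u n := by positivity
    linarith
  have hlt : ∀ n, p n < P := fun n =>
    (hmono (Nat.lt_succ_self n)).trans_le (hmono.monotone.ge_of_tendsto ht _)
  have hP0 : 0 < P := (hpos 0).trans (hlt 0)
  have hup : ∀ N, P ≤ p N * Real.exp (∑' i, (b (i + N) : ℝ) / u (i + N)) := by
    intro N
    refine le_of_tendsto ht ?_
    filter_upwards [eventually_ge_atTop N] with m hm
    simp only [hp]
    rw [← Finset.prod_range_mul_prod_Ico _ hm]
    refine mul_le_mul_of_nonneg_left ?_ (hpos N).le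
    calc ∏ i ∈ Finset.Ico N m, (1 + (b i : ℝ) / u i) ≤ ∏ i ∈ Finset.Ico N m, Real.exp ((b i : ℝ) / u i) := by
          apply Finset.prod_le_prod
          · intro i _
            have := hur i; have := hbr i; positivity
          · intro i _
            rw [add_comm]; exact Real.add_one_le_exp _
      _ = Real.exp (∑ i ∈ Finset.Ico N m, (b i : ℝ) / u i) := (Real.exp_sum _ _).symm
      _ ≤ _ := by
        apply Real.exp_le_exp.2
        have q1 := hs.sum_add_tsum_nat_add N
        have q2 := hs.sum_add_tsum_nat_add m
        have q3 := Finset.sum_range_add_sum_Ico (fun i => (b i : ℝ) / u i) hm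
        have q4 : 0 ≤ ∑' i, (b (i + m) : ℝ) / u (i + m) := tsum_nonneg (fun i => by positivity)
        linarith
  rintro ⟨q, hq⟩
  have hq0 : (0:ℝ) < q.den := by exact_mod_cast q.den_pos
  obtain ⟨N, hN⟩ := hη (min 1 (1 / (2 * P * q.den))) (by positivity)
  set R := ∑' i, (b (i + N) : ℝ) / u (i + N)
  set U := ∏ i ∈ Finset.range N, (u i : ℝ) with hU
  have hR0 : 0 ≤ R := tsum_nonneg (fun i => by positivity)
  have hU1 : 1 ≤ U := by
    rw [hU]
    have : (1:ℝ) ≤ ((∏ i ∈ Finset.range N, u i : ℕ) : ℝ) := by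
      exact_mod_cast Nat.one_le_iff_ne_zero.2 (Finset.prod_ne_zero_iff.2 (fun i _ => (hu i).ne'))
    simpa using this
  have hR1 : R ≤ 1 := by
    have := lt_of_lt_of_le hN (min_le_left _ _)
    nlinarith
  have hexp : Real.exp R ≤ 1 + 2 * R := by
    have := Real.abs_exp_sub_one_le (x := R) (by rw [abs_of_nonneg hR0]; exact hR1)
    rw [abs_of_nonneg hR0] at this
    linarith [le_abs_self (Real.exp R - 1)]
  have hdiff : P - p N ≤ 2 * P * R := by
    have h1 := hup N
    have h2 := mul_le_mul_of_nonneg_left hexp (hpos N).le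
    have h3 := mul_le_mul_of_nonneg_right (hlt N).le hR0
    nlinarith
  -- integrality
  have hpU : p N * U = ((∏ i ∈ Finset.range N, (u i + b i) : ℕ) : ℝ) := by
    rw [hU, hp, ← Finset.prod_mul_distrib]
    push_cast
    apply Finset.prod_congr rfl
    intro i _
    have := hur i
    field_simp
  have hPq : P * q.den = q.num := by
    rw [← hq]; exact_mod_cast Rat.mul_den_eq_num q
  have hUN : U = ((∏ i ∈ Finset.range N, u i : ℕ) : ℝ) := by push_cast; rfl
  have hint : (P - p N) * U * q.den =
      ((q.num * (∏ i ∈ Finset.range N, u i : ℕ) - (∏ i ∈ Finset.range N, (u i + b i) : ℕ) * q.den : ℤ) : ℝ) := by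
    have : (P - p N) * U * q.den = (P * q.den) * U - (p N * U) * q.den := by ring
    rw [this, hPq, hpU, hUN]
    push_cast; ring
  have hpos' : 0 < (P - p N) * U * q.den := by
    have := hlt N
    have : 0 < P - p N := by linarith
    positivity
  have h1 : 1 ≤ (P - p N) * U * q.den := by
    rw [hint] at hpos' ⊢
    exact_mod_cast hpos'
  have h2 := lt_of_lt_of_le hN (min_le_right _ _)
  rw [lt_div_iff₀ (by positivity)] at h2
  have h3 := mul_le_mul_of_nonneg_right hdiff (show 0 ≤ U * q.den by positivity)
  nlinarith

lemma sorting (A : ℕ → ℕ) (hA : ∀ i, i < A i) : ∃ σ : ℕ ≃ ℕ, Monotone (A ∘ σ) := by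
  classical
  let e : ℕ → ℕ := fun i => A i ^ 2 + i
  have key : ∀ i j, e i ≤ e j → A i ≤ A j := by
    intro i j hij
    by_contra hcon
    push Not at hcon
    have := hA j
    simp only [e] at hij
    nlinarith
  have hinj : Function.Injective e := by
    intro i j hij
    have h1 := key i j hij.le
    have h2 := key j i hij.ge
    have h3 := le_antisymm h1 h2
    simp only [e, h3] at hij
    omega
  have : Infinite (Set.range e) := Set.infinite_coe_iff.2 (Set.infinite_range_of_injective hinj)
  let o := Nat.Subtype.orderIsoOfNat (Set.range e)
  let f := Equiv.ofInjective e hinj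
  refine ⟨o.toEquiv.trans f.symm, ?_⟩
  intro i j hij
  apply key
  have hf : ∀ x : Set.range e, e (f.symm x) = x := fun x => Equiv.apply_ofInjective_symm hinj x
  simp only [Equiv.trans_apply, hf]
  exact o.monotone hij

theorem stmt_0 (ε α β : ℝ) (hε : 0 < ε) (hα : 0 < α ∧ α < 1)
    (hβ : 0 ≤ β ∧ β < ε / (1 + ε))
    (a b : ℕ → ℕ)
    (hpos : ∀ n : ℕ, 1 ≤ n → 0 < a n ∧ 0 < b n)
    (ha : ∀ n : ℕ, 1 ≤ n → (n : ℝ) ^ (1 + ε) < (a n : ℝ) ∧ a n ≤ a (n + 1))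
    (hb : ∀ n : ℕ, 1 ≤ n →
      (b n : ℝ) ≤ (a n : ℝ) ^ β * 2 ^ (Real.logb 2 (a n : ℝ) ^ α))
    (hlimsup : Filter.limsup (fun n : ℕ =>
        (((a n : ℝ) ^ ((1 / (1 - β) + 1) ^ (-(n : ℝ))) : ℝ) : EReal)) Filter.atTop = ⊤) :
    ∀ c : ℕ → ℕ, (∀ n, 0 < c n) →
      ∃ L : ℝ,
        Tendsto (fun N => ∏ n ∈ Finset.Icc 1 N,
          (1 + (b n : ℝ) / ((a n : ℝ) * (c n : ℝ)))) atTop (nhds L) ∧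
        Irrational L := by
  intro c hc
  set γ := 1 - β with hγd
  set K := 1 / γ + 1 with hK
  have hγ : 1 / (1 + ε) < γ := by
    have : 1 / (1 + ε) = 1 - ε / (1 + ε) := by field_simp; ring
    rw [this]; linarith [hβ.2]
  have hγ0 : 0 < γ := lt_trans (by positivity) hγ
  have hγ1 : γ ≤ 1 := by linarith [hβ.1]
  have hKpos : 0 < K := by positivity
  have hK1 : 1 ≤ K := by
    have : 0 < 1 / γ := by positivity
    linarith
  let A : ℕ → ℕ := fun i => a (i + 1) * c (i + 1)
  let B : ℕ → ℕ := fun i => b (i + 1)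
  have haA : ∀ i, a (i + 1) ≤ A i := fun i => Nat.le_mul_of_pos_right _ (hc _)
  have hai : ∀ i : ℕ, i + 1 < a (i + 1) := by
    intro i
    have h1 := (ha (i + 1) (by omega)).1
    have h2 : ((i + 1 : ℕ) : ℝ) ≤ ((i + 1 : ℕ) : ℝ) ^ (1 + ε) :=
      Real.self_le_rpow_of_one_le (by push_cast; linarith [(Nat.cast_nonneg i : (0:ℝ) ≤ i)]) (by linarith)
    exact_mod_cast h2.trans_lt h1
  have ham : Monotone (fun i => a (i + 1)) := monotone_nat_of_le_succ (fun i => (ha (i + 1) (by omega)).2)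
  obtain ⟨σ, hσ⟩ := sorting A (fun i => by have := haA i; have := hai i; omega)
  have hsa : ∀ i, a (i + 1) ≤ A (σ i) := by
    intro i
    obtain ⟨j, hj, hji⟩ : ∃ j, j ≤ i ∧ i ≤ σ j := by
      by_contra hcon
      push Not at hcon
      have := Finset.card_le_card_of_injOn (s := Finset.range (i + 1)) (t := Finset.range i) σ
        (fun j hj => by
          simp only [Finset.coe_range, Set.mem_Iio] at hj ⊢
          exact hcon j (by omega)) σ.injective.injOn
      simp at this
    exact (ham hji).trans ((haA _).trans (hσ hj))
  set u : ℕ → ℕ := A ∘ σ with hu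
  set v : ℕ → ℕ := B ∘ σ with hv
  have hu2 : ∀ i, i + 1 < u i := fun i => (hai i).trans_le (hsa i)
  have hu0 : ∀ i, (0:ℝ) < u i := fun i => by have := hu2 i; exact_mod_cast (by omega : 0 < u i)
  set L : ℕ → ℝ := fun i => Real.logb 2 (u i) with hLd
  have hLu : ∀ i, (2:ℝ) ^ L i = u i := fun i => Real.rpow_logb (by norm_num) (by norm_num) (hu0 i)
  have hL0 : ∀ i, 0 < L i := fun i => Real.logb_pos (by norm_num) (by
    have := hu2 i; exact_mod_cast (by omega : 1 < u i))
  have hLm : Monotone L := by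
    intro i j hij
    exact Real.logb_le_logb_of_le (by norm_num) (hu0 i) (by exact_mod_cast hσ hij)
  have hL1 : ∀ i : ℕ, (1 + ε) * Real.logb 2 ((i : ℝ) + 1) ≤ L i := by
    intro i
    have hi : (0:ℝ) < (i : ℝ) + 1 := by positivity
    rw [← Real.logb_rpow_eq_mul_logb_of_pos hi]
    apply Real.logb_le_logb_of_le (by norm_num) (by positivity)
    have h1 := (ha (i + 1) (by omega)).1
    have h2 : (a (i + 1) : ℝ) ≤ u i := by exact_mod_cast hsa i
    push_cast at h1
    linarith
  have hL : ∀ M : ℝ, ∀ k : ℕ, ∃ n, k ≤ n ∧ M * K ^ n < L n := by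
    intro M k
    have hfr := Filter.frequently_lt_of_lt_limsup (b := (((2:ℝ) ^ |M| : ℝ) : EReal)) (by isBoundedDefault)
      (hlimsup ▸ EReal.coe_lt_top _)
    obtain ⟨m, hm, hm2⟩ := (frequently_atTop.mp hfr) (k + 1)
    obtain ⟨n, rfl⟩ : ∃ n, m = n + 1 := ⟨m - 1, by omega⟩
    refine ⟨n, by omega, ?_⟩
    have ha0 : (0:ℝ) < a (n + 1) := by have := hai n; exact_mod_cast (by omega : 0 < a (n+1))
    rw [EReal.coe_lt_coe_iff] at hm2
    have h3 := Real.logb_lt_logb (b := 2) (by norm_num) (by positivity) hm2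
    rw [Real.logb_rpow (by norm_num) (by norm_num), Real.logb_rpow_eq_mul_logb_of_pos ha0,
      Real.rpow_neg hKpos.le, Real.rpow_natCast, inv_mul_eq_div, lt_div_iff₀ (by positivity)] at h3
    have h4 : Real.logb 2 (a (n + 1)) ≤ L n :=
      Real.logb_le_logb_of_le (by norm_num) ha0 (by exact_mod_cast hsa n)
    have h5 : M * K ^ n ≤ |M| * K ^ (n + 1) := by
      have := le_abs_self M
      have h6 : K ^ n ≤ K ^ (n + 1) := pow_le_pow_right₀ hK1 (by omega)
      gcongr
    linarith
  have hr : ∀ i, (v i : ℝ) / u i ≤ 2 ^ (-γ * L i + L i ^ α) := by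
    intro i
    rw [div_le_iff₀ (hu0 i)]
    have ha0 : (0:ℝ) < a (σ i + 1) := by have := hai (σ i); exact_mod_cast (by omega : 0 < a (σ i+1))
    have ha1 : (1:ℝ) ≤ a (σ i + 1) := by have := hai (σ i); exact_mod_cast (by omega : 1 ≤ a (σ i+1))
    have h1 : (a (σ i + 1) : ℝ) ≤ u i := by exact_mod_cast haA (σ i)
    have h2 := Real.logb_le_logb_of_le (b := 2) (by norm_num) ha0 h1
    have h0 := Real.logb_nonneg (b := 2) (by norm_num) ha1
    calc (v i : ℝ) ≤ (a (σ i + 1) : ℝ) ^ β * 2 ^ (Real.logb 2 (a (σ i + 1) : ℝ) ^ α) := hb _ (by omega)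
      _ ≤ (u i : ℝ) ^ β * 2 ^ (L i ^ α) := by
        apply mul_le_mul
        · exact Real.rpow_le_rpow ha0.le h1 hβ.1
        · exact Real.rpow_le_rpow_of_exponent_le (by norm_num) (Real.rpow_le_rpow h0 h2 hα.1.le)
        · positivity
        · positivity
      _ = 2 ^ (-γ * L i + L i ^ α) * u i := by
        rw [← hLu i, ← Real.rpow_mul (by norm_num), ← Real.rpow_add (by norm_num),
          ← Real.rpow_add (by norm_num)]
        congr 1
        rw [hγd]; ring
  obtain ⟨hs, hη⟩ := tail ε α γ K hε hα hγ hγ1 hK L (fun i => (v i : ℝ) / u i) hLm hL1 hL0 hL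
    (fun i => by positivity) hr
  obtain ⟨P, hP⟩ := Real.multipliable_one_add_of_summable hs
  refine ⟨P, ?_, irr u v (fun i => by have := hu2 i; omega) (fun i => (hpos _ (by omega)).2) hs ?_ P hP⟩
  · have hP2 : HasProd (fun i => 1 + (B i : ℝ) / A i) P := (Equiv.hasProd_iff σ).1 hP
    refine hP2.tendsto_prod_nat.congr (fun N => ?_)
    induction N with
    | zero => simp
    | succ N ih =>
      rw [Finset.prod_range_succ, Finset.prod_Icc_succ_top (by omega), ih]
      simp [A, B]
  · intro η h0
    obtain ⟨N, hN⟩ := hη η h0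
    refine ⟨N, lt_of_le_of_lt (le_of_eq ?_) hN⟩
    congr 1
    rw [Real.rpow_sum_of_pos (by norm_num)]
    exact Finset.prod_congr rfl (fun i _ => (hLu i).symm)
end

section
/- Let ε>0, 0<α<1, and β∈[0, ε/(1+ε)). Let {a_n}_{n≥1} and {b_n}_{n≥1} be sequences of positive integers such that n^{1+ε} < a_n ≤ a_{n+1} and b_n ≤ a_n^β · 2^{(log₂ a_n)^α} for all n. If there exists δ>0 such that limsup_{n→∞} a_n^{((2+δ)/(1−β)+1)^{−n}} = ∞, then for every sequence {c_n}_{n≥1} of positive integers, the infinite product ∏_{n=1}^∞ (1 + b_n/(a_n c_n)) converges to a real number that is transcendental over ℚ. -/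
namespace RothAux
open MvPolynomial

noncomputable section

variable {n : ℕ}

/-- product of binomial coefficients -/
def hc (μ ν : Fin n →₀ ℕ) : ℕ := ∏ i, (ν i).choose (μ i)

lemma hc_eq_zero {μ ν : Fin n →₀ ℕ} (h : ¬ μ ≤ ν) : hc μ ν = 0 := by
  rw [Finsupp.le_def] at h
  push Not at h
  obtain ⟨i, hi⟩ := h
  exact Finset.prod_eq_zero (Finset.mem_univ i) (Nat.choose_eq_zero_of_lt hi)

/-- Hasse derivative -/
def hD (μ : Fin n →₀ ℕ) : MvPolynomial (Fin n) ℤ →ₗ[ℤ] MvPolynomial (Fin n) ℤ :=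
  (basisMonomials (Fin n) ℤ).constr ℤ (fun ν => monomial (ν - μ) (hc μ ν : ℤ))

lemma hD_monomial (μ ν : Fin n →₀ ℕ) (c : ℤ) :
    hD μ (monomial ν c) = monomial (ν - μ) (c * (hc μ ν : ℤ)) := by
  have h : (monomial ν c : MvPolynomial (Fin n) ℤ) = c • (basisMonomials (Fin n) ℤ ν) := by
    simp [smul_monomial]
  rw [h, map_smul, hD, Module.Basis.constr_basis, smul_monomial, smul_eq_mul]

lemma coeff_hD (μ l : Fin n →₀ ℕ) (P : MvPolynomial (Fin n) ℤ) :
    coeff l (hD μ P) = (hc μ (l + μ) : ℤ) * coeff (l + μ) P := by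
  induction P using MvPolynomial.induction_on' with
  | monomial ν c =>
    rw [hD_monomial, coeff_monomial, coeff_monomial]
    by_cases h : μ ≤ ν
    · by_cases h2 : ν - μ = l
      · have h3 : ν = l + μ := by rw [← h2, tsub_add_cancel_of_le h]
        rw [if_pos h2, if_pos h3, h3, mul_comm]
      · have h3 : ν ≠ l + μ := by
          rintro rfl; apply h2; simp
        rw [if_neg h2, if_neg h3, mul_zero]
    · have h3 : ν ≠ l + μ := by
        rintro rfl; apply h; simp
      rw [hc_eq_zero h, if_neg h3]; simp
  | add p q hp hq => rw [map_add, coeff_add, hp, hq, coeff_add, mul_add]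

lemma hD_zero (P : MvPolynomial (Fin n) ℤ) : hD 0 P = P := by
  ext l; rw [coeff_hD]; simp [hc]

lemma pderiv_hD (j : Fin n) (μ : Fin n →₀ ℕ) (P : MvPolynomial (Fin n) ℤ) :
    pderiv j (hD μ P) = ((μ j : ℤ) + 1) • hD (μ + Finsupp.single j 1) P := by
  ext l
  rw [coeff_pderiv, coeff_smul, coeff_hD, coeff_hD, smul_eq_mul]
  have e : l + Finsupp.single j 1 + μ = l + (μ + Finsupp.single j 1) := by abel
  rw [e]
  have key : (hc μ (l + (μ + Finsupp.single j 1)) : ℤ) * ((l j : ℤ) + 1) =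
      ((μ j : ℤ) + 1) * hc (μ + Finsupp.single j 1) (l + (μ + Finsupp.single j 1)) := by
    have : hc μ (l + (μ + Finsupp.single j 1)) * (l j + 1) =
      (μ j + 1) * hc (μ + Finsupp.single j 1) (l + (μ + Finsupp.single j 1)) := by
      obtain ⟨w, hw⟩ : ∃ w : Fin n →₀ ℕ, w = μ + Finsupp.single j 1 := ⟨_, rfl⟩
      obtain ⟨v, hv⟩ : ∃ v : Fin n →₀ ℕ, v = l + w := ⟨_, rfl⟩
      rw [← hw, ← hv]
      unfold hc
      rw [← Finset.mul_prod_erase _ _ (Finset.mem_univ j),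
        ← Finset.mul_prod_erase Finset.univ (fun i => Nat.choose (v i) (w i)) (Finset.mem_univ j)]
      have h1 : ∀ i ∈ Finset.univ.erase j, Nat.choose (v i) (μ i) = Nat.choose (v i) (w i) := by
        intro i hi
        have : i ≠ j := Finset.ne_of_mem_erase hi
        simp [hw, this.symm]
      rw [Finset.prod_congr rfl h1]
      have h2 : (v j).choose (μ j) * (l j + 1) = (μ j + 1) * (v j).choose (w j) := by
        simp only [hv, hw, Finsupp.add_apply, Finsupp.single_eq_same]
        have := Nat.choose_succ_right_eq (l j + (μ j + 1)) (μ j)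
        rw [mul_comm (μ j + 1), this]
        congr 1; omega
      calc _ = ((v j).choose (μ j) * (l j + 1)) * _ := by
            rw [mul_assoc, mul_comm _ (l j + 1), ← mul_assoc]
        _ = _ := by rw [h2, mul_assoc]
    exact_mod_cast this
  rw [← mul_assoc, ← key]
  ring

/-- support predicate: variables inside `S` -/
def VS {A : Type*} [CommRing A] (S : Set (Fin n)) (P : MvPolynomial (Fin n) A) : Prop :=
  ∀ ν, coeff ν P ≠ 0 → ∀ i, i ∉ S → ν i = 0

/-- shift by `ξ` -/
def sh (ξ : Fin n → ℚ) : MvPolynomial (Fin n) ℤ →+* MvPolynomial (Fin n) ℚ :=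
  eval₂Hom (C.comp (Int.castRingHom ℚ)) (fun i => X i + C (ξ i))

lemma coeff_sh_monomial (ξ : Fin n → ℚ) (l ν : Fin n →₀ ℕ) (c : ℤ) :
    coeff l (sh ξ (monomial ν c)) = c * ((hc l ν : ℚ) * ∏ i, ξ i ^ (ν i - l i)) := by
  have h1 : sh ξ (monomial ν c) = C (c : ℚ) * ∏ i, (X i + C (ξ i)) ^ (ν i) := by
    simp only [sh, coe_eval₂Hom, eval₂_monomial, eq_intCast]
    rw [Finsupp.prod_fintype _ _ (by simp)]
    simp
  rw [h1, coeff_C_mul]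
  congr 1
  have h2 : ∀ i : Fin n, (X i + C (ξ i) : MvPolynomial (Fin n) ℚ) ^ (ν i) =
      ∑ k ∈ Finset.range (ν i + 1), (monomial (Finsupp.single i k)) (ξ i ^ (ν i - k) * ((ν i).choose k : ℚ)) := by
    intro i
    rw [add_pow]
    apply Finset.sum_congr rfl
    intro k _
    rw [X_pow_eq_monomial, ← C_pow, ← map_natCast (C : ℚ →+* MvPolynomial (Fin n) ℚ), mul_assoc, ← C_mul,
      mul_comm, C_mul_monomial, mul_one]
  simp_rw [h2]
  rw [Finset.prod_univ_sum, coeff_sum]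
  have h3 : ∀ x : Fin n → ℕ, (∏ i, (monomial (Finsupp.single i (x i))) (ξ i ^ (ν i - x i) * ((ν i).choose (x i) : ℚ)))
      = monomial (Finsupp.equivFunOnFinite.symm x) (∏ i, (ξ i ^ (ν i - x i) * ((ν i).choose (x i) : ℚ))) := by
    intro x
    rw [← MvPolynomial.monomial_sum_prod]
    congr 1
    have := Finsupp.univ_sum_single (Finsupp.equivFunOnFinite.symm x)
    conv_rhs => rw [← this]
    simp
  simp_rw [h3, coeff_monomial]
  by_cases h : l ≤ ν
  · rw [Finset.sum_eq_single (l : Fin n → ℕ)]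
    · rw [if_pos (by ext; simp), Finset.prod_mul_distrib, mul_comm]
      simp [hc]
    · intro x _ hx
      rw [if_neg]
      intro h; apply hx; rw [← h]; ext; simp
    · intro h'
      exfalso; apply h'
      simp only [Fintype.mem_piFinset, Finset.mem_range]
      intro i; have := h i; omega
  · rw [hc_eq_zero h, Finset.sum_eq_zero]
    · simp
    · intro x hx
      rw [if_neg]
      rintro rfl
      apply h
      intro i
      simp only [Fintype.mem_piFinset, Finset.mem_range] at hx
      have := hx i
      simp; omega

lemma coeff_sh (ξ : Fin n → ℚ) (l : Fin n →₀ ℕ) (P : MvPolynomial (Fin n) ℤ) :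
    coeff l (sh ξ P) = ∑ ν ∈ P.support, ((coeff ν P : ℤ) : ℚ) * ((hc l ν : ℚ) * ∏ i, ξ i ^ (ν i - l i)) := by
  conv_lhs => rw [P.as_sum]
  rw [map_sum, coeff_sum]
  simp_rw [coeff_sh_monomial]

lemma hc_mul (μ l ν : Fin n →₀ ℕ) : hc μ ν * hc l (ν - μ) = hc μ (l + μ) * hc (l + μ) ν := by
  unfold hc
  rw [← Finset.prod_mul_distrib, ← Finset.prod_mul_distrib]
  apply Finset.prod_congr rfl
  intro i _
  have := Nat.choose_mul (n := ν i) (k := l i + μ i) (s := μ i) (by omega)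
  simp only [Finsupp.add_apply, Finsupp.tsub_apply]
  rw [mul_comm (Nat.choose _ _) (Nat.choose (ν i) _), this]
  simp

lemma coeff_sh_hD (ξ : Fin n → ℚ) (μ l : Fin n →₀ ℕ) (P : MvPolynomial (Fin n) ℤ) :
    coeff l (sh ξ (hD μ P)) = (hc μ (l + μ) : ℚ) * coeff (l + μ) (sh ξ P) := by
  induction P using MvPolynomial.induction_on' with
  | monomial ν c =>
    rw [hD_monomial, coeff_sh_monomial, coeff_sh_monomial]
    have := hc_mul μ l ν
    have h2 : (hc μ ν : ℚ) * hc l (ν - μ) = hc μ (l + μ) * hc (l + μ) ν := by exact_mod_cast this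
    have h3 : ∀ i, (ν - μ) i - l i = ν i - (l + μ) i := by
      intro i; simp only [Finsupp.add_apply, Finsupp.tsub_apply]; omega
    simp_rw [h3]
    rw [Int.cast_mul, Int.cast_natCast]
    linear_combination (c * ∏ i, ξ i ^ (ν i - (l + μ) i) : ℚ) * h2
  | add p q hp hq => rw [map_add, map_add, map_add, coeff_add, hp, hq, coeff_add, mul_add]

end
end RothAux


namespace RothAux
open MvPolynomial

noncomputable section

variable {n : ℕ}

lemma prop_of_pderiv (g : MvPolynomial (Fin n) ℤ) (hg : g ≠ 0) :
    ∃ b : ℤ, b ≠ 0 ∧ ∀ f : MvPolynomial (Fin n) ℤ,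
      (∀ j, g * pderiv j f = pderiv j g * f) → ∃ c : ℤ, b • f = c • g := by
  let m : MonomialOrder (Fin n) := MonomialOrder.lex
  refine ⟨coeff (m.degree g) g, ?_, ?_⟩
  · exact m.coeff_degree_ne_zero_iff.mpr hg
  intro f hf
  refine ⟨coeff (m.degree g) f, ?_⟩
  set b := coeff (m.degree g) g with hb
  set c := coeff (m.degree g) f with hc
  have hb0 : b ≠ 0 := m.coeff_degree_ne_zero_iff.mpr hg
  rw [← sub_eq_zero]
  by_contra hh
  set h := b • f - c • g with hhdef
  have hcoeff : coeff (m.degree g) h = 0 := by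
    rw [hhdef, coeff_sub, coeff_smul, coeff_smul, ← hb, ← hc, smul_eq_mul, smul_eq_mul]; ring
  have hder : ∀ j, g * (X j * pderiv j h) = (X j * pderiv j g) * h := by
    intro j
    have := hf j
    have hs : pderiv j h = b • pderiv j f - c • pderiv j g := by
      rw [hhdef, map_sub, Derivation.map_smul, Derivation.map_smul]
    rw [hs, hhdef]
    simp only [zsmul_eq_mul]
    linear_combination (X j * (b : MvPolynomial (Fin n) ℤ)) * this
  have hXc : ∀ j (q : MvPolynomial (Fin n) ℤ) (l : Fin n →₀ ℕ),
      coeff l (X j * pderiv j q) = (l j : ℤ) * coeff l q := by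
    intro j q l
    rw [coeff_X_mul']
    by_cases hl : j ∈ l.support
    · rw [if_pos hl, coeff_pderiv]
      have h1 : Finsupp.single j 1 ≤ l := by
        rw [Finsupp.single_le_iff]
        exact Nat.one_le_iff_ne_zero.mpr (Finsupp.mem_support_iff.mp hl)
      rw [tsub_add_cancel_of_le h1]
      have h2 : ((l - Finsupp.single j 1 : Fin n →₀ ℕ) j : ℤ) + 1 = l j := by
        have := h1 j
        simp only [Finsupp.single_eq_same] at this
        simp only [Finsupp.tsub_apply, Finsupp.single_eq_same]
        omega
      rw [h2, mul_comm]
    · rw [if_neg hl]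
      simp only [Finsupp.mem_support_iff, not_not] at hl
      simp [hl]
  have hXd : ∀ j (q : MvPolynomial (Fin n) ℤ), m.toSyn (m.degree (X j * pderiv j q)) ≤ m.toSyn (m.degree q) := by
    intro j q
    apply m.degree_le_degree_of_support_subset
    intro l hl
    rw [mem_support_iff, hXc] at hl
    rw [mem_support_iff]
    exact right_ne_zero_of_mul hl
  have hne : coeff (m.degree h) h ≠ 0 := m.coeff_degree_ne_zero_iff.mpr hh
  have heq : ∀ j, (m.degree h) j = (m.degree g) j := by
    intro j
    have h1 := m.coeff_mul_of_add_of_degree_le (f := g) (g := X j * pderiv j h) (a := m.degree g)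
      (b := m.degree h) le_rfl (hXd j h)
    have h2 := m.coeff_mul_of_add_of_degree_le (f := X j * pderiv j g) (g := h) (a := m.degree g)
      (b := m.degree h) (hXd j g) le_rfl
    rw [hder j, h2, hXc, hXc] at h1
    have : ((m.degree g j : ℤ) - m.degree h j) * (coeff (m.degree g) g * coeff (m.degree h) h) = 0 := by
      linear_combination h1
    rcases mul_eq_zero.mp this with h3 | h3
    · omega
    · exact absurd h3 (mul_ne_zero hb0 hne)
  have : m.degree h = m.degree g := Finsupp.ext heq
  rw [this] at hne
  exact hne hcoeff

theorem wronskian (s : ℕ) : ∀ (φ : Fin s → MvPolynomial (Fin n) ℤ), LinearIndependent ℤ φ →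
    ∃ μ : Fin s → (Fin n →₀ ℕ), (∀ i, ∑ j, μ i j ≤ i) ∧
      (Matrix.of fun i k => hD (μ i) (φ k)).det ≠ 0 := by
  induction s with
  | zero => intro φ _; exact ⟨fun i => 0, fun i => i.elim0, by simp⟩
  | succ s ih =>
    intro φ hφ
    obtain ⟨μ, hμ, hdet⟩ := ih (fun k => φ k.castSucc)
      (hφ.comp _ (Fin.castSucc_injective s))
    by_contra hcon
    push Not at hcon
    let Cc : Fin (s+1) → MvPolynomial (Fin n) ℤ := fun k => (-1) ^ ((s : ℕ) + (k : ℕ)) *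
      (Matrix.of fun (i k' : Fin s) => hD (μ i) (φ (k.succAbove k'))).det
    have hlast : Cc (Fin.last s) ≠ 0 := by
      simp only [Cc, Fin.succAbove_last]
      refine mul_ne_zero (pow_ne_zero _ (by simp)) hdet
    have hC : ∀ ν : Fin n →₀ ℕ, ∑ j, ν j ≤ s → ∑ k, Cc k * hD ν (φ k) = 0 := by
      intro ν hν
      have h1 := hcon (Fin.snoc μ ν) (by
        intro i
        refine Fin.lastCases ?_ (fun i => ?_) i
        · simpa using hν
        · simpa using hμ i)
      rw [Matrix.det_succ_row _ (Fin.last s)] at h1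
      rw [← h1]
      apply Finset.sum_congr rfl
      intro k _
      simp only [Cc, Matrix.of_apply, Fin.snoc_last, Fin.val_last]
      rw [mul_right_comm]
      congr 2
      ext i k'
      simp
    have hdC : ∀ (j : Fin n) (ν : Fin n →₀ ℕ), ∑ j, ν j + 1 ≤ s →
        ∑ k, pderiv j (Cc k) * hD ν (φ k) = 0 := by
      intro j ν hν
      have h1 := congrArg (pderiv j) (hC ν (by omega))
      rw [map_sum, map_zero] at h1
      have h2 := hC (ν + Finsupp.single j 1) (by
        simp only [Finsupp.add_apply, Finset.sum_add_distrib]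
        simpa [Finsupp.single_apply] using hν)
      have h3 : ∀ k, pderiv j (Cc k * hD ν (φ k)) = pderiv j (Cc k) * hD ν (φ k) +
          ((ν j : ℤ) + 1) • (Cc k * hD (ν + Finsupp.single j 1) (φ k)) := by
        intro k
        rw [Derivation.leibniz, pderiv_hD]
        simp only [smul_eq_mul, mul_smul_comm]
        ring
      simp_rw [h3] at h1
      rw [Finset.sum_add_distrib, ← Finset.smul_sum, h2, smul_zero, add_zero] at h1
      exact h1
    have hE : ∀ j k, Cc (Fin.last s) * pderiv j (Cc k) = pderiv j (Cc (Fin.last s)) * Cc k := by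
      intro j
      let E : Fin (s+1) → MvPolynomial (Fin n) ℤ := fun k =>
        Cc (Fin.last s) * pderiv j (Cc k) - pderiv j (Cc (Fin.last s)) * Cc k
      have hEl : E (Fin.last s) = 0 := by simp only [E]; ring
      have hE0 : (fun k : Fin s => E k.castSucc) = 0 := by
        apply Matrix.eq_zero_of_mulVec_eq_zero hdet
        ext1 i
        simp only [Matrix.mulVec, dotProduct, Matrix.of_apply, Pi.zero_apply]
        have h1 := hC (μ i) (by have := hμ i; omega)
        have h2 := hdC j (μ i) (by have := hμ i; omega)
        have h3 : ∑ k, hD (μ i) (φ k) * E k = 0 := by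
          have : ∀ k, hD (μ i) (φ k) * E k = Cc (Fin.last s) * (pderiv j (Cc k) * hD (μ i) (φ k)) -
            pderiv j (Cc (Fin.last s)) * (Cc k * hD (μ i) (φ k)) := by intro k; simp only [E]; ring
          simp_rw [this]
          rw [Finset.sum_sub_distrib, ← Finset.mul_sum, ← Finset.mul_sum, h1, h2]; simp
        rw [Fin.sum_univ_castSucc, hEl, mul_zero, add_zero] at h3
        exact h3
      intro k
      rw [← sub_eq_zero]
      refine Fin.lastCases hEl (fun i => ?_) k
      exact congrFun hE0 i
    obtain ⟨b, hb, hprop⟩ := prop_of_pderiv _ hlast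
    choose c hc using fun k => hprop (Cc k) (fun j => hE j k)
    have hcl : c (Fin.last s) = b := by
      have := hc (Fin.last s)
      have h2 : (b - c (Fin.last s)) • Cc (Fin.last s) = 0 := by rw [sub_smul, this, sub_self]
      rcases smul_eq_zero.mp h2 with h | h
      · omega
      · exact absurd h hlast
    have hsum : ∑ k, c k • φ k = 0 := by
      have h1 := hC 0 (by simp)
      simp_rw [hD_zero] at h1
      have h2 : Cc (Fin.last s) * ∑ k, c k • φ k = 0 := by
        rw [Finset.mul_sum, ← smul_zero b, ← h1, Finset.smul_sum]
        apply Finset.sum_congr rfl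
        intro k _
        rw [← smul_mul_assoc, hc k, smul_mul_assoc, mul_smul_comm]
      exact (mul_eq_zero.mp h2).resolve_left hlast
    have := Fintype.linearIndependent_iff.mp hφ c hsum (Fin.last s)
    exact hb (hcl ▸ this)

end
end RothAux


namespace RothAux
open MvPolynomial

noncomputable section

variable {n : ℕ}

section WGE
variable {A : Type*} [CommRing A]

/-- weighted order at least `t` -/
def WGE (w : Fin n → ℝ) (t : ℝ) (P : MvPolynomial (Fin n) A) : Prop :=
  ∀ ν, coeff ν P ≠ 0 → t ≤ ∑ i, w i * ν i

lemma WGE.mono {w : Fin n → ℝ} {t t' : ℝ} {P : MvPolynomial (Fin n) A} (h : WGE w t P) (ht : t' ≤ t) :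
    WGE w t' P := fun ν hν => ht.trans (h ν hν)

lemma WGE.sum {w : Fin n → ℝ} {t : ℝ} {ι : Type*} (s : Finset ι) (f : ι → MvPolynomial (Fin n) A)
    (h : ∀ i ∈ s, WGE w t (f i)) : WGE w t (∑ i ∈ s, f i) := by
  intro ν hν
  rw [coeff_sum] at hν
  obtain ⟨i, hi, h2⟩ := Finset.exists_ne_zero_of_sum_ne_zero hν
  exact h i hi ν h2

lemma WGE.mul {w : Fin n → ℝ} {t u : ℝ} {P Q : MvPolynomial (Fin n) A} (hP : WGE w t P)
    (hQ : WGE w u Q) : WGE w (t + u) (P * Q) := by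
  intro ν hν
  rw [coeff_mul] at hν
  obtain ⟨⟨a, b⟩, hi, h2⟩ := Finset.exists_ne_zero_of_sum_ne_zero hν
  rw [Finset.HasAntidiagonal.mem_antidiagonal] at hi
  have h3 := hP a (left_ne_zero_of_mul h2)
  have h4 := hQ b (right_ne_zero_of_mul h2)
  rw [← hi]
  simp only [Finsupp.add_apply, Nat.cast_add, mul_add, Finset.sum_add_distrib]
  linarith

lemma WGE.one (w : Fin n → ℝ) : WGE w 0 (1 : MvPolynomial (Fin n) A) := by
  intro ν hν
  rw [coeff_one] at hν
  have : (0 : Fin n →₀ ℕ) = ν := by by_contra h; simp [h] at hν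
  simp [← this]

lemma WGE.prod {w : Fin n → ℝ} {ι : Type*} [DecidableEq ι] (s : Finset ι) (t : ι → ℝ)
    (f : ι → MvPolynomial (Fin n) A)
    (h : ∀ i ∈ s, WGE w (t i) (f i)) : WGE w (∑ i ∈ s, t i) (∏ i ∈ s, f i) := by
  induction s using Finset.induction_on with
  | empty => simpa using WGE.one w
  | insert a s ha ih =>
    rw [Finset.sum_insert ha, Finset.prod_insert ha]
    exact (h a (Finset.mem_insert_self _ _)).mul (ih fun i hi => h i (Finset.mem_insert_of_mem hi))

lemma WGE.det {w : Fin n → ℝ} {s : ℕ} (t : Fin s → ℝ)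
    (M : Matrix (Fin s) (Fin s) (MvPolynomial (Fin n) A))
    (h : ∀ i j, WGE w (t j) (M i j)) : WGE w (∑ j, t j) M.det := by
  rw [Matrix.det_apply]
  apply WGE.sum
  intro σ _
  have h1 : WGE w (∑ j, t j) (∏ j, M (σ j) j) := WGE.prod _ _ _ (fun j _ => h _ _)
  rcases Int.units_eq_one_or (Equiv.Perm.sign σ) with h2 | h2 <;> rw [h2]
  · simpa using h1
  · intro ν hν
    apply h1 ν
    simpa using hν

/-- degree bound -/
def DegLE (r : Fin n → ℕ) (P : MvPolynomial (Fin n) A) : Prop :=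
  ∀ ν, coeff ν P ≠ 0 → ∀ i, ν i ≤ r i

lemma wge_single (i : Fin n) (ν : Fin n →₀ ℕ) :
    ∑ j, (if j = i then (-1 : ℝ) else 0) * ν j = - (ν i : ℝ) := by
  simp

lemma degLE_iff (r : Fin n → ℕ) (P : MvPolynomial (Fin n) A) :
    DegLE r P ↔ ∀ i, WGE (fun j => if j = i then (-1 : ℝ) else 0) (-(r i : ℝ)) P := by
  unfold DegLE WGE
  simp only [wge_single, neg_le_neg_iff, Nat.cast_le]
  exact ⟨fun h i ν hν => h ν hν i, fun h ν hν i => h i ν hν⟩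

lemma vs_iff (S : Set (Fin n)) (P : MvPolynomial (Fin n) A) :
    VS S P ↔ ∀ i, i ∉ S → WGE (fun j => if j = i then (-1 : ℝ) else 0) 0 P := by
  unfold VS WGE
  simp only [wge_single]
  constructor
  · intro h i hi ν hν; rw [h ν hν i hi]; simp
  · intro h ν hν i hi
    have := h i hi ν hν
    have h2 : (ν i : ℝ) ≤ 0 := by linarith
    have h3 : ν i ≤ 0 := by exact_mod_cast h2
    omega

lemma DegLE.det {s : ℕ} (r : Fin n → ℕ) (M : Matrix (Fin s) (Fin s) (MvPolynomial (Fin n) A))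
    (h : ∀ i j, DegLE r (M i j)) : DegLE (fun i => s * r i) M.det := by
  rw [degLE_iff]
  intro i
  have := WGE.det (fun _ => -(r i : ℝ)) M (fun a b => (degLE_iff _ _).mp (h a b) i)
  simpa using this

lemma VS.det {s : ℕ} {S : Set (Fin n)} (M : Matrix (Fin s) (Fin s) (MvPolynomial (Fin n) A))
    (h : ∀ i j, VS S (M i j)) : VS S M.det := by
  rw [vs_iff]
  intro i hi
  have := WGE.det (fun _ => (0 : ℝ)) M (fun a b => (vs_iff _ _).mp (h a b) i hi)
  simpa using this

lemma VS.smul_sub {S : Set (Fin n)} {P Q : MvPolynomial (Fin n) ℤ} (hP : VS S P) (hQ : VS S Q) (a b : ℤ) :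
    VS S (a • P - b • Q) := by
  intro ν hν i hi
  by_cases h : coeff ν P = 0
  · by_cases h2 : coeff ν Q = 0
    · exfalso; apply hν; rw [coeff_sub, coeff_smul, coeff_smul, h, h2]; simp
    · exact hQ ν h2 i hi
  · exact hP ν h i hi

lemma coeff_mul_sep {S T : Set (Fin n)} (hST : Disjoint S T) {U V : MvPolynomial (Fin n) A}
    (hU : VS S U) (hV : VS T V) (a b : Fin n →₀ ℕ) (ha : ∀ i, i ∉ S → a i = 0)
    (hb : ∀ i, i ∉ T → b i = 0) : coeff (a + b) (U * V) = coeff a U * coeff b V := by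
  rw [coeff_mul, Finset.sum_eq_single (a, b)]
  · rintro ⟨c, d⟩ hcd hne
    rw [Finset.HasAntidiagonal.mem_antidiagonal] at hcd
    simp only at hcd ⊢
    by_contra h
    have h1 := hU c (left_ne_zero_of_mul h)
    have h2 := hV d (right_ne_zero_of_mul h)
    apply hne
    have key : ∀ i, c i = a i ∧ d i = b i := by
      intro i
      have h3 := DFunLike.congr_fun hcd i
      simp only [Finsupp.add_apply] at h3
      by_cases hi : i ∈ S
      · have hiT : i ∉ T := fun h => (Set.disjoint_left.mp hST) hi h
        have := h2 i hiT; have := hb i hiT; omega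
      · have := h1 i hi; have := ha i hi; omega
    ext i
    · exact (key i).1
    · exact (key i).2
  · intro h
    exfalso; apply h
    rw [Finset.HasAntidiagonal.mem_antidiagonal]

end WGE

lemma VS.hD {S : Set (Fin n)} {P : MvPolynomial (Fin n) ℤ} (h : VS S P) (μ : Fin n →₀ ℕ) : VS S (hD μ P) := by
  intro ν hν i hi
  rw [coeff_hD] at hν
  have := h _ (right_ne_zero_of_mul hν) i hi
  simp only [Finsupp.add_apply] at this; omega

lemma DegLE.hD {r : Fin n → ℕ} {P : MvPolynomial (Fin n) ℤ} (h : DegLE r P) (μ : Fin n →₀ ℕ) :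
    DegLE r (hD μ P) := by
  intro ν hν i
  rw [coeff_hD] at hν
  have := h _ (right_ne_zero_of_mul hν) i
  simp only [Finsupp.add_apply] at this; omega

lemma VS.sh {S : Set (Fin n)} {P : MvPolynomial (Fin n) ℤ} (h : VS S P) (ξ : Fin n → ℚ) : VS S (sh ξ P) := by
  intro l hl i hi
  rw [coeff_sh] at hl
  obtain ⟨ν, hν, h2⟩ := Finset.exists_ne_zero_of_sum_ne_zero hl
  have h3 := h ν (mem_support_iff.mp hν) i hi
  have h4 : l ≤ ν := by
    by_contra hc
    rw [hc_eq_zero hc] at h2; simp at h2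
  have := h4 i; omega

lemma hD_eq_zero {S : Set (Fin n)} {P : MvPolynomial (Fin n) ℤ} (h : VS S P) (μ : Fin n →₀ ℕ)
    (i : Fin n) (hi : i ∉ S) (hμ : μ i ≠ 0) : hD μ P = 0 := by
  ext l
  rw [coeff_hD, coeff_zero]
  by_contra hc
  have := h _ (right_ne_zero_of_mul hc) i hi
  simp only [Finsupp.add_apply] at this; omega

lemma hD_mul_sep {S T : Set (Fin n)} (hST : Disjoint S T) {U V : MvPolynomial (Fin n) ℤ}
    (hU : VS S U) (hV : VS T V) (a b : Fin n →₀ ℕ) (ha : ∀ i, i ∉ S → a i = 0)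
    (hb : ∀ i, i ∉ T → b i = 0) : hD (a + b) (U * V) = hD a U * hD b V := by
  have hm : ∀ u ∈ U.support, ∀ v ∈ V.support, hD (a + b) (monomial u (coeff u U) * monomial v (coeff v V)) =
      hD a (monomial u (coeff u U)) * hD b (monomial v (coeff v V)) := by
    intro u hu v hv
    have hu' := hU u (mem_support_iff.mp hu)
    have hv' := hV v (mem_support_iff.mp hv)
    rw [monomial_mul, hD_monomial, hD_monomial, hD_monomial, monomial_mul]
    have e1 : u + v - (a + b) = (u - a) + (v - b) := by
      ext i
      simp only [Finsupp.tsub_apply, Finsupp.add_apply]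
      by_cases hi : i ∈ S
      · have hiT : i ∉ T := fun h => (Set.disjoint_left.mp hST) hi h
        have := hv' i hiT; have := hb i hiT; omega
      · have := hu' i hi; have := ha i hi; omega
    have e2 : hc (a + b) (u + v) = hc a u * hc b v := by
      unfold hc
      rw [← Finset.prod_mul_distrib]
      apply Finset.prod_congr rfl
      intro i _
      simp only [Finsupp.add_apply]
      by_cases hi : i ∈ S
      · have hiT : i ∉ T := fun h => (Set.disjoint_left.mp hST) hi h
        have := hv' i hiT; have := hb i hiT
        simp [*]
      · have := hu' i hi; have := ha i hi
        simp [*]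
    rw [e1, e2]
    congr 1
    push_cast; ring
  conv_lhs => rw [U.as_sum, V.as_sum]
  conv_rhs => rw [U.as_sum, V.as_sum]
  rw [Finset.sum_mul_sum, map_sum, map_sum, map_sum, Finset.sum_mul_sum]
  apply Finset.sum_congr rfl
  intro u hu
  rw [map_sum]
  apply Finset.sum_congr rfl
  intro v hv
  exact hm u hu v hv

/-- ℓ¹ norm of coefficients -/
def L1 (P : MvPolynomial (Fin n) ℤ) : ℝ := ∑ ν ∈ P.support, |((coeff ν P : ℤ) : ℝ)|

lemma L1_eq {P : MvPolynomial (Fin n) ℤ} {T : Finset (Fin n →₀ ℕ)} (h : P.support ⊆ T) :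
    L1 P = ∑ ν ∈ T, |((coeff ν P : ℤ) : ℝ)| := by
  unfold L1
  apply Finset.sum_subset h
  intro ν _ hν
  rw [notMem_support_iff.mp hν]; simp

lemma L1_nonneg (P : MvPolynomial (Fin n) ℤ) : 0 ≤ L1 P := Finset.sum_nonneg fun _ _ => abs_nonneg _

lemma L1_add (P Q : MvPolynomial (Fin n) ℤ) : L1 (P + Q) ≤ L1 P + L1 Q := by
  classical
  rw [L1_eq (T := P.support ∪ Q.support) support_add, L1_eq (P := P) (T := P.support ∪ Q.support) Finset.subset_union_left,
    L1_eq (P := Q) (T := P.support ∪ Q.support) Finset.subset_union_right, ← Finset.sum_add_distrib]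
  apply Finset.sum_le_sum
  intro ν _
  rw [coeff_add, Int.cast_add]
  exact abs_add_le _ _

lemma L1_zero : L1 (0 : MvPolynomial (Fin n) ℤ) = 0 := by simp [L1]

lemma L1_sum {ι : Type*} (s : Finset ι) (f : ι → MvPolynomial (Fin n) ℤ) :
    L1 (∑ i ∈ s, f i) ≤ ∑ i ∈ s, L1 (f i) := by
  classical
  induction s using Finset.induction_on with
  | empty => simp [L1_zero]
  | insert a s ha ih =>
    rw [Finset.sum_insert ha, Finset.sum_insert ha]
    exact (L1_add _ _).trans (by gcongr)

lemma L1_monomial (ν : Fin n →₀ ℕ) (c : ℤ) : L1 (monomial ν c) = |(c : ℝ)| := by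
  classical
  rw [L1_eq (T := {ν}) support_monomial_subset]
  simp

lemma L1_mul (P Q : MvPolynomial (Fin n) ℤ) : L1 (P * Q) ≤ L1 P * L1 Q := by
  conv_lhs => rw [P.as_sum, Q.as_sum]
  rw [Finset.sum_mul_sum]
  refine (L1_sum _ _).trans ?_
  unfold L1
  rw [Finset.sum_mul_sum]
  apply Finset.sum_le_sum
  intro u _
  refine (L1_sum _ _).trans ?_
  apply Finset.sum_le_sum
  intro v _
  rw [monomial_mul, L1_monomial, Int.cast_mul, abs_mul]

lemma L1_one : L1 (1 : MvPolynomial (Fin n) ℤ) = 1 := by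
  have := L1_monomial (0 : Fin n →₀ ℕ) 1
  simpa using this

lemma L1_neg (P : MvPolynomial (Fin n) ℤ) : L1 (-P) = L1 P := by
  unfold L1; rw [support_neg]; simp

lemma L1_prod {s : ℕ} (f : Fin s → MvPolynomial (Fin n) ℤ) (K : ℝ) (h : ∀ i, L1 (f i) ≤ K) :
    L1 (∏ i, f i) ≤ K ^ s := by
  induction s with
  | zero => simp [L1_one]
  | succ s ih =>
    rw [Fin.prod_univ_succ, pow_succ']
    refine (L1_mul _ _).trans ?_
    have := ih (fun i => f i.succ) (fun i => h _)
    have h0 := L1_nonneg (f 0)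
    have h1 := L1_nonneg (∏ i : Fin s, f i.succ)
    have h2 := h 0
    exact mul_le_mul h2 this h1 (h0.trans h2)

lemma L1_det {s : ℕ} (M : Matrix (Fin s) (Fin s) (MvPolynomial (Fin n) ℤ)) (K : ℝ)
    (h : ∀ i j, L1 (M i j) ≤ K) : L1 M.det ≤ (s.factorial : ℝ) * K ^ s := by
  rw [Matrix.det_apply]
  refine (L1_sum _ _).trans ?_
  have : ∀ σ ∈ (Finset.univ : Finset (Equiv.Perm (Fin s))),
      L1 (Equiv.Perm.sign σ • ∏ j, M (σ j) j) ≤ K ^ s := by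
    intro σ _
    have h1 := L1_prod (fun j => M (σ j) j) K (fun j => h _ _)
    rcases Int.units_eq_one_or (Equiv.Perm.sign σ) with h2 | h2 <;> rw [h2]
    · simpa using h1
    · simpa [L1_neg] using h1
  refine (Finset.sum_le_sum this).trans ?_
  simp [Fintype.card_perm]

lemma one_le_L1 {P : MvPolynomial (Fin n) ℤ} (h : P ≠ 0) : 1 ≤ L1 P := by
  obtain ⟨ν, hν⟩ := ne_zero_iff.mp h
  have h1 : |((coeff ν P : ℤ) : ℝ)| ≤ L1 P :=
    Finset.single_le_sum (f := fun ν => |((coeff ν P : ℤ) : ℝ)|) (fun _ _ => abs_nonneg _) (mem_support_iff.mpr hν)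
  have h2 : (1 : ℤ) ≤ |coeff ν P| := Int.one_le_abs hν
  have h3 : (1 : ℝ) ≤ |((coeff ν P : ℤ) : ℝ)| := by exact_mod_cast h2
  linarith

lemma hc_le (μ ν : Fin n →₀ ℕ) {R : ℕ} (h : ∀ i, ν i ≤ R) : hc μ ν ≤ 2 ^ (n * R) := by
  unfold hc
  have : ∀ i ∈ (Finset.univ : Finset (Fin n)), (ν i).choose (μ i) ≤ 2 ^ R := fun i _ =>
    (Nat.choose_le_two_pow _ _).trans (Nat.pow_le_pow_right (by norm_num) (h i))
  refine (Finset.prod_le_prod' this).trans ?_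
  rw [Finset.prod_const, Finset.card_univ, Fintype.card_fin, ← pow_mul, mul_comm]

lemma L1_hD {P : MvPolynomial (Fin n) ℤ} {r : Fin n → ℕ} (hP : DegLE r P) {R : ℕ} (hR : ∀ i, r i ≤ R)
    (μ : Fin n →₀ ℕ) : L1 (hD μ P) ≤ 2 ^ (n * R) * L1 P := by
  conv_lhs => rw [P.as_sum]
  rw [map_sum]
  refine (L1_sum _ _).trans ?_
  unfold L1
  rw [Finset.mul_sum]
  apply Finset.sum_le_sum
  intro ν hν
  have := L1_monomial (ν - μ) (coeff ν P * hc μ ν : ℤ)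
  rw [hD_monomial]
  change L1 _ ≤ _
  rw [this, Int.cast_mul, abs_mul, mul_comm]
  gcongr
  have h1 := hc_le μ ν (R := R) (fun i => (hP ν (mem_support_iff.mp hν) i).trans (hR i))
  rw [Int.cast_natCast, Nat.abs_cast]
  exact_mod_cast h1

/-- extraction of one factor -/
lemma extract {S T : Set (Fin n)} (hST : Disjoint S T) {U V W : MvPolynomial (Fin n) ℤ} {D : ℤ}
    (hD0 : D ≠ 0) (hU : VS S U) (hV : VS T V) (hW : D • W = U * V) (hU0 : U ≠ 0) (hV0 : V ≠ 0) :
    ∃ U1 : MvPolynomial (Fin n) ℤ, ∃ c : ℤ, c ≠ 0 ∧ D • U1 = c • U ∧ U1 ≠ 0 ∧ L1 U1 ≤ L1 W ∧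
      (∀ r, DegLE r W → DegLE r U1) ∧ VS S U1 := by
  classical
  obtain ⟨β, hβ⟩ := ne_zero_iff.mp hV0
  have hc : ∀ l, coeff l (∑ ν ∈ U.support, monomial ν (coeff (ν + β) W)) =
      if l ∈ U.support then coeff (l + β) W else 0 := by
    intro l
    rw [coeff_sum]
    simp_rw [coeff_monomial]
    simp
  have hW' : ∀ l ∈ U.support, D * coeff (l + β) W = coeff l U * coeff β V := by
    intro l hl
    rw [← coeff_mul_sep hST hU hV l β (hU l (mem_support_iff.mp hl)) (hV β hβ), ← hW, coeff_smul, smul_eq_mul]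
  set U1 : MvPolynomial (Fin n) ℤ := ∑ ν ∈ U.support, monomial ν (coeff (ν + β) W) with hU1
  have hDU : D • U1 = coeff β V • U := by
    ext l
    rw [coeff_smul, coeff_smul, hc]
    split_ifs with h
    · rw [smul_eq_mul, hW' l h, smul_eq_mul, mul_comm]
    · rw [notMem_support_iff.mp h]; simp
  refine ⟨U1, coeff β V, hβ, hDU, ?_, ?_, ?_, ?_⟩
  · intro h
    rw [h, smul_zero] at hDU
    rcases smul_eq_zero.mp hDU.symm with h | h
    · exact hβ h
    · exact hU0 h
  · refine (L1_sum _ _).trans ?_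
    simp_rw [L1_monomial]
    have e : ∑ ν ∈ U.support, |((coeff (ν + β) W : ℤ) : ℝ)| =
        ∑ ν ∈ U.support.map (addRightEmbedding β), |((coeff ν W : ℤ) : ℝ)| := by
      rw [Finset.sum_map]; rfl
    rw [e, L1_eq (T := W.support ∪ U.support.map (addRightEmbedding β)) Finset.subset_union_left]
    exact Finset.sum_le_sum_of_subset_of_nonneg Finset.subset_union_right (fun _ _ _ => abs_nonneg _)
  · intro r hr l hl i
    rw [hc] at hl
    split_ifs at hl with h
    · have := hr _ hl i
      simp only [Finsupp.add_apply] at this; omega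
    · exact absurd rfl hl
  · intro l hl
    rw [hc] at hl
    split_ifs at hl with h
    · exact hU l (mem_support_iff.mp h)
    · exact absurd rfl hl

end
end RothAux


namespace RothAux
open MvPolynomial

noncomputable section

variable {n : ℕ}

lemma lin_prim (x : ℚ) : (Polynomial.C (x.den : ℤ) * Polynomial.X - Polynomial.C x.num).IsPrimitive := by
  intro r hr
  rw [Polynomial.C_dvd_iff_dvd_coeff] at hr
  have h0 := hr 0
  have h1 := hr 1
  rw [Polynomial.coeff_sub, Polynomial.coeff_C_mul, Polynomial.coeff_C] at h0 h1
  simp only [Polynomial.coeff_X_zero, Polynomial.coeff_X_one, mul_zero, zero_sub, mul_one, dvd_neg, if_true] at h0 h1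
  rw [if_neg one_ne_zero, sub_zero] at h1
  have hc : IsCoprime x.num (x.den : ℤ) := by
    rw [Int.isCoprime_iff_nat_coprime]; simpa using x.reduced
  exact hc.isUnit_of_dvd' h0 h1

lemma lin_pow_prim (x : ℚ) (k : ℕ) :
    ((Polynomial.C (x.den : ℤ) * Polynomial.X - Polynomial.C x.num) ^ k).IsPrimitive := by
  induction k with
  | zero => rw [pow_zero]; exact Polynomial.isPrimitive_one
  | succ k ih => rw [pow_succ]; exact ih.mul (lin_prim x)

lemma univ_poly (f : Polynomial ℤ) (hf : f ≠ 0) (x : ℚ) :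
    ∃ k, (Polynomial.taylor x (f.map (Int.castRingHom ℚ))).coeff k ≠ 0 ∧
      (x.den : ℤ) ^ k ∣ f.leadingCoeff := by
  have hf' : f.map (Int.castRingHom ℚ) ≠ 0 := by
    rw [Ne, Polynomial.map_eq_zero_iff (RingHom.injective_int _)]; exact hf
  obtain ⟨g, hg, hnd⟩ := Polynomial.exists_eq_pow_rootMultiplicity_mul_and_not_dvd _ hf' x
  set k := Polynomial.rootMultiplicity x (f.map (Int.castRingHom ℚ))
  refine ⟨k, ?_, ?_⟩
  · rw [hg, Polynomial.taylor_mul, Polynomial.taylor_pow]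
    have : Polynomial.taylor x (Polynomial.X - Polynomial.C x) = Polynomial.X := by
      simp [Polynomial.taylor_apply]
    rw [this, Polynomial.coeff_X_pow_mul', if_pos le_rfl, Nat.sub_self, Polynomial.taylor_coeff_zero]
    intro h
    exact hnd (Polynomial.dvd_iff_isRoot.mpr h)
  · have hd : (Polynomial.C (x.den : ℤ) * Polynomial.X - Polynomial.C x.num) ^ k ∣ f := by
      rw [Polynomial.IsPrimitive.Int.dvd_iff_map_cast_dvd_map_cast _ _ (lin_pow_prim x k)]
      have hden : (x.den : ℚ) ≠ 0 := by exact_mod_cast x.den_ne_zero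
      have e : (Polynomial.C (x.den : ℤ) * Polynomial.X - Polynomial.C x.num).map (Int.castRingHom ℚ)
          = Polynomial.C (x.den : ℚ) * (Polynomial.X - Polynomial.C x) := by
        simp only [Polynomial.map_sub, Polynomial.map_mul, Polynomial.map_C, Polynomial.map_X,
          mul_sub, ← Polynomial.C_mul]
        simp [Rat.den_mul_eq_num]
      rw [Polynomial.map_pow, e, mul_pow, ← Polynomial.C_pow, hg]
      refine ⟨Polynomial.C (((x.den : ℚ) ^ k)⁻¹) * g, ?_⟩
      rw [show ∀ a b c d : Polynomial ℚ, a * b * (c * d) = (a * c) * (b * d) by intros; ring,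
        ← Polynomial.C_mul, mul_inv_cancel₀ (pow_ne_zero _ hden)]
      simp
    have h2 := Polynomial.leadingCoeff_dvd_leadingCoeff hd
    rw [Polynomial.leadingCoeff_pow] at h2
    have e3 : (Polynomial.C (x.den : ℤ) * Polynomial.X - Polynomial.C x.num).leadingCoeff = (x.den : ℤ) := by
      rw [sub_eq_add_neg, ← Polynomial.C_neg]
      exact Polynomial.leadingCoeff_linear (by exact_mod_cast x.den_ne_zero)
    rwa [e3] at h2

lemma univ (ξ : Fin n → ℚ) (j : Fin n) (V : MvPolynomial (Fin n) ℤ) (hV : V ≠ 0) (hj : VS {j} V) :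
    ∃ k, coeff (Finsupp.single j k) (sh ξ V) ≠ 0 ∧ ((ξ j).den : ℝ) ^ k ≤ L1 V := by
  set f : Polynomial ℤ := ∑ ν ∈ V.support, Polynomial.monomial (ν j) (coeff ν V) with hfdef
  have hinj : ∀ ν ∈ V.support, ν = Finsupp.single j (ν j) := by
    intro ν hν
    ext i
    by_cases h : i = j
    · subst h; simp
    · rw [hj ν (mem_support_iff.mp hν) i (by simpa using h)]
      rw [Finsupp.single_apply, if_neg (Ne.symm h)]
  have hf : f ≠ 0 := by
    obtain ⟨ν₀, h0⟩ := MvPolynomial.ne_zero_iff.mp hV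
    intro hf
    have h1 : f.coeff (ν₀ j) = coeff ν₀ V := by
      rw [hfdef, Polynomial.finsetSum_coeff, Finset.sum_eq_single ν₀]
      · simp
      · intro ν hν hne
        rw [Polynomial.coeff_monomial, if_neg]
        intro h
        apply hne
        rw [hinj ν hν, hinj ν₀ (mem_support_iff.mpr h0), h]
      · intro h; rw [notMem_support_iff.mp h]; simp
    rw [hf] at h1
    simp at h1; exact h0 h1.symm
  obtain ⟨k, hk1, hk2⟩ := univ_poly f hf (ξ j)
  refine ⟨k, ?_, ?_⟩
  · convert hk1 using 1
    rw [coeff_sh, Polynomial.taylor_coeff, hfdef, Polynomial.map_sum, map_sum, Polynomial.eval_finsetSum]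
    apply Finset.sum_congr rfl
    intro ν hν
    rw [Polynomial.map_monomial, Polynomial.hasseDeriv_monomial, Polynomial.eval_monomial]
    have e1 : hc (Finsupp.single j k) ν = (ν j).choose k := by
      unfold hc
      rw [Finset.prod_eq_single j]
      · simp
      · intro i _ hi
        rw [Finsupp.single_apply, if_neg (Ne.symm hi)]; simp
      · simp
    have e2 : ∏ i, ξ i ^ (ν i - (Finsupp.single j k) i) = ξ j ^ (ν j - k) := by
      rw [Finset.prod_eq_single j]
      · simp
      · intro i _ hi
        rw [hj ν (mem_support_iff.mp hν) i (by simpa using hi)]; simp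
      · simp
    rw [e1, e2]
    simp
    ring
  · have h1 : ((ξ j).den : ℤ) ^ k ≤ |f.leadingCoeff| :=
      Int.le_of_dvd (abs_pos.mpr (Polynomial.leadingCoeff_ne_zero.mpr hf)) ((dvd_abs _ _).mpr hk2)
    have h2 : ((ξ j).den : ℝ) ^ k ≤ |(f.leadingCoeff : ℝ)| := by exact_mod_cast h1
    refine h2.trans ?_
    rw [Polynomial.leadingCoeff, hfdef, Polynomial.finsetSum_coeff, ← hfdef, Int.cast_sum, L1]
    refine (Finset.abs_sum_le_sum_abs _ _).trans (Finset.sum_le_sum fun ν _ => ?_)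
    rw [Polynomial.coeff_monomial]
    split_ifs <;> simp

end

end RothAux


namespace RothAux
open MvPolynomial

noncomputable section

variable {n : ℕ}

/-- representations as sums of products with separated variables -/
def Rep (S T : Set (Fin n)) (P : MvPolynomial (Fin n) ℤ) (s : ℕ) : Prop :=
  ∃ D : ℤ, D ≠ 0 ∧ ∃ φ ψ : Fin s → MvPolynomial (Fin n) ℤ, (∀ k, VS S (φ k)) ∧ (∀ k, VS T (ψ k)) ∧
    D • P = ∑ k, φ k * ψ k

lemma Rep.symm {S T : Set (Fin n)} {P : MvPolynomial (Fin n) ℤ} {s : ℕ} (h : Rep S T P s) : Rep T S P s := by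
  obtain ⟨D, hD, φ, ψ, h1, h2, h3⟩ := h
  exact ⟨D, hD, ψ, φ, h2, h1, by rw [h3]; exact Finset.sum_congr rfl fun k _ => mul_comm _ _⟩

lemma rep_reduce {S T : Set (Fin n)} {P : MvPolynomial (Fin n) ℤ} {s : ℕ} {D : ℤ} (hD : D ≠ 0)
    {φ ψ : Fin s → MvPolynomial (Fin n) ℤ} (h1 : ∀ k, VS S (φ k)) (h2 : ∀ k, VS T (ψ k))
    (h3 : D • P = ∑ k, φ k * ψ k) (hli : ¬ LinearIndependent ℤ φ) : ∃ s' < s, Rep S T P s' := by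
  rw [Fintype.not_linearIndependent_iff] at hli
  obtain ⟨g, hg, i, hi⟩ := hli
  cases s with
  | zero => exact i.elim0
  | succ s =>
    refine ⟨s, Nat.lt_succ_self s, g i * D, mul_ne_zero hi hD, fun k => φ (i.succAbove k),
      fun k => g i • ψ (i.succAbove k) - g (i.succAbove k) • ψ i, fun k => h1 _,
      fun k => (h2 _).smul_sub (h2 _) _ _, ?_⟩
    have e : ∑ k, φ k * (g i • ψ k - g k • ψ i) = (g i * D) • P := by
      simp only [mul_sub, Finset.sum_sub_distrib]
      rw [mul_smul, h3, Finset.smul_sum]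
      have : ∑ k, φ k * g k • ψ i = (∑ k, g k • φ k) * ψ i := by
        rw [Finset.sum_mul]
        exact Finset.sum_congr rfl fun k _ => by rw [smul_mul_assoc, mul_smul_comm]
      rw [this, hg, zero_mul, sub_zero]
      exact Finset.sum_congr rfl fun k _ => by rw [mul_smul_comm]
    rw [← e, Fin.sum_univ_succAbove _ i]
    simp

lemma rep_min {S T : Set (Fin n)} {P : MvPolynomial (Fin n) ℤ} {s : ℕ} (h : Rep S T P s) :
    ∃ s' ≤ s, ∃ D : ℤ, D ≠ 0 ∧ ∃ φ ψ : Fin s' → MvPolynomial (Fin n) ℤ, (∀ k, VS S (φ k)) ∧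
      (∀ k, VS T (ψ k)) ∧ D • P = ∑ k, φ k * ψ k ∧ LinearIndependent ℤ φ ∧ LinearIndependent ℤ ψ := by
  classical
  have hex : ∃ s, Rep S T P s := ⟨s, h⟩
  have hs := Nat.find_spec hex
  have hmin : ∀ s' < Nat.find hex, ¬ Rep S T P s' := fun s' h' => Nat.find_min hex h'
  refine ⟨Nat.find hex, Nat.find_min' hex h, ?_⟩
  obtain ⟨D, hD, φ, ψ, h1, h2, h3⟩ := hs
  refine ⟨D, hD, φ, ψ, h1, h2, h3, ?_, ?_⟩
  · by_contra hli
    obtain ⟨s', hs', hr⟩ := rep_reduce hD h1 h2 h3 hli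
    exact hmin s' hs' hr
  · by_contra hli
    have h3' : D • P = ∑ k, ψ k * φ k := by
      rw [h3]; exact Finset.sum_congr rfl fun k _ => mul_comm _ _
    obtain ⟨s', hs', hr⟩ := rep_reduce hD h2 h1 h3' hli
    exact hmin s' hs' hr.symm

lemma rep_init {S : Set (Fin n)} (j : Fin n) {P : MvPolynomial (Fin n) ℤ} {r : Fin n → ℕ}
    (hr : DegLE r P) (hP : VS (insert j S) P) (hj : j ∉ S) : Rep S {j} P (r j + 1) := by
  refine ⟨1, one_ne_zero, fun k => ∑ ν ∈ P.support with ν j = (k : ℕ), monomial (ν.erase j) (coeff ν P),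
    fun k => monomial (Finsupp.single j (k : ℕ)) 1, ?_, ?_, ?_⟩
  · intro k
    rw [vs_iff]
    intro i hi
    apply WGE.sum
    intro ν hν
    rw [Finset.mem_filter] at hν
    have hz : (ν.erase j) i = 0 := by
      by_cases hij : i = j
      · subst hij; simp
      · rw [Finsupp.erase_ne hij]
        apply hP ν (mem_support_iff.mp hν.1) i
        simp [hij, hi]
    intro ν' hν'
    rw [coeff_monomial] at hν'
    have : ν.erase j = ν' := by by_contra h; simp [h] at hν'
    rw [wge_single, ← this, hz]; simp
  · intro k ν hν i hi
    rw [coeff_monomial] at hν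
    have : Finsupp.single j (k : ℕ) = ν := by by_contra h; simp [h] at hν
    rw [← this, Finsupp.single_apply, if_neg]
    intro h; exact hi (by simp [h])
  · rw [one_smul]
    have e : ∀ k : Fin (r j + 1), (∑ ν ∈ P.support with ν j = (k : ℕ), monomial (ν.erase j) (coeff ν P)) *
        monomial (Finsupp.single j (k : ℕ)) (1 : ℤ) = ∑ ν ∈ P.support with ν j = (k : ℕ), monomial ν (coeff ν P) := by
      intro k
      rw [Finset.sum_mul]
      apply Finset.sum_congr rfl
      intro ν hν
      rw [Finset.mem_filter] at hν
      rw [monomial_mul, mul_one, ← hν.2, Finsupp.erase_add_single]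
    rw [Finset.sum_congr rfl fun k _ => e k]
    simp only [Finset.sum_filter]
    rw [Finset.sum_comm]
    conv_lhs => rw [P.as_sum]
    apply Finset.sum_congr rfl
    intro ν hν
    have hlt : ν j < r j + 1 := Nat.lt_succ_of_le (hr ν (mem_support_iff.mp hν) j)
    rw [Finset.sum_eq_single ⟨ν j, hlt⟩]
    · simp
    · intro k _ hk
      rw [if_neg]
      intro h; apply hk; ext; exact h.symm
    · simp

end

end RothAux


namespace RothAux
open MvPolynomial

noncomputable section

variable {n : ℕ}

lemma sum_max_bound (s r : ℕ) (hr : 1 ≤ r) (hs : s ≤ 2 * r) (τ : ℝ) (h0 : 0 < τ) (h1 : τ ≤ 1) :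
    s * τ ^ 2 / 32 ≤ ∑ j : Fin s, max 0 (τ / 2 - (j : ℕ) / r) := by
  rw [Fin.sum_univ_eq_sum_range (fun j => max 0 (τ / 2 - (j : ℝ) / r)) s]
  set m := min s (⌊τ * r / 4⌋₊ + 1) with hm
  have hr' : (0 : ℝ) < r := by exact_mod_cast hr
  have hms : Finset.range m ⊆ Finset.range s := Finset.range_mono (min_le_left _ _)
  have h2 : ∑ j ∈ Finset.range m, max 0 (τ / 2 - (j : ℝ) / r) ≤ ∑ j ∈ Finset.range s, max 0 (τ / 2 - (j : ℝ) / r) :=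
    Finset.sum_le_sum_of_subset_of_nonneg hms fun _ _ _ => le_max_left _ _
  refine le_trans ?_ h2
  have h3 : ∑ j ∈ Finset.range m, τ / 4 ≤ ∑ j ∈ Finset.range m, max 0 (τ / 2 - (j : ℝ) / r) := by
    apply Finset.sum_le_sum
    intro j hj
    apply le_max_of_le_right
    have hj2 : j ≤ ⌊τ * r / 4⌋₊ := by
      have := Finset.mem_range.mp hj
      omega
    have hj3 : (j : ℝ) ≤ τ * r / 4 := (Nat.le_floor_iff (by positivity)).mp hj2
    have : (j : ℝ) / r ≤ τ / 4 := by
      rw [div_le_iff₀ hr']; linarith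
    linarith
  refine le_trans ?_ h3
  rw [Finset.sum_const, Finset.card_range, nsmul_eq_mul]
  have h4 : (s : ℝ) * τ / 8 ≤ m := by
    rw [hm]
    push_cast
    apply le_min
    · have : (0 : ℝ) ≤ s := Nat.cast_nonneg _
      nlinarith
    · have := Nat.lt_floor_add_one (τ * r / 4)
      have h5 : (s : ℝ) ≤ 2 * r := by exact_mod_cast hs
      nlinarith
  nlinarith

lemma decomp {S : Set (Fin n)} (j : Fin n) (hj : j ∉ S) {P : MvPolynomial (Fin n) ℤ} (hP0 : P ≠ 0)
    {r : Fin n → ℕ} (hr : DegLE r P) (hP : VS (insert j S) P) :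
    ∃ s, 1 ≤ s ∧ s ≤ r j + 1 ∧ ∃ μ ν : Fin s → (Fin n →₀ ℕ),
      (∀ i a, a ∉ S → μ i a = 0) ∧ (∀ i a, a ∉ ({j} : Set (Fin n)) → ν i a = 0) ∧
      (∀ i, ∑ a, μ i a ≤ i) ∧ (∀ i, ∑ a, ν i a ≤ i) ∧
      ∃ (D : ℤ) (U V : MvPolynomial (Fin n) ℤ), D ≠ 0 ∧ U ≠ 0 ∧ V ≠ 0 ∧ VS S U ∧ VS {j} V ∧
        D • (Matrix.of fun i k => hD (μ i + ν k) P).det = U * V := by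
  have hST : Disjoint S {j} := by simpa using hj
  obtain ⟨s, hs, D, hD0, φ, ψ, h1, h2, h3, hφ, hψ⟩ := rep_min (rep_init j hr hP hj)
  obtain ⟨μ, hμ, hdμ⟩ := wronskian s φ hφ
  obtain ⟨ν, hν, hdν⟩ := wronskian s ψ hψ
  have sμ : ∀ i a, a ∉ S → μ i a = 0 := by
    intro i a ha
    by_contra hne
    apply hdμ
    apply Matrix.det_eq_zero_of_row_eq_zero i
    intro k
    exact hD_eq_zero (h1 k) (μ i) a ha hne
  have sν : ∀ i a, a ∉ ({j} : Set (Fin n)) → ν i a = 0 := by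
    intro i a ha
    by_contra hne
    apply hdν
    apply Matrix.det_eq_zero_of_row_eq_zero i
    intro k
    exact hD_eq_zero (h2 k) (ν i) a ha hne
  have hs1 : 1 ≤ s := by
    by_contra h
    have : s = 0 := by omega
    subst this
    simp at h3
    exact h3.elim hD0 hP0
  refine ⟨s, hs1, hs, μ, ν, sμ, sν, hμ, hν, D ^ s, _, _, pow_ne_zero _ hD0, hdμ, hdν,
    VS.det _ fun i k => (h1 k).hD _, VS.det _ fun i k => (h2 k).hD _, ?_⟩
  rw [← Matrix.det_transpose (Matrix.of fun i k => hD (ν i) (ψ k)), ← Matrix.det_mul]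
  have e : (Matrix.of fun i k => hD (μ i) (φ k)) * (Matrix.of fun i k => hD (ν i) (ψ k)).transpose
      = (C D : MvPolynomial (Fin n) ℤ) • (Matrix.of fun i k => hD (μ i + ν k) P) := by
    ext1 i k
    rw [Matrix.mul_apply, Matrix.smul_apply]
    simp only [Matrix.of_apply, Matrix.transpose_apply, smul_eq_mul]
    rw [← MvPolynomial.smul_eq_C_mul, ← map_smul, h3, map_sum]
    exact Finset.sum_congr rfl fun l _ => (hD_mul_sep hST (h1 l) (h2 l) _ _ (sμ i) (sν k)).symm
  rw [e, Matrix.det_smul, Fintype.card_fin, ← C_pow, MvPolynomial.smul_eq_C_mul]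

lemma coeff_sh_smul (ξ : Fin n → ℚ) (c : ℤ) (P : MvPolynomial (Fin n) ℤ) (l : Fin n →₀ ℕ) :
    coeff l (sh ξ (c • P)) = (c : ℚ) * coeff l (sh ξ P) := by
  rw [map_zsmul, coeff_smul]; simp

end

end RothAux


namespace RothAux
open MvPolynomial

noncomputable section

variable {n : ℕ}

lemma log_L1_det {s : ℕ} (hs : 1 ≤ s) {R : ℕ} (hsR : s ≤ R + 1) {P : MvPolynomial (Fin n) ℤ} (hP0 : P ≠ 0)
    {r : Fin n → ℕ} (hr : DegLE r P) (hR : ∀ i, r i ≤ R) (μ : Fin s → Fin s → (Fin n →₀ ℕ))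
    (hW : (Matrix.of fun i k => hD (μ i k) P).det ≠ 0) :
    Real.log (L1 (Matrix.of fun i k => hD (μ i k) P).det) ≤ s * ((n + 1) * R + Real.log (L1 P)) := by
  have h1 := L1_det (Matrix.of fun i k => hD (μ i k) P) (2 ^ (n * R) * L1 P)
    (fun i k => L1_hD hr hR _)
  have h2 : (1 : ℝ) ≤ L1 P := one_le_L1 hP0
  have hs2 : (s : ℝ) ≤ 2 ^ R := by
    have : s ≤ 2 ^ R := hsR.trans Nat.lt_two_pow_self
    exact_mod_cast this
  have hs0 : (0 : ℝ) < s := by exact_mod_cast hs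
  have h3 : (s.factorial : ℝ) ≤ (2 ^ R) ^ s := by
    have : (s.factorial : ℝ) ≤ (s : ℝ) ^ s := by exact_mod_cast Nat.factorial_le_pow s
    exact this.trans (by gcongr)
  have h4 : L1 (Matrix.of fun i k => hD (μ i k) P).det ≤ (2 ^ ((n + 1) * R) * L1 P) ^ s := by
    refine h1.trans ?_
    calc (s.factorial : ℝ) * (2 ^ (n * R) * L1 P) ^ s ≤ (2 ^ R) ^ s * (2 ^ (n * R) * L1 P) ^ s := by
          gcongr
      _ = _ := by rw [← mul_pow, ← mul_assoc, ← pow_add]; congr 3; ring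
  have h5 := Real.log_le_log (by linarith [one_le_L1 hW]) h4
  refine h5.trans ?_
  rw [Real.log_pow, Real.log_mul (by positivity) (by positivity), Real.log_pow]
  have h6 : Real.log 2 ≤ 1 := by linarith [Real.log_two_lt_d9]
  push_cast
  have : ((n : ℝ) + 1) * R * Real.log 2 ≤ (n + 1) * R * 1 := by gcongr
  have h7 : ((n : ℝ) + 1) * R * Real.log 2 + Real.log (L1 P) ≤ (n + 1) * R + Real.log (L1 P) := by linarith
  gcongr

lemma entry_wge {S : Set (Fin n)} {j : Fin n} {P : MvPolynomial (Fin n) ℤ} {ξ : Fin n → ℚ}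
    {r : Fin n → ℕ} (hr1 : ∀ i, 1 ≤ r i) {τ ρ : ℝ} (hρ0 : 0 ≤ ρ)
    (hρ : ∀ a ∈ S, (r j : ℝ) ≤ ρ * r a)
    (hτ : WGE (fun i => 1 / (r i : ℝ)) τ (sh ξ P)) (hρτ : ρ ≤ τ / 2)
    {μ ν : Fin n →₀ ℕ} (hμ : ∀ a, a ∉ S → μ a = 0) (hν : ∀ a, a ∉ ({j} : Set (Fin n)) → ν a = 0)
    (hμ1 : ∑ a, μ a ≤ r j) {k : ℕ} (hν1 : ∑ a, ν a ≤ k) :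
    WGE (fun i => 1 / (r i : ℝ)) (max 0 (τ / 2 - k / r j)) (sh ξ (hD (μ + ν) P)) := by
  intro l hl
  have hrpos : ∀ i, (0 : ℝ) < r i := fun i => by exact_mod_cast hr1 i
  rw [coeff_sh_hD] at hl
  have h1 := hτ _ (right_ne_zero_of_mul hl)
  have h2 : ∑ i, 1 / (r i : ℝ) * ((l + (μ + ν) : Fin n →₀ ℕ) i : ℝ) =
      ∑ i, 1 / (r i : ℝ) * l i + ∑ i, 1 / (r i : ℝ) * μ i + ∑ i, 1 / (r i : ℝ) * ν i := by
    simp only [Finsupp.add_apply, Nat.cast_add, mul_add, Finset.sum_add_distrib]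
    ring
  rw [h2] at h1
  have h3 : ∑ i, 1 / (r i : ℝ) * μ i ≤ ρ := by
    have h4 : ∀ i ∈ Finset.univ, 1 / (r i : ℝ) * μ i ≤ ρ / r j * μ i := by
      intro i _
      by_cases hi : i ∈ S
      · apply mul_le_mul_of_nonneg_right _ (Nat.cast_nonneg _)
        rw [div_le_div_iff₀ (hrpos i) (hrpos j)]
        linarith [hρ i hi]
      · rw [hμ i hi]; simp
    refine (Finset.sum_le_sum h4).trans ?_
    rw [← Finset.mul_sum]
    have h5 : (∑ i, (μ i : ℝ)) ≤ r j := by exact_mod_cast hμ1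
    calc ρ / r j * ∑ i, (μ i : ℝ) ≤ ρ / r j * r j := by
          apply mul_le_mul_of_nonneg_left h5 (div_nonneg hρ0 (hrpos j).le)
      _ = ρ := by field_simp [(hrpos j).ne']
  have h6 : ∑ i, 1 / (r i : ℝ) * ν i ≤ k / r j := by
    have h4 : ∀ i ∈ Finset.univ, 1 / (r i : ℝ) * ν i ≤ 1 / r j * ν i := by
      intro i _
      by_cases hi : i = j
      · rw [hi]
      · rw [hν i (by simpa using hi)]; simp
    refine (Finset.sum_le_sum h4).trans ?_
    rw [← Finset.mul_sum]
    have h5 : (∑ i, (ν i : ℝ)) ≤ k := by exact_mod_cast hν1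
    calc 1 / (r j : ℝ) * ∑ i, (ν i : ℝ) ≤ 1 / r j * k := by
          apply mul_le_mul_of_nonneg_left h5 (by positivity)
      _ = k / r j := by ring
  apply max_le
  · positivity
  · linarith

theorem roth_lemma (m : ℕ) (hm : m ≤ n) : ∀ τ : ℝ, 0 < τ → ∃ ρ : ℝ, 0 < ρ ∧ ∃ C : ℝ, 0 < C ∧
    ∀ (r : Fin n → ℕ) (R : ℕ) (ξ : Fin n → ℚ) (T : ℝ) (P : MvPolynomial (Fin n) ℤ), P ≠ 0 →
      (∀ i, 1 ≤ r i) → (∀ i, r i ≤ R) → (∀ i j, i < j → (r j : ℝ) ≤ ρ * r i) →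
      (∀ i, T ≤ r i * Real.log (ξ i).den) → C * (Real.log (L1 P) + R) ≤ T →
      DegLE r P → VS {i | (i : ℕ) < m} P →
      ∃ l : Fin n →₀ ℕ, ∑ i, 1 / (r i : ℝ) * l i < τ ∧ coeff l (sh ξ P) ≠ 0 := by
  induction m with
  | zero =>
    intro τ hτ
    refine ⟨1, one_pos, 1, one_pos, ?_⟩
    intro r R ξ T P hP0 _ _ _ _ _ _ hVS
    refine ⟨0, by simpa using hτ, ?_⟩
    obtain ⟨ν, hν⟩ := ne_zero_iff.mp hP0
    have hall : ∀ ν ∈ P.support, ν = 0 := by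
      intro ν hν; ext i
      exact hVS ν (mem_support_iff.mp hν) i (by simp)
    have h0 := hall ν (mem_support_iff.mpr hν)
    subst h0
    rw [coeff_sh, Finset.sum_eq_single 0]
    · simp [hc, hν]
    · intro b hb hne; exact absurd (hall b hb) hne
    · intro h; exact absurd (mem_support_iff.mpr hν) h
  | succ m ih =>
    intro τ hτ
    obtain ⟨τ₀, hτ₀⟩ : ∃ τ₀, τ₀ = min τ 1 := ⟨_, rfl⟩
    have hτ₀0 : 0 < τ₀ := by rw [hτ₀]; exact lt_min hτ one_pos
    have hτ₀1 : τ₀ ≤ 1 := by rw [hτ₀]; exact min_le_right _ _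
    have hτ₀τ : τ₀ ≤ τ := by rw [hτ₀]; exact min_le_left _ _
    obtain ⟨τ', hτ'⟩ : ∃ τ', τ' = τ₀ ^ 2 / 64 := ⟨_, rfl⟩
    have hτ'0 : 0 < τ' := by rw [hτ']; positivity
    obtain ⟨ρ', hρ'0, C', hC'0, ih⟩ := ih (by omega) τ' hτ'0
    refine ⟨min ρ' (τ₀ / 2), lt_min hρ'0 (by positivity), max C' (2 / τ') * (n + 2), by positivity, ?_⟩
    intro r R ξ T P hP0 hr1 hrR hrρ hT hC hdeg hVS
    set j : Fin n := ⟨m, by omega⟩ with hjdef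
    set S : Set (Fin n) := {i | (i : ℕ) < m} with hSdef
    have hjS : j ∉ S := by simp [hjdef, hSdef]
    have hST : Disjoint S {j} := by simpa using hjS
    have hins : {i : Fin n | (i : ℕ) < m + 1} = insert j S := by
      ext i
      simp only [hjdef, hSdef, Set.mem_ofPred_eq, Set.mem_insert_iff, Fin.ext_iff]
      omega
    rw [hins] at hVS
    have hrpos : ∀ i, (0 : ℝ) < r i := fun i => by exact_mod_cast hr1 i
    obtain ⟨s, hs1, hs2, μ, ν, sμ, sν, hμ, hν, D, U, V, hD0, hU0, hV0, hUS, hVS', hDW⟩ :=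
      decomp j hjS hP0 hdeg hVS
    set W := (Matrix.of fun i k => hD (μ i + ν k) P).det with hW
    have hW0 : W ≠ 0 := by
      intro h
      rw [h, smul_zero] at hDW
      exact mul_ne_zero hU0 hV0 hDW.symm
    have hlogW : Real.log (L1 W) ≤ s * ((n + 1) * R + Real.log (L1 P)) :=
      log_L1_det hs1 (hs2.trans (by have := hrR j; omega)) hP0 hdeg hrR (fun i k => μ i + ν k) hW0
    have hlogP : 0 ≤ Real.log (L1 P) := Real.log_nonneg (one_le_L1 hP0)
    have hs0 : (0 : ℝ) < s := by exact_mod_cast hs1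
    have hR1 : (1 : ℝ) ≤ R := by exact_mod_cast (hr1 j).trans (hrR j)
    have hlogW2 : Real.log (L1 W) + s * R ≤ s * ((n + 2) * (Real.log (L1 P) + R)) := by
      have : (0 : ℝ) ≤ n := Nat.cast_nonneg _
      have h1 : s * ((n + 1) * R + Real.log (L1 P)) + s * R ≤ s * ((n + 2) * (Real.log (L1 P) + R)) := by
        rw [← mul_add]
        apply mul_le_mul_of_nonneg_left _ hs0.le
        nlinarith
      linarith
    have hX0 : 0 ≤ (n + 2 : ℝ) * (Real.log (L1 P) + R) := by positivity
    have hCT1 : C' * ((n + 2) * (Real.log (L1 P) + R)) ≤ T := by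
      refine le_trans ?_ hC
      rw [mul_assoc]
      exact mul_le_mul_of_nonneg_right (le_max_left _ _) hX0
    have hCT2 : 2 / τ' * ((n + 2) * (Real.log (L1 P) + R)) ≤ T := by
      refine le_trans ?_ hC
      rw [mul_assoc]
      exact mul_le_mul_of_nonneg_right (le_max_right _ _) hX0
    have hT0 : 0 < T := lt_of_lt_of_le (by positivity) hCT2
    have hWdeg : DegLE (fun i => s * r i) W := DegLE.det _ _ fun i k => hdeg.hD _
    -- first factor
    obtain ⟨U1, c, hc0, hU1, hU10, hU1L, hU1d, hU1S⟩ := extract hST hD0 hUS hVS' hDW hU0 hV0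
    obtain ⟨V1, d, hd0, hV1, hV10, hV1L, hV1d, hV1S⟩ := extract hST.symm hD0 hVS' hUS
      (by rw [hDW, mul_comm]) hV0 hU0
    obtain ⟨l, hl1, hl2⟩ := ih (fun i => s * r i) (s * R) ξ (s * T) U1 hU10
      (fun i => by have := hr1 i; nlinarith) (fun i => Nat.mul_le_mul_left _ (hrR i))
      (fun a b hab => by
        push_cast
        have h1 := hrρ a b hab
        have h2 : min ρ' (τ₀ / 2) * (r a : ℝ) ≤ ρ' * r a :=
          mul_le_mul_of_nonneg_right (min_le_left _ _) (hrpos a).le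
        nlinarith)
      (fun i => by
        push_cast
        have := hT i
        rw [mul_assoc]
        exact mul_le_mul_of_nonneg_left this hs0.le)
      (by
        push_cast
        have h1 : Real.log (L1 U1) ≤ Real.log (L1 W) :=
          Real.log_le_log (by linarith [one_le_L1 hU10]) hU1L
        calc C' * (Real.log (L1 U1) + s * R) ≤ C' * (s * ((n + 2) * (Real.log (L1 P) + R))) := by
              apply mul_le_mul_of_nonneg_left _ hC'0.le
              linarith
          _ = s * (C' * ((n + 2) * (Real.log (L1 P) + R))) := by ring
          _ ≤ s * T := by gcongr)
      (hU1d _ hWdeg) hU1S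
    have hl1' : ∑ i, 1 / (r i : ℝ) * l i < s * τ' := by
      have e : ∑ i, 1 / (r i : ℝ) * l i = s * ∑ i, 1 / (((s * r i : ℕ)) : ℝ) * l i := by
        rw [Finset.mul_sum]
        apply Finset.sum_congr rfl
        intro i _
        have := hrpos i
        push_cast
        field_simp
      rw [e]
      exact mul_lt_mul_of_pos_left hl1 hs0
    obtain ⟨k, hk1, hk2⟩ := univ ξ j V1 hV10 hV1S
    have hk3 : (k : ℝ) / r j < s * τ' := by
      have hq : 0 < Real.log (ξ j).den := by
        have := hT j
        by_contra hneg
        push Not at hneg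
        have := mul_nonpos_of_nonneg_of_nonpos (hrpos j).le hneg
        linarith
      have hden : (0 : ℝ) < (ξ j).den := by exact_mod_cast (ξ j).den_pos
      have h1 : k * Real.log (ξ j).den ≤ Real.log (L1 W) := by
        rw [← Real.log_pow]
        exact Real.log_le_log (by positivity) (hk2.trans hV1L)
      have h2 : Real.log (L1 W) ≤ s * (τ' / 2 * T) := by
        have h3 : (n + 2) * (Real.log (L1 P) + R) ≤ τ' / 2 * T := by
          calc (n + 2) * (Real.log (L1 P) + R) = τ' / 2 * (2 / τ' * ((n + 2) * (Real.log (L1 P) + R))) := by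
                field_simp
            _ ≤ _ := by gcongr
        have h4 : (s : ℝ) * ((n + 2) * (Real.log (L1 P) + R)) ≤ s * (τ' / 2 * T) := by gcongr
        have : (0 : ℝ) ≤ s * R := by positivity
        linarith
      have h5 : (k : ℝ) * Real.log (ξ j).den ≤ (s * (τ' / 2) * r j) * Real.log (ξ j).den := by
        have : s * (τ' / 2 * T) ≤ s * (τ' / 2 * (r j * Real.log (ξ j).den)) := by
          have := hT j
          gcongr
        nlinarith
      have h6 := le_of_mul_le_mul_right h5 hq
      have h7 : (k : ℝ) / r j ≤ s * (τ' / 2) := by rw [div_le_iff₀ (hrpos j)]; exact h6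
      have : 0 < s * τ' := by positivity
      linarith
    -- the nonvanishing coefficient
    have hcU : coeff l (sh ξ U) ≠ 0 := by
      intro h
      have := congrArg (fun Q => coeff l (sh ξ Q)) hU1
      simp only [coeff_sh_smul] at this
      rw [h, mul_zero] at this
      exact (mul_ne_zero (by exact_mod_cast hD0) hl2) this
    have hcV : coeff (Finsupp.single j k) (sh ξ V) ≠ 0 := by
      intro h
      have := congrArg (fun Q => coeff (Finsupp.single j k) (sh ξ Q)) hV1
      simp only [coeff_sh_smul] at this
      rw [h, mul_zero] at this
      exact (mul_ne_zero (by exact_mod_cast hD0) hk1) this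
    have hcW : coeff (l + Finsupp.single j k) (sh ξ W) ≠ 0 := by
      intro h
      have h1 := congrArg (fun Q => coeff (l + Finsupp.single j k) (sh ξ Q)) hDW
      simp only [coeff_sh_smul, map_mul] at h1
      rw [h, mul_zero, coeff_mul_sep hST (hUS.sh ξ) (hVS'.sh ξ) _ _ ((hUS.sh ξ) l hcU)
        ((hVS'.sh ξ) _ hcV)] at h1
      exact mul_ne_zero hcU hcV h1.symm
    by_contra hcon
    push Not at hcon
    have hWGE : WGE (fun i => 1 / (r i : ℝ)) τ₀ (sh ξ P) := by
      intro l hl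
      by_contra h
      push Not at h
      exact hl (hcon l (by linarith))
    have hdet : WGE (fun i => 1 / (r i : ℝ)) (∑ k : Fin s, max 0 (τ₀ / 2 - (k : ℕ) / r j)) (sh ξ W) := by
      rw [hW, RingHom.map_det]
      apply WGE.det
      intro i k
      rw [RingHom.mapMatrix_apply, Matrix.map_apply, Matrix.of_apply]
      refine entry_wge hr1 (ρ := min ρ' (τ₀ / 2)) (by positivity) (fun a ha => hrρ a j ?_) hWGE (min_le_right _ _) (sμ i) (sν k) ?_ (hν k)
      · have ha' : (a : ℕ) < m := ha
        simpa [hjdef, Fin.lt_def] using ha'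
      · have := hμ i; have := i.2; omega
    have h1 := hdet _ hcW
    have h2 := sum_max_bound s (r j) (hr1 j) (by have := hr1 j; omega) τ₀ hτ₀0 hτ₀1
    have h3 : ∑ i, 1 / (r i : ℝ) * ((l + Finsupp.single j k : Fin n →₀ ℕ) i : ℝ) =
        ∑ i, 1 / (r i : ℝ) * l i + k / r j := by
      simp only [Finsupp.add_apply, Nat.cast_add, mul_add, Finset.sum_add_distrib]
      congr 1
      rw [Finset.sum_eq_single j]
      · simp; ring
      · intro i _ hi
        rw [Finsupp.single_apply, if_neg (Ne.symm hi)]; simp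
      · simp
    rw [h3] at h1
    have h4 : s * τ₀ ^ 2 / 32 = 2 * (s * τ') := by rw [hτ']; ring
    linarith

end

end RothAux


namespace RothAux

noncomputable section

lemma int_powers (α : ℝ) (hα : IsIntegral ℤ α) : ∃ (d : ℕ) (B : ℕ), 1 ≤ B ∧ 1 ≤ d ∧
    ∃ A : ℕ → Fin d → ℤ, (∀ k, α ^ k = ∑ i, (A k i : ℝ) * α ^ (i : ℕ)) ∧ ∀ k i, |A k i| ≤ (B : ℤ) ^ k := by
  obtain ⟨p, hp, hroot⟩ := hα
  have hd : p.natDegree ≠ 0 := by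
    intro h
    have := hp.natDegree_eq_zero.mp h
    rw [this] at hroot
    simp at hroot
  obtain ⟨e, he⟩ := Nat.exists_eq_succ_of_ne_zero hd
  have hq : α ^ (e + 1) = ∑ i : Fin (e + 1), ((-(p.coeff i) : ℤ) : ℝ) * α ^ (i : ℕ) := by
    rw [hp.as_sum, Polynomial.eval₂_add, Polynomial.eval₂_finsetSum] at hroot
    simp only [Polynomial.eval₂_pow, Polynomial.eval₂_X, Polynomial.eval₂_mul, Polynomial.eval₂_C] at hroot
    rw [he, Finset.sum_range] at hroot
    simp only [Int.cast_neg, neg_mul, Finset.sum_neg_distrib]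
    simp only [eq_intCast, Nat.succ_eq_add_one] at hroot
    linarith
  obtain ⟨H, hH⟩ : ∃ H : ℕ, ∀ i : Fin (e + 1), |p.coeff i| ≤ (H : ℤ) := by
    refine ⟨∑ i : Fin (e + 1), (p.coeff i).natAbs, fun i => ?_⟩
    rw [Int.abs_eq_natAbs]
    exact_mod_cast Finset.single_le_sum (f := fun i : Fin (e + 1) => (p.coeff i).natAbs) (fun _ _ => Nat.zero_le _) (Finset.mem_univ i)
  refine ⟨e + 1, 1 + H, by omega, by omega, ?_⟩
  have key : ∀ k, ∃ A : Fin (e + 1) → ℤ, (α ^ k = ∑ i, (A i : ℝ) * α ^ (i : ℕ)) ∧ ∀ i, |A i| ≤ ((1 + H : ℕ) : ℤ) ^ k := by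
    intro k
    induction k with
    | zero =>
      refine ⟨Fin.cons 1 0, ?_, ?_⟩
      · rw [Fin.sum_univ_succ]; simp
      · intro i
        refine Fin.cases ?_ (fun i => ?_) i <;> simp
    | succ k ih =>
      obtain ⟨A, h1, h2⟩ := ih
      refine ⟨fun i => (Fin.cons 0 (fun i : Fin e => A i.castSucc) : Fin (e + 1) → ℤ) i + A (Fin.last e) * (-(p.coeff i)), ?_, ?_⟩
      · have e1 : ∑ i : Fin (e + 1), (((Fin.cons 0 (fun i : Fin e => A i.castSucc) : Fin (e + 1) → ℤ) i : ℤ) : ℝ) * α ^ (i : ℕ)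
            = ∑ i : Fin e, (A i.castSucc : ℝ) * α ^ ((i : ℕ) + 1) := by
          rw [Fin.sum_univ_succ]; simp
        have e2 : α ^ (k + 1) = ∑ i : Fin e, (A i.castSucc : ℝ) * α ^ ((i : ℕ) + 1) + A (Fin.last e) * α ^ (e + 1) := by
          rw [pow_succ, h1, Fin.sum_univ_castSucc, add_mul, Finset.sum_mul]
          simp only [Fin.val_castSucc, Fin.val_last, pow_succ, mul_assoc]
        rw [e2, hq, ← e1, Finset.mul_sum, ← Finset.sum_add_distrib]
        apply Finset.sum_congr rfl
        intro i _
        push_cast; ring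
      · intro i
        have hb : |(Fin.cons 0 (fun i : Fin e => A i.castSucc) : Fin (e + 1) → ℤ) i| ≤ ((1 + H : ℕ) : ℤ) ^ k := by
          refine Fin.cases ?_ (fun i => ?_) i
          · simp; positivity
          · simpa using h2 i.castSucc
        refine (abs_add_le _ _).trans ?_
        rw [abs_mul, abs_neg]
        have := h2 (Fin.last e)
        have h3 := hH i
        calc _ ≤ ((1 + H : ℕ) : ℤ) ^ k + ((1 + H : ℕ) : ℤ) ^ k * H := by gcongr
          _ = _ := by push_cast; ring
  choose A hA using key
  exact ⟨A, fun k => (hA k).1, fun k => (hA k).2⟩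

lemma exp_avg (r : ℕ) (hr : 1 ≤ r) (lam : ℝ) (hl : 0 ≤ lam) :
    ∑ k : Fin (r + 1), Real.exp (lam * (1 / 2 - (k : ℕ) / r)) ≤ (r + 1) * Real.exp (lam ^ 2 / 8) := by
  have hr0 : (0 : ℝ) < r := by exact_mod_cast hr
  have h1 : ∑ k : Fin (r + 1), Real.exp (lam * (1 / 2 - (k : ℕ) / r)) =
      ∑ k : Fin (r + 1), Real.exp (-(lam * (1 / 2 - (k : ℕ) / r))) := by
    rw [← Equiv.sum_comp Fin.revPerm]
    apply Finset.sum_congr rfl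
    intro k _
    congr 1
    have hk : (k : ℕ) ≤ r := Nat.lt_succ_iff.mp k.2
    have : ((Fin.revPerm k : Fin (r + 1)) : ℕ) = r - k := by simp [Fin.val_rev]
    rw [this, Nat.cast_sub hk]
    field_simp
    ring
  have h2 : ∑ k : Fin (r + 1), Real.exp (lam * (1 / 2 - (k : ℕ) / r)) =
      ∑ k : Fin (r + 1), Real.cosh (lam * (1 / 2 - (k : ℕ) / r)) := by
    simp only [Real.cosh_eq]
    rw [← Finset.sum_div, Finset.sum_add_distrib, ← h1]; ring
  rw [h2]
  have h3 : ∀ k ∈ (Finset.univ : Finset (Fin (r + 1))), Real.cosh (lam * (1 / 2 - (k : ℕ) / r)) ≤ Real.exp (lam ^ 2 / 8) := by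
    intro k _
    refine (Real.cosh_le_exp_half_sq _).trans (Real.exp_le_exp.mpr ?_)
    have hk : ((k : ℕ) : ℝ) ≤ r := by exact_mod_cast Nat.lt_succ_iff.mp k.2
    have h0 : (0 : ℝ) ≤ (k : ℕ) / r := by positivity
    have h4 : ((k : ℕ) : ℝ) / r ≤ 1 := by rw [div_le_one hr0]; exact hk
    have : (1 / 2 - ((k : ℕ) : ℝ) / r) ^ 2 ≤ 1 / 4 := by nlinarith
    rw [mul_pow]
    nlinarith [sq_nonneg lam]
  refine (Finset.sum_le_sum h3).trans ?_
  simp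

lemma count_small {n : ℕ} (r : Fin n → ℕ) (hr : ∀ i, 1 ≤ r i) (ε : ℝ) (hε : 0 < ε) :
    ((Finset.univ.filter fun μ : (∀ i, Fin (r i + 1)) => ∑ i, 1 / (r i : ℝ) * (μ i : ℕ) < n / 2 - ε * n).card : ℝ)
      ≤ (Fintype.card (∀ i, Fin (r i + 1)) : ℝ) * Real.exp (-(2 * ε ^ 2 * n)) := by
  have h1 : ((Finset.univ.filter fun μ : (∀ i, Fin (r i + 1)) => ∑ i, 1 / (r i : ℝ) * (μ i : ℕ) < n / 2 - ε * n).card : ℝ)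
      ≤ ∑ μ : (∀ i, Fin (r i + 1)), Real.exp (4 * ε * (n / 2 - ε * n - ∑ i, 1 / (r i : ℝ) * (μ i : ℕ))) := by
    rw [Finset.card_filter]
    push_cast
    apply Finset.sum_le_sum
    intro μ _
    split_ifs with h
    · apply Real.one_le_exp
      apply mul_nonneg (by positivity); linarith
    · positivity
  refine h1.trans ?_
  have h2 : ∀ μ : (∀ i, Fin (r i + 1)), Real.exp (4 * ε * (n / 2 - ε * n - ∑ i, 1 / (r i : ℝ) * (μ i : ℕ))) =
      Real.exp (-(4 * ε ^ 2 * n)) * ∏ i, Real.exp (4 * ε * (1 / 2 - ((μ i : ℕ) : ℝ) / r i)) := by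
    intro μ
    rw [← Real.exp_sum, ← Real.exp_add]
    congr 1
    rw [← Finset.mul_sum, Finset.sum_sub_distrib]
    simp only [Finset.sum_const, Finset.card_univ, Fintype.card_fin, nsmul_eq_mul]
    have : ∑ i, 1 / (r i : ℝ) * ((μ i : ℕ) : ℝ) = ∑ i, ((μ i : ℕ) : ℝ) / r i :=
      Finset.sum_congr rfl fun i _ => by ring
    rw [this]; ring
  rw [Finset.sum_congr rfl fun μ _ => h2 μ, ← Finset.mul_sum]
  have h3 : ∑ μ : (∀ i, Fin (r i + 1)), ∏ i, Real.exp (4 * ε * (1 / 2 - ((μ i : ℕ) : ℝ) / r i)) =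
      ∏ i, ∑ k : Fin (r i + 1), Real.exp (4 * ε * (1 / 2 - ((k : ℕ) : ℝ) / r i)) := by
    rw [Finset.prod_univ_sum, Fintype.piFinset_univ]
  rw [h3]
  have h4 : ∏ i, ∑ k : Fin (r i + 1), Real.exp (4 * ε * (1 / 2 - ((k : ℕ) : ℝ) / r i)) ≤
      ∏ i, (((r i : ℝ) + 1) * Real.exp ((4 * ε) ^ 2 / 8)) :=
    Finset.prod_le_prod (fun i _ => by positivity) fun i _ => exp_avg (r i) (hr i) (4 * ε) (by positivity)
  refine (mul_le_mul_of_nonneg_left h4 (Real.exp_pos _).le).trans (le_of_eq ?_)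
  rw [Finset.prod_mul_distrib, Finset.prod_const, Finset.card_univ, Fintype.card_fin, ← Real.exp_nat_mul,
    Fintype.card_pi]
  simp only [Fintype.card_fin]
  push_cast
  rw [mul_comm, mul_assoc, ← Real.exp_add]
  congr 2
  ring

end

end RothAux


namespace RothAux
open MvPolynomial

noncomputable section

lemma siegel {a b : Type} [Fintype a] [Fintype b] (M : Matrix a b ℤ) (K : ℝ) (hK : 1 ≤ K)
    (hM : ∀ i j, |(M i j : ℝ)| ≤ K) (h : 2 * Fintype.card a ≤ Fintype.card b) (ha : 0 < Fintype.card a) :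
    ∃ t : b → ℤ, t ≠ 0 ∧ M.mulVec t = 0 ∧ ∀ j, |(t j : ℝ)| ≤ Fintype.card b * K := by
  let _ : SeminormedAddCommGroup (Matrix a b ℤ) := Matrix.seminormedAddCommGroup
  obtain ⟨t, h0, h1, h2⟩ := Int.Matrix.exists_ne_zero_int_vec_norm_le M (by omega) ha
  refine ⟨t, h0, h1, fun j => ?_⟩
  have h3 : ‖M‖ ≤ K := by
    rw [Matrix.norm_le_iff (by linarith)]
    intro i j
    rw [Int.norm_eq_abs]; exact hM i j
  have h4 : |(t j : ℝ)| ≤ ‖t‖ := by rw [← Int.norm_eq_abs]; exact norm_le_pi_norm t j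
  refine (h4.trans h2).trans ?_
  have hb1 : (1 : ℝ) ≤ Fintype.card b := by
    have : 1 ≤ Fintype.card b := by omega
    exact_mod_cast this
  have h5 : (Fintype.card b : ℝ) * max 1 ‖M‖ ≤ Fintype.card b * K := by
    gcongr
    exact max_le hK h3
  refine le_trans ?_ h5
  have hbase : 1 ≤ (Fintype.card b : ℝ) * max 1 ‖M‖ := by
    nlinarith [le_max_left 1 ‖M‖]
  have hexp : (Fintype.card a : ℝ) / (Fintype.card b - Fintype.card a) ≤ 1 := by
    have h6 : (2 : ℝ) * Fintype.card a ≤ Fintype.card b := by exact_mod_cast h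
    have h7 : (0 : ℝ) < Fintype.card a := by exact_mod_cast ha
    rw [div_le_one (by linarith)]; linarith
  calc _ ≤ ((Fintype.card b : ℝ) * max 1 ‖M‖) ^ (1 : ℝ) := Real.rpow_le_rpow_of_exponent_le hbase hexp
    _ = _ := Real.rpow_one _

/-- box index to exponent vector -/
def bx {n : ℕ} {r : Fin n → ℕ} (ν : ∀ i, Fin (r i + 1)) : Fin n →₀ ℕ :=
  Finsupp.equivFunOnFinite.symm fun i => (ν i : ℕ)

lemma bx_apply {n : ℕ} {r : Fin n → ℕ} (ν : ∀ i, Fin (r i + 1)) (i : Fin n) : bx ν i = (ν i : ℕ) := rfl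

lemma bx_inj {n : ℕ} {r : Fin n → ℕ} : Function.Injective (bx (r := r)) := by
  intro a b h
  funext i
  ext
  exact DFunLike.congr_fun h i

lemma bx_surj {n : ℕ} {r : Fin n → ℕ} (l : Fin n →₀ ℕ) (h : ∀ i, l i ≤ r i) :
    ∃ ν : (∀ i, Fin (r i + 1)), bx ν = l :=
  ⟨fun i => ⟨l i, Nat.lt_succ_of_le (h i)⟩, by ext i; rfl⟩

lemma bx_le {n : ℕ} {r : Fin n → ℕ} (ν : ∀ i, Fin (r i + 1)) (i : Fin n) : bx ν i ≤ r i :=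
  Nat.lt_succ_iff.mp (ν i).2

lemma card_box {n : ℕ} {r : Fin n → ℕ} {R : ℕ} (h : ∀ i, r i ≤ R) :
    (Fintype.card (∀ i, Fin (r i + 1)) : ℝ) ≤ 2 ^ (n * R) := by
  rw [Fintype.card_pi]
  simp only [Fintype.card_fin]
  have : ∏ i, (r i + 1) ≤ 2 ^ (n * R) := by
    have h1 : ∀ i ∈ (Finset.univ : Finset (Fin n)), r i + 1 ≤ 2 ^ R := fun i _ =>
      (Nat.succ_le_succ (h i)).trans Nat.lt_two_pow_self
    refine (Finset.prod_le_prod' h1).trans ?_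
    rw [Finset.prod_const, Finset.card_univ, Fintype.card_fin, ← pow_mul, mul_comm]
  exact_mod_cast this

/-- polynomial with given coefficients in a box -/
def bp {n : ℕ} {r : Fin n → ℕ} (t : (∀ i, Fin (r i + 1)) → ℤ) : MvPolynomial (Fin n) ℤ :=
  ∑ ν, monomial (bx ν) (t ν)

lemma coeff_bp {n : ℕ} {r : Fin n → ℕ} (t : (∀ i, Fin (r i + 1)) → ℤ) (ν : ∀ i, Fin (r i + 1)) :
    coeff (bx ν) (bp t) = t ν := by
  rw [bp, coeff_sum, Finset.sum_eq_single ν]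
  · simp
  · intro b _ hb
    rw [coeff_monomial, if_neg]
    intro h; exact hb (bx_inj h)
  · simp

lemma deg_bp {n : ℕ} {r : Fin n → ℕ} (t : (∀ i, Fin (r i + 1)) → ℤ) : DegLE r (bp t) := by
  intro l hl i
  rw [bp, coeff_sum] at hl
  obtain ⟨ν, _, h2⟩ := Finset.exists_ne_zero_of_sum_ne_zero hl
  rw [coeff_monomial] at h2
  have : bx ν = l := by by_contra h; simp [h] at h2
  rw [← this]; exact bx_le ν i

/-- sum over the support is a sum over the box -/
lemma sum_box {n : ℕ} {r : Fin n → ℕ} {P : MvPolynomial (Fin n) ℤ} (hP : DegLE r P)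
    (F : (Fin n →₀ ℕ) → ℝ) :
    ∑ ν ∈ P.support, ((coeff ν P : ℤ) : ℝ) * F ν = ∑ ν : (∀ i, Fin (r i + 1)), ((coeff (bx ν) P : ℤ) : ℝ) * F (bx ν) := by
  classical
  refine Eq.trans ?_ (Finset.sum_map Finset.univ ⟨bx, bx_inj⟩ (fun ν => ((coeff ν P : ℤ) : ℝ) * F ν))
  apply Finset.sum_subset
  · intro ν hν
    obtain ⟨ν', rfl⟩ := bx_surj ν (hP ν (mem_support_iff.mp hν))
    simp
  · intro ν _ hν
    rw [notMem_support_iff.mp hν]; simp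

/-- Taylor coefficient at a real point -/
def cf {n : ℕ} (z : Fin n → ℝ) (l : Fin n →₀ ℕ) (P : MvPolynomial (Fin n) ℤ) : ℝ :=
  ∑ ν ∈ P.support, ((coeff ν P : ℤ) : ℝ) * ((hc l ν : ℝ) * ∏ i, z i ^ (ν i - l i))

theorem aux_poly (α : ℝ) (hα : IsIntegral ℤ α) (ε : ℝ) (hε : 0 < ε) (hε2 : ε < 1 / 2) :
    ∃ n : ℕ, 1 ≤ n ∧ ∃ C0 : ℝ, 0 < C0 ∧ ∀ (r : Fin n → ℕ) (R : ℕ), (∀ i, 1 ≤ r i) → (∀ i, r i ≤ R) →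
      ∃ P : MvPolynomial (Fin n) ℤ, P ≠ 0 ∧ DegLE r P ∧ Real.log (L1 P) ≤ C0 * R ∧
        ∀ l : Fin n →₀ ℕ, ∑ i, 1 / (r i : ℝ) * l i < n / 2 - ε * n → cf (fun _ => α) l P = 0 := by
  classical
  obtain ⟨d, B, hB, hd, A, hA, hAB⟩ := int_powers α hα
  obtain ⟨n, hn1, hn⟩ : ∃ n : ℕ, 1 ≤ n ∧ d * Real.exp (-(2 * ε ^ 2 * n)) ≤ 1 / 2 := by
    obtain ⟨n, hn⟩ := exists_nat_gt ((2 * d) / (2 * ε ^ 2))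
    rw [div_lt_iff₀ (by positivity)] at hn
    have hd1 : (1 : ℝ) ≤ d := by exact_mod_cast hd
    refine ⟨n, ?_, ?_⟩
    · by_contra h
      have : n = 0 := by omega
      subst this
      simp at hn; linarith
    · have h1 := Real.add_one_le_exp (2 * ε ^ 2 * n)
      rw [Real.exp_neg, ← div_eq_mul_inv, div_le_iff₀ (Real.exp_pos _)]
      linarith
  have hB1 : (1 : ℝ) ≤ B := by exact_mod_cast hB
  have hn0 : (0 : ℝ) < n := by exact_mod_cast hn1
  refine ⟨n, hn1, n * Real.log (8 * B), mul_pos hn0 (Real.log_pos (by linarith)), ?_⟩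
  intro r R hr1 hrR
  set sm := Finset.univ.filter fun μ : (∀ i, Fin (r i + 1)) => ∑ i, 1 / (r i : ℝ) * (μ i : ℕ) < n / 2 - ε * n with hsm
  have hcount := count_small r hr1 ε hε
  rw [← hsm] at hcount
  set N := Fintype.card (∀ i, Fin (r i + 1)) with hN
  let M : Matrix (sm × Fin d) (∀ i, Fin (r i + 1)) ℤ := fun p ν =>
    (hc (bx p.1.1) (bx ν) : ℤ) * A (∑ i, (bx ν i - bx p.1.1 i)) p.2
  have hMb : ∀ p ν, |(M p ν : ℝ)| ≤ (2 * B) ^ (n * R) := by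
    intro p ν
    have h1 : hc (bx p.1.1) (bx ν) ≤ 2 ^ (n * R) := hc_le _ _ fun i => (bx_le ν i).trans (hrR i)
    have h2 : |A (∑ i, (bx ν i - bx p.1.1 i)) p.2| ≤ (B : ℤ) ^ (n * R) := by
      refine (hAB _ _).trans ?_
      apply pow_le_pow_right₀ (by exact_mod_cast hB)
      have : ∀ i ∈ (Finset.univ : Finset (Fin n)), bx ν i - bx p.1.1 i ≤ R := fun i _ =>
        (Nat.sub_le _ _).trans ((bx_le ν i).trans (hrR i))
      refine (Finset.sum_le_sum this).trans ?_
      simp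
    have h1' : (hc (bx p.1.1) (bx ν) : ℝ) ≤ 2 ^ (n * R) := by exact_mod_cast h1
    have h2' : |(A (∑ i, (bx ν i - bx p.1.1 i)) p.2 : ℝ)| ≤ (B : ℝ) ^ (n * R) := by exact_mod_cast h2
    simp only [M]
    push_cast
    rw [abs_mul, Nat.abs_cast, mul_pow]
    gcongr
  have hcard : 2 * Fintype.card (sm × Fin d) ≤ N := by
    rw [Fintype.card_prod, Fintype.card_fin, Fintype.card_coe]
    have : (2 : ℝ) * (sm.card * d) ≤ N := by
      have hN0 : (0 : ℝ) ≤ N := Nat.cast_nonneg _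
      calc (2 : ℝ) * (sm.card * d) ≤ 2 * ((N * Real.exp (-(2 * ε ^ 2 * n))) * d) := by gcongr
        _ = 2 * N * (d * Real.exp (-(2 * ε ^ 2 * n))) := by ring
        _ ≤ 2 * N * (1 / 2) := by gcongr
        _ = N := by ring
    exact_mod_cast this
  have hcard0 : 0 < Fintype.card (sm × Fin d) := by
    rw [Fintype.card_prod, Fintype.card_fin, Fintype.card_coe]
    apply Nat.mul_pos _ hd
    apply Finset.card_pos.mpr
    refine ⟨fun i => 0, ?_⟩
    rw [hsm, Finset.mem_filter]
    refine ⟨Finset.mem_univ _, ?_⟩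
    simp
    nlinarith
  obtain ⟨t, ht0, ht1, ht2⟩ := siegel M ((2 * B) ^ (n * R)) (one_le_pow₀ (by linarith)) hMb hcard hcard0
  rw [← hN] at ht2
  have hNb : (N : ℝ) ≤ 2 ^ (n * R) := card_box hrR
  have hP0 : bp t ≠ 0 := by
    obtain ⟨ν, hν⟩ := Function.ne_iff.mp ht0
    apply MvPolynomial.ne_zero_iff.mpr
    exact ⟨bx ν, by rw [coeff_bp]; exact hν⟩
  refine ⟨bp t, hP0, deg_bp t, ?_, ?_⟩
  · have h1 : L1 (bp t) ≤ (8 * B) ^ (n * R) := by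
      refine (L1_sum _ _).trans ?_
      simp_rw [L1_monomial]
      refine (Finset.sum_le_sum fun ν _ => ht2 ν).trans ?_
      rw [Finset.sum_const, Finset.card_univ, ← hN, nsmul_eq_mul]
      calc (N : ℝ) * (N * (2 * B) ^ (n * R)) ≤ 2 ^ (n * R) * (2 ^ (n * R) * (2 * B) ^ (n * R)) := by gcongr
        _ = _ := by rw [← mul_pow, ← mul_pow]; congr 1; ring
    have h2 := Real.log_le_log (by linarith [one_le_L1 hP0]) h1
    rw [Real.log_pow] at h2
    push_cast at h2
    linarith
  · intro l hl
    by_cases hlr : ∀ i, l i ≤ r i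
    · obtain ⟨μ, rfl⟩ := bx_surj l hlr
      have hμ : μ ∈ sm := by
        rw [hsm, Finset.mem_filter]; exact ⟨Finset.mem_univ _, hl⟩
      rw [cf, sum_box (deg_bp t)]
      have h1 : ∀ ν : (∀ i, Fin (r i + 1)), ((coeff (bx ν) (bp t) : ℤ) : ℝ) * ((hc (bx μ) (bx ν) : ℝ) * ∏ i, α ^ (bx ν i - bx μ i))
          = ∑ k : Fin d, ((M (⟨μ, hμ⟩, k) ν * t ν : ℤ) : ℝ) * α ^ (k : ℕ) := by
        intro ν
        rw [coeff_bp, Finset.prod_pow_eq_pow_sum, hA, Finset.mul_sum, Finset.mul_sum]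
        apply Finset.sum_congr rfl
        intro k _
        simp only [M]
        push_cast
        ring
      rw [Finset.sum_congr rfl fun ν _ => h1 ν, Finset.sum_comm]
      apply Finset.sum_eq_zero
      intro k _
      rw [← Finset.sum_mul, ← Int.cast_sum]
      have h2 := congrFun ht1 (⟨μ, hμ⟩, k)
      rw [Matrix.mulVec, dotProduct] at h2
      rw [h2]; simp
    · rw [cf]
      apply Finset.sum_eq_zero
      intro ν hν
      rw [hc_eq_zero]
      · simp
      · intro h
        exact hlr fun i => (h i).trans (deg_bp t ν (mem_support_iff.mp hν) i)

end

end RothAux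


namespace RothAux
open MvPolynomial

noncomputable section

variable {n : ℕ}

lemma cf_rat (ξ : Fin n → ℚ) (l : Fin n →₀ ℕ) (P : MvPolynomial (Fin n) ℤ) :
    ((coeff l (sh ξ P) : ℚ) : ℝ) = cf (fun i => (ξ i : ℝ)) l P := by
  rw [coeff_sh, cf]
  push_cast
  rfl

lemma den_pow_int (x : ℚ) {e r : ℕ} (h : e ≤ r) : ∃ z : ℤ, (x.den : ℚ) ^ r * x ^ e = z := by
  refine ⟨(x.den : ℤ) ^ (r - e) * x.num ^ e, ?_⟩
  obtain ⟨k, rfl⟩ := Nat.exists_eq_add_of_le h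
  have : (x.num : ℚ) = x.den * x := (Rat.den_mul_eq_num x).symm
  push_cast
  rw [Nat.add_sub_cancel_left, pow_add, this, mul_pow]
  ring

lemma lower (ξ : Fin n → ℚ) (l : Fin n →₀ ℕ) {P : MvPolynomial (Fin n) ℤ} {r : Fin n → ℕ} (hP : DegLE r P)
    (h0 : coeff l (sh ξ P) ≠ 0) :
    1 ≤ (∏ i, ((ξ i).den : ℝ) ^ r i) * |cf (fun i => (ξ i : ℝ)) l P| := by
  obtain ⟨z, hz⟩ : ∃ z : ℤ, (∏ i, ((ξ i).den : ℚ) ^ r i) * coeff l (sh ξ P) = z := by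
    rw [coeff_sh, Finset.mul_sum]
    have : ∀ ν ∈ P.support, ∃ z : ℤ, (∏ i, ((ξ i).den : ℚ) ^ r i) * (((coeff ν P : ℤ) : ℚ) * ((hc l ν : ℚ) * ∏ i, ξ i ^ (ν i - l i))) = z := by
      intro ν hν
      choose z hz using fun i => den_pow_int (ξ i) (e := ν i - l i) (r := r i)
        ((Nat.sub_le _ _).trans (hP ν (mem_support_iff.mp hν) i))
      refine ⟨coeff ν P * hc l ν * ∏ i, z i, ?_⟩
      push_cast
      rw [← Finset.prod_congr rfl fun i _ => hz i, Finset.prod_mul_distrib]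
      ring
    choose! z hz using this
    exact ⟨∑ ν ∈ P.support, z ν, by rw [Finset.sum_congr rfl hz]; push_cast; rfl⟩
  have hz0 : z ≠ 0 := by
    rintro rfl
    rw [Int.cast_zero] at hz
    rcases mul_eq_zero.mp hz with h | h
    · rw [Finset.prod_eq_zero_iff] at h
      obtain ⟨i, _, hi⟩ := h
      exact pow_ne_zero _ (by exact_mod_cast (ξ i).den_ne_zero) hi
    · exact h0 h
  have h1 : (1 : ℤ) ≤ |z| := Int.one_le_abs hz0
  have h2 : (1 : ℝ) ≤ |(z : ℝ)| := by exact_mod_cast h1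
  have h3 : (z : ℝ) = (∏ i, ((ξ i).den : ℝ) ^ r i) * cf (fun i => (ξ i : ℝ)) l P := by
    rw [← cf_rat]
    have := congrArg (fun q : ℚ => (q : ℝ)) hz
    push_cast at this
    exact this.symm
  rw [h3, abs_mul, abs_of_nonneg (by positivity)] at h2
  exact h2

lemma univ_taylor (z h : ℝ) (ν μ r : ℕ) (hν : ν ≤ r) :
    (ν.choose μ : ℝ) * (z + h) ^ (ν - μ) =
      ∑ lam : Fin (r + 1), ((ν.choose lam : ℝ) * z ^ (ν - lam)) * ((Nat.choose lam μ : ℝ) * h ^ ((lam : ℕ) - μ)) := by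
  rw [Fin.sum_univ_eq_sum_range (fun lam => ((ν.choose lam : ℝ) * z ^ (ν - lam)) * ((Nat.choose lam μ : ℝ) * h ^ (lam - μ))) (r + 1)]
  by_cases hμ : μ ≤ ν
  · obtain ⟨k, rfl⟩ := Nat.exists_eq_add_of_le hμ
    have h1 : ∑ lam ∈ Finset.range (r + 1), (((μ + k).choose lam : ℝ) * z ^ (μ + k - lam)) * ((Nat.choose lam μ : ℝ) * h ^ (lam - μ))
        = ∑ lam ∈ (Finset.range (k + 1)).map (addLeftEmbedding μ), (((μ + k).choose lam : ℝ) * z ^ (μ + k - lam)) * ((Nat.choose lam μ : ℝ) * h ^ (lam - μ)) := by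
      symm
      apply Finset.sum_subset
      · intro x hx
        simp only [Finset.mem_map, Finset.mem_range, addLeftEmbedding_apply] at hx ⊢
        omega
      · intro x hx hx2
        simp only [Finset.mem_map, Finset.mem_range, addLeftEmbedding_apply, not_exists, not_and] at hx hx2
        by_cases hxμ : x < μ
        · rw [Nat.choose_eq_zero_of_lt hxμ]; simp
        · have : μ + k < x := by
            by_contra hc
            exact hx2 (x - μ) (by omega) (by omega)
          rw [Nat.choose_eq_zero_of_lt this]; simp
    rw [h1, Finset.sum_map, Nat.add_sub_cancel_left, add_comm z h, add_pow, Finset.mul_sum]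
    apply Finset.sum_congr rfl
    intro j hj
    have hjk : j ≤ k := Nat.lt_succ_iff.mp (Finset.mem_range.mp hj)
    simp only [addLeftEmbedding_apply, Nat.add_sub_cancel_left, Nat.add_sub_add_left]
    have h2 := Nat.choose_mul (n := μ + k) (k := μ + j) (s := μ) (by omega)
    rw [Nat.add_sub_cancel_left, Nat.add_sub_cancel_left] at h2
    have h3 : ((μ + k).choose (μ + j) : ℝ) * ((μ + j).choose μ) = (μ + k).choose μ * k.choose j := by exact_mod_cast h2
    linear_combination (-(z ^ (k - j) * h ^ j)) * h3
  · push Not at hμ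
    rw [Nat.choose_eq_zero_of_lt hμ]
    simp only [Nat.cast_zero, zero_mul]
    symm
    apply Finset.sum_eq_zero
    intro x _
    by_cases hx : x < μ
    · rw [Nat.choose_eq_zero_of_lt hx]; simp
    · rw [Nat.choose_eq_zero_of_lt (show ν < x by omega)]; simp

lemma cf_taylor (z h : Fin n → ℝ) (μ : Fin n →₀ ℕ) {P : MvPolynomial (Fin n) ℤ} {r : Fin n → ℕ} (hP : DegLE r P) :
    cf (fun i => z i + h i) μ P = ∑ lam : (∀ i, Fin (r i + 1)), cf z (bx lam) P *
      ((hc μ (bx lam) : ℝ) * ∏ i, h i ^ (bx lam i - μ i)) := by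
  simp only [cf, Finset.sum_mul]
  rw [Finset.sum_comm]
  apply Finset.sum_congr rfl
  intro ν hν
  have hν' := hP ν (mem_support_iff.mp hν)
  simp only [hc]
  push_cast
  have e : ∀ lam : (∀ i, Fin (r i + 1)), ((coeff ν P : ℤ) : ℝ) * ((∏ i, ((ν i).choose (bx lam i) : ℝ)) * ∏ i, z i ^ (ν i - bx lam i)) *
      ((∏ i, ((bx lam i).choose (μ i) : ℝ)) * ∏ i, h i ^ (bx lam i - μ i)) =
      ((coeff ν P : ℤ) : ℝ) * ∏ i, ((((ν i).choose (lam i) : ℝ) * z i ^ (ν i - lam i)) * (((lam i : ℕ).choose (μ i) : ℝ) * h i ^ ((lam i : ℕ) - μ i))) := by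
    intro lam
    simp only [Finset.prod_mul_distrib, bx_apply]
    ring
  rw [Finset.sum_congr rfl fun lam _ => e lam, ← Finset.mul_sum, ← Finset.prod_mul_distrib]
  congr 1
  rw [Finset.prod_congr rfl fun i _ => univ_taylor (z i) (h i) (ν i) (μ i) (r i) (hν' i),
    Finset.prod_univ_sum, Fintype.piFinset_univ]

lemma cf_bound (α : ℝ) (l : Fin n →₀ ℕ) {P : MvPolynomial (Fin n) ℤ} {r : Fin n → ℕ} (hP : DegLE r P) {R : ℕ}
    (hR : ∀ i, r i ≤ R) : |cf (fun _ => α) l P| ≤ L1 P * (2 * (1 + |α|)) ^ (n * R) := by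
  rw [cf, L1, Finset.sum_mul]
  refine (Finset.abs_sum_le_sum_abs _ _).trans (Finset.sum_le_sum fun ν hν => ?_)
  have hν' := hP ν (mem_support_iff.mp hν)
  rw [abs_mul]
  apply mul_le_mul_of_nonneg_left _ (abs_nonneg _)
  rw [abs_mul, Nat.abs_cast, mul_pow, Finset.prod_pow_eq_pow_sum, abs_pow]
  have h1 : (hc l ν : ℝ) ≤ 2 ^ (n * R) := by
    exact_mod_cast hc_le l ν fun i => (hν' i).trans (hR i)
  have h2 : |α| ^ (∑ i, (ν i - l i)) ≤ (1 + |α|) ^ (n * R) := by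
    have h3 : ∑ i, (ν i - l i) ≤ n * R := by
      have : ∀ i ∈ (Finset.univ : Finset (Fin n)), ν i - l i ≤ R := fun i _ =>
        (Nat.sub_le _ _).trans ((hν' i).trans (hR i))
      refine (Finset.sum_le_sum this).trans ?_
      simp
    calc |α| ^ (∑ i, (ν i - l i)) ≤ (1 + |α|) ^ (∑ i, (ν i - l i)) := by gcongr; linarith
      _ ≤ _ := pow_le_pow_right₀ (by linarith [abs_nonneg α]) h3
  gcongr

lemma upper (α : ℝ) (ξ : Fin n → ℚ) (μ : Fin n →₀ ℕ) {P : MvPolynomial (Fin n) ℤ} {r : Fin n → ℕ} (hP : DegLE r P)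
    {R : ℕ} (hR : ∀ i, r i ≤ R) (hr1 : ∀ i, 1 ≤ r i) {ε κ T : ℝ} (hκ : 0 ≤ κ) (hT : 0 ≤ T)
    (hv : ∀ l : Fin n →₀ ℕ, ∑ i, 1 / (r i : ℝ) * l i < n / 2 - ε * n → cf (fun _ => α) l P = 0)
    (hμ : ∑ i, 1 / (r i : ℝ) * μ i < ε * n)
    (hT2 : ∀ i, T ≤ r i * Real.log (ξ i).den)
    (hξ : ∀ i, |α - ξ i| ≤ Real.exp (-(κ * Real.log (ξ i).den))) :
    |cf (fun i => (ξ i : ℝ)) μ P| ≤ L1 P * (8 * (1 + |α|)) ^ (n * R) * Real.exp (-(κ * T * (n / 2 - 2 * ε * n))) := by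
  have e : (fun i => (ξ i : ℝ)) = fun i => (fun _ => α) i + (fun i => (ξ i : ℝ) - α) i := by
    funext i; simp
  rw [e, cf_taylor _ _ _ hP]
  refine (Finset.abs_sum_le_sum_abs _ _).trans ?_
  have key : ∀ lam ∈ (Finset.univ : Finset (∀ i, Fin (r i + 1))), |cf (fun _ => α) (bx lam) P * ((hc μ (bx lam) : ℝ) * ∏ i, ((ξ i : ℝ) - α) ^ (bx lam i - μ i))|
      ≤ L1 P * (2 * (1 + |α|)) ^ (n * R) * (2 ^ (n * R) * Real.exp (-(κ * T * (n / 2 - 2 * ε * n)))) := by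
    intro lam _
    have hL : 0 ≤ L1 P := L1_nonneg P
    by_cases hw : ∑ i, 1 / (r i : ℝ) * bx lam i < n / 2 - ε * n
    · rw [hv _ hw]; simp; positivity
    by_cases hle : μ ≤ bx lam
    · rw [abs_mul, abs_mul, Nat.abs_cast]
      have h1 := cf_bound α (bx lam) hP hR
      have h2 : (hc μ (bx lam) : ℝ) ≤ 2 ^ (n * R) := by
        exact_mod_cast hc_le μ (bx lam) fun i => (bx_le lam i).trans (hR i)
      have h3 : |∏ i, ((ξ i : ℝ) - α) ^ (bx lam i - μ i)| ≤ Real.exp (-(κ * T * (n / 2 - 2 * ε * n))) := by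
        rw [Finset.abs_prod]
        have h4 : ∀ i ∈ (Finset.univ : Finset (Fin n)), |((ξ i : ℝ) - α) ^ (bx lam i - μ i)| ≤
            Real.exp (-(κ * T * (1 / (r i : ℝ) * bx lam i - 1 / (r i : ℝ) * μ i))) := by
          intro i _
          have hri : (0 : ℝ) < r i := by exact_mod_cast hr1 i
          rw [abs_pow, abs_sub_comm]
          calc |α - ξ i| ^ (bx lam i - μ i) ≤ Real.exp (-(κ * Real.log (ξ i).den)) ^ (bx lam i - μ i) := by
                gcongr; exact hξ i
            _ = Real.exp (((bx lam i - μ i : ℕ) : ℝ) * -(κ * Real.log (ξ i).den)) := (Real.exp_nat_mul _ _).symm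
            _ ≤ _ := by
                apply Real.exp_le_exp.mpr
                rw [mul_neg]
                apply neg_le_neg
                have h5 : T / r i ≤ Real.log (ξ i).den := by
                  rw [div_le_iff₀ hri]; linarith [hT2 i]
                have h6 : (1 / (r i : ℝ) * bx lam i - 1 / (r i : ℝ) * μ i) = ((bx lam i - μ i : ℕ) : ℝ) / r i := by
                  rw [Nat.cast_sub (hle i)]; ring
                rw [h6]
                calc κ * T * (((bx lam i - μ i : ℕ) : ℝ) / r i) = ((bx lam i - μ i : ℕ) : ℝ) * (κ * (T / r i)) := by ring
                  _ ≤ _ := by gcongr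
        refine (Finset.prod_le_prod (fun i _ => abs_nonneg _) h4).trans ?_
        rw [← Real.exp_sum, Finset.sum_neg_distrib, ← Finset.mul_sum, Finset.sum_sub_distrib]
        apply Real.exp_le_exp.mpr
        apply neg_le_neg
        apply mul_le_mul_of_nonneg_left _ (by positivity)
        push Not at hw
        linarith
      gcongr
    · rw [hc_eq_zero hle]; simp; positivity
  refine (Finset.sum_le_sum key).trans ?_
  rw [Finset.sum_const, Finset.card_univ, nsmul_eq_mul]
  have hN := card_box hR
  have hL : 0 ≤ L1 P := L1_nonneg P
  calc _ ≤ 2 ^ (n * R) * (L1 P * (2 * (1 + |α|)) ^ (n * R) * (2 ^ (n * R) * Real.exp (-(κ * T * (n / 2 - 2 * ε * n))))) := by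
        gcongr
    _ = L1 P * (2 ^ (n * R) * (2 * (1 + |α|)) ^ (n * R) * 2 ^ (n * R)) * Real.exp (-(κ * T * (n / 2 - 2 * ε * n))) := by ring
    _ = _ := by rw [← mul_pow, ← mul_pow]; congr 3; ring

end

end RothAux


namespace RothAux
open MvPolynomial

noncomputable section

lemma choose_seq (G : ℚ → Prop) (H : ∀ M : ℝ, ∃ x : ℚ, M < x.den ∧ G x) (Q c : ℝ) (hc : 1 ≤ c) :
    ∃ ξ : ℕ → ℚ, (∀ k, G (ξ k)) ∧ (∀ k, Q ≤ Real.log (ξ k).den) ∧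
      ∀ i j, i < j → c * Real.log (ξ i).den ≤ Real.log (ξ j).den := by
  choose g hg1 hg2 using H
  let f : ℕ → ℚ := fun k => Nat.rec (g (Real.exp Q)) (fun _ x => g (Real.exp (c * Real.log x.den))) k
  have hf0 : f 0 = g (Real.exp Q) := rfl
  have hfs : ∀ k, f (k + 1) = g (Real.exp (c * Real.log (f k).den)) := fun k => rfl
  have hlog0 : ∀ k, 0 ≤ Real.log (f k).den := fun k => Real.log_natCast_nonneg _
  have hstep : ∀ k, c * Real.log (f k).den ≤ Real.log (f (k + 1)).den := by
    intro k
    rw [hfs]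
    have := hg1 (Real.exp (c * Real.log (f k).den))
    have h2 := Real.log_le_log (Real.exp_pos _) this.le
    rwa [Real.log_exp] at h2
  have hmono : Monotone fun k => Real.log (f k).den := by
    apply monotone_nat_of_le_succ
    intro k
    have h1 := hstep k
    have h2 := hlog0 k
    nlinarith
  refine ⟨f, ?_, ?_, ?_⟩
  · intro k
    cases k with
    | zero => rw [hf0]; exact hg2 _
    | succ k => rw [hfs]; exact hg2 _
  · intro k
    refine le_trans ?_ (hmono (Nat.zero_le k))
    have := Real.log_le_log (Real.exp_pos _) (hg1 (Real.exp Q)).le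
    rwa [Real.log_exp] at this
  · intro i j hij
    exact (hstep i).trans (hmono hij)

theorem roth_int (α : ℝ) (hα : IsIntegral ℤ α) (κ : ℝ) (hκ : 2 < κ) :
    ¬ ∀ M : ℝ, ∃ x : ℚ, M < x.den ∧ |α - x| ≤ (x.den : ℝ) ^ (-κ) := by
  intro H
  obtain ⟨ε, hεd⟩ : ∃ ε, ε = (κ - 2) / (8 * (κ + 1)) := ⟨_, rfl⟩
  have hε0 : 0 < ε := by rw [hεd]; apply div_pos <;> linarith
  have hε1 : ε * (8 * (κ + 1)) = κ - 2 := by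
    rw [hεd]; field_simp
  have hε2 : ε < 1 / 8 := by nlinarith
  obtain ⟨n, hn1, C0, hC0, haux⟩ := aux_poly α hα ε hε0 (by linarith)
  have hn0 : (0 : ℝ) < n := by exact_mod_cast hn1
  obtain ⟨ρ, hρ0, C, hC, hroth⟩ := roth_lemma (n := n) n le_rfl (ε * n) (by positivity)
  obtain ⟨E, hE⟩ : ∃ E, E = Real.log (8 * (1 + |α|)) := ⟨_, rfl⟩
  have hE0 : 0 < E := by
    rw [hE]; apply Real.log_pos; linarith [abs_nonneg α]
  obtain ⟨Q, hQd⟩ : ∃ Q, Q = 1 + 2 * C * (C0 + 1) + 2 * (C0 + n * E) / (n * ε) := ⟨_, rfl⟩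
  have hQa : 2 * C * (C0 + 1) ≤ Q := by
    rw [hQd]
    have : 0 ≤ 2 * (C0 + n * E) / (n * ε) := by positivity
    linarith
  have hQb : 2 * (C0 + n * E) ≤ Q * (n * ε) := by
    have h1 : 2 * (C0 + n * E) / (n * ε) ≤ Q := by
      rw [hQd]
      have : 0 ≤ 2 * C * (C0 + 1) := by positivity
      linarith
    rwa [div_le_iff₀ (by positivity)] at h1
  have hQ1 : 1 ≤ Q := by
    rw [hQd]
    have : 0 ≤ 2 * (C0 + n * E) / (n * ε) := by positivity
    have : 0 ≤ 2 * C * (C0 + 1) := by positivity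
    linarith
  obtain ⟨ξ, hξG, hξQ, hξc⟩ := choose_seq (fun x => |α - x| ≤ (x.den : ℝ) ^ (-κ)) H Q (max 1 (2 / ρ))
    (le_max_left _ _)
  obtain ⟨q, hq⟩ : ∃ q : ℕ → ℝ, q = fun k => Real.log (ξ k).den := ⟨_, rfl⟩
  have hqQ : ∀ k, Q ≤ q k := fun k => by rw [hq]; exact hξQ k
  have hq0 : ∀ k, 0 < q k := fun k => by linarith [hqQ k]
  obtain ⟨T, hTd⟩ : ∃ T, T = ∑ k ∈ Finset.range n, q k / ε := ⟨_, rfl⟩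
  have hTq : ∀ k, k < n → q k ≤ ε * T := by
    intro k hk
    have h1 : q k / ε ≤ T := by
      rw [hTd]
      exact Finset.single_le_sum (f := fun k => q k / ε) (fun i _ => (div_pos (hq0 i) hε0).le) (Finset.mem_range.mpr hk)
    rw [div_le_iff₀ hε0] at h1
    linarith
  have hT0 : 0 < T := by
    have := hTq 0 hn1
    have := hq0 0
    by_contra h
    push Not at h
    nlinarith
  let r : Fin n → ℕ := fun i => ⌈T / q i⌉₊
  have hr_ge : ∀ i : Fin n, T / q i ≤ r i := fun i => Nat.le_ceil _
  have hr_lt : ∀ i : Fin n, (r i : ℝ) < T / q i + 1 := fun i => Nat.ceil_lt_add_one (div_pos hT0 (hq0 i)).le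
  have hr1 : ∀ i : Fin n, 1 ≤ r i := fun i => Nat.ceil_pos.mpr (div_pos hT0 (hq0 i))
  have hqT : ∀ i : Fin n, q i ≤ T := fun i => by
    have := hTq i i.2
    nlinarith
  have hr2 : ∀ i : Fin n, (r i : ℝ) ≤ 2 * T / q i := by
    intro i
    have h1 := hr_lt i
    have h2 : 1 ≤ T / q i := by rw [le_div_iff₀ (hq0 i)]; linarith [hqT i]
    have h3 : 2 * T / q i = T / q i + T / q i := by ring
    linarith
  have hrT1 : ∀ i : Fin n, T ≤ r i * Real.log (ξ i).den := by
    intro i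
    have := hr_ge i
    rw [div_le_iff₀ (hq0 i)] at this
    rw [hq] at this; exact this
  have hrT2 : ∀ i : Fin n, r i * Real.log (ξ i).den ≤ T * (1 + ε) := by
    intro i
    have h1 := hr_lt i
    have h2 : (r i : ℝ) * q i ≤ (T / q i + 1) * q i := by
      have := hq0 i
      gcongr
    have h3 : (T / q i + 1) * q i = T + q i := by
      have := (hq0 i).ne'
      field_simp
    have h4 := hTq i i.2
    rw [hq] at h2 h3 h4
    simp only at h2 h3 h4
    linarith
  let R : ℕ := ⌊2 * T / Q⌋₊
  have hR : (R : ℝ) ≤ 2 * T / Q := Nat.floor_le (by positivity)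
  have hrR : ∀ i : Fin n, r i ≤ R := by
    intro i
    apply Nat.le_floor
    refine (hr2 i).trans ?_
    have := hqQ i
    gcongr
  have hrρ : ∀ i j : Fin n, i < j → (r j : ℝ) ≤ ρ * r i := by
    intro i j hij
    have h1 := hξc i j hij
    have h2 : 2 / ρ * q i ≤ q j := by
      have e1 : q i = Real.log (ξ i).den := by rw [hq]
      have e2 : q j = Real.log (ξ j).den := by rw [hq]
      rw [← e1, ← e2] at h1
      exact (mul_le_mul_of_nonneg_right (le_max_right _ _) (hq0 i).le).trans h1
    have h3 : 2 * T / q j ≤ ρ * (T / q i) := by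
      have := hq0 i
      calc 2 * T / q j ≤ 2 * T / (2 / ρ * q i) := by gcongr
        _ = ρ * (T / q i) := by field_simp
    calc (r j : ℝ) ≤ 2 * T / q j := hr2 j
      _ ≤ ρ * (T / q i) := h3
      _ ≤ ρ * r i := by have := hr_ge i; gcongr
  obtain ⟨P, hP0, hPd, hPL, hPv⟩ := haux r R hr1 hrR
  have hQ0 : 0 < Q := by linarith
  obtain ⟨μ, hμ1, hμ2⟩ := hroth r R (fun i => ξ i) T P hP0 hr1 hrR hrρ hrT1 (by
      calc C * (Real.log (L1 P) + R) ≤ C * (C0 * R + R) := by gcongr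
        _ = C * (C0 + 1) * R := by ring
        _ ≤ C * (C0 + 1) * (2 * T / Q) := by gcongr
        _ = (2 * C * (C0 + 1)) / Q * T := by ring
        _ ≤ 1 * T := by
          gcongr
          rw [div_le_one hQ0]; exact hQa
        _ = T := one_mul T) hPd (fun ν _ i hi => absurd i.2 hi)
  have hlow := lower (fun i : Fin n => ξ i) μ hPd hμ2
  have hup := upper α (fun i : Fin n => ξ i) μ hPd hrR hr1 (κ := κ) (by linarith) hT0.le hPv hμ1 hrT1 (by
    intro i
    refine (hξG i).trans (le_of_eq ?_)
    have hd : (0 : ℝ) < (ξ i).den := by exact_mod_cast (ξ i).den_pos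
    rw [Real.rpow_def_of_pos hd]
    congr 1; ring)
  have hprod : ∏ i : Fin n, ((ξ i).den : ℝ) ^ r i ≤ Real.exp (n * (T * (1 + ε))) := by
    have h1 : ∀ i ∈ (Finset.univ : Finset (Fin n)), ((ξ i).den : ℝ) ^ r i ≤ Real.exp (T * (1 + ε)) := by
      intro i _
      have hd : (0 : ℝ) < (ξ i).den := by exact_mod_cast (ξ i).den_pos
      rw [← Real.exp_log (pow_pos hd (r i)), Real.log_pow]
      exact Real.exp_le_exp.mpr (hrT2 i)
    refine (Finset.prod_le_prod (fun i _ => by positivity) h1).trans ?_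
    rw [Finset.prod_const, Finset.card_univ, Fintype.card_fin, ← Real.exp_nat_mul]
  have hL1 : 1 ≤ L1 P := one_le_L1 hP0
  have hbase : 0 < 8 * (1 + |α|) := by linarith [abs_nonneg α]
  have hfin : (1 : ℝ) ≤ Real.exp (n * (T * (1 + ε)) + (C0 * R + n * R * E) - κ * T * (n / 2 - 2 * ε * n)) := by
    have h1 : L1 P ≤ Real.exp (C0 * R) := by
      rw [← Real.exp_log (lt_of_lt_of_le one_pos hL1)]; exact Real.exp_le_exp.mpr hPL
    have h2 : (8 * (1 + |α|)) ^ (n * R) = Real.exp (n * R * E) := by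
      rw [← Real.exp_log (pow_pos hbase _), Real.log_pow, hE]; push_cast; rfl
    rw [h2] at hup
    calc (1 : ℝ) ≤ _ := hlow
      _ ≤ Real.exp (n * (T * (1 + ε))) * (L1 P * Real.exp (n * R * E) * Real.exp (-(κ * T * (n / 2 - 2 * ε * n)))) := by
          gcongr
      _ ≤ Real.exp (n * (T * (1 + ε))) * (Real.exp (C0 * R) * Real.exp (n * R * E) * Real.exp (-(κ * T * (n / 2 - 2 * ε * n)))) := by
          gcongr
      _ = _ := by
          rw [← Real.exp_add, ← Real.exp_add, ← Real.exp_add]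
          congr 1; ring
  have hexp : 0 ≤ n * (T * (1 + ε)) + (C0 * R + n * R * E) - κ * T * (n / 2 - 2 * ε * n) := by
    by_contra h
    push Not at h
    have := Real.exp_lt_exp.mpr h
    rw [Real.exp_zero] at this
    linarith
  have hR2 : C0 * R + n * R * E ≤ n * ε * T := by
    calc C0 * R + n * R * E = (C0 + n * E) * R := by ring
      _ ≤ (C0 + n * E) * (2 * T / Q) := by gcongr
      _ = (2 * (C0 + n * E)) / Q * T := by ring
      _ ≤ (n * ε) * T := by
        gcongr
        rw [div_le_iff₀ hQ0]; linarith
  have h3 : 0 ≤ n * T * ((1 + 2 * ε) - κ * (1 / 2 - 2 * ε)) := by nlinarith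
  have h4 : 0 ≤ (1 + 2 * ε) - κ * (1 / 2 - 2 * ε) := by
    by_contra h
    push Not at h
    have : 0 < n * T := by positivity
    nlinarith
  nlinarith

theorem roth (L : ℝ) (hL : IsAlgebraic ℚ L) (κ : ℝ) (hκ : 2 < κ) (C : ℝ) :
    ∃ M : ℝ, ∀ x : ℚ, |L - x| ≤ C * (x.den : ℝ) ^ (-κ) → (x.den : ℝ) ≤ M := by
  by_contra hcon
  push Not at hcon
  have hLZ : IsAlgebraic ℤ L := (IsFractionRing.isAlgebraic_iff ℤ ℚ ℝ).mpr hL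
  obtain ⟨y, hy0, hy⟩ := hLZ.exists_integral_multiple
  obtain ⟨κ', hκ'1, hκ'2⟩ := exists_between hκ
  have hint : IsIntegral ℤ ((y : ℝ) * L) := by
    simpa [zsmul_eq_mul] using hy
  have hyR : (y : ℝ) ≠ 0 := by exact_mod_cast hy0
  have hyQ : (y : ℚ) ≠ 0 := by exact_mod_cast hy0
  apply roth_int _ hint κ' hκ'1
  intro M
  -- large denominators
  obtain ⟨K, hK⟩ : ∃ K : ℝ, ∀ q : ℝ, K ≤ q → |(y : ℝ)| * |C| ≤ q ^ (κ - κ') := by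
    have := (tendsto_rpow_atTop (show 0 < κ - κ' by linarith)).eventually_ge_atTop (|(y : ℝ)| * |C|)
    exact Filter.eventually_atTop.mp this
  obtain ⟨x, hx1, hx2⟩ := hcon (max (max K 1) (|(y : ℝ)| * |M|))
  have hden : (0 : ℝ) < x.den := by exact_mod_cast x.den_pos
  have hdvd : ((y : ℚ) * x).den ∣ x.den := by
    have := Rat.mul_den_dvd (y : ℚ) x
    simpa using this
  have hle : ((y : ℚ) * x).den ≤ x.den := Nat.le_of_dvd x.den_pos hdvd
  have hdvd2 : x.den ∣ y.natAbs * ((y : ℚ) * x).den := by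
    have h1 : x = (y : ℚ)⁻¹ * ((y : ℚ) * x) := by field_simp
    have h2 := Rat.mul_den_dvd (y : ℚ)⁻¹ ((y : ℚ) * x)
    rw [← h1] at h2
    have h3 : ((y : ℚ)⁻¹).den = y.natAbs := by
      rw [Rat.inv_intCast_den]; simp [hy0]
    rwa [h3] at h2
  have hpos : 0 < ((y : ℚ) * x).den := ((y : ℚ) * x).den_pos
  have hle2 : x.den ≤ y.natAbs * ((y : ℚ) * x).den :=
    Nat.le_of_dvd (Nat.mul_pos (Int.natAbs_pos.mpr hy0) hpos) hdvd2
  have hle2' : (x.den : ℝ) ≤ |(y : ℝ)| * (((y : ℚ) * x).den : ℝ) := by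
    have : (x.den : ℝ) ≤ (y.natAbs : ℝ) * (((y : ℚ) * x).den : ℝ) := by exact_mod_cast hle2
    rwa [Nat.cast_natAbs, Int.cast_abs] at this
  refine ⟨(y : ℚ) * x, ?_, ?_⟩
  · have h1 : |(y : ℝ)| * |M| < |(y : ℝ)| * (((y : ℚ) * x).den : ℝ) :=
      lt_of_lt_of_le (lt_of_le_of_lt (le_max_right _ _) hx2) hle2'
    have h2 := lt_of_mul_lt_mul_left h1 (abs_nonneg _)
    exact lt_of_le_of_lt (le_abs_self M) h2
  · push_cast
    rw [← mul_sub, abs_mul]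
    have hKx : K ≤ x.den := ((le_max_left _ _).trans (le_max_left _ _)).trans hx2.le
    have h1 := hK _ hKx
    have hq1 : (1 : ℝ) ≤ x.den := by exact_mod_cast x.den_pos
    calc |(y : ℝ)| * |L - x| ≤ |(y : ℝ)| * (C * (x.den : ℝ) ^ (-κ)) := by gcongr
      _ ≤ |(y : ℝ)| * (|C| * (x.den : ℝ) ^ (-κ)) := by gcongr; exact le_abs_self C
      _ = (|(y : ℝ)| * |C|) * (x.den : ℝ) ^ (-κ) := by ring
      _ ≤ (x.den : ℝ) ^ (κ - κ') * (x.den : ℝ) ^ (-κ) := by gcongr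
      _ = (x.den : ℝ) ^ (-κ') := by rw [← Real.rpow_add hden]; congr 1; ring
      _ ≤ _ := by
        apply Real.rpow_le_rpow_of_nonpos
        · exact_mod_cast hpos
        · exact_mod_cast hle
        · linarith

end

end RothAux


namespace RothAux

noncomputable section

lemma last_index (S : ℕ → ℕ) {i0 n : ℕ} (h0 : i0 ≤ n) (h1 : S i0 ≤ 2 ^ i0) (h2 : 2 ^ n < S n) :
    ∃ i, i0 ≤ i ∧ i < n ∧ S i ≤ 2 ^ i ∧ ∀ j, i < j → j ≤ n → 2 ^ j < S j := by
  classical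
  refine ⟨Nat.findGreatest (fun i => S i ≤ 2 ^ i) n, Nat.le_findGreatest h0 h1, ?_, ?_, ?_⟩
  · have h3 : S (Nat.findGreatest (fun i => S i ≤ 2 ^ i) n) ≤ 2 ^ (Nat.findGreatest (fun i => S i ≤ 2 ^ i) n) :=
      Nat.findGreatest_spec (P := fun i => S i ≤ 2 ^ i) h0 h1
    have h4 := Nat.findGreatest_le (P := fun i => S i ≤ 2 ^ i) n
    rcases h4.lt_or_eq with h | h
    · exact h
    · rw [h] at h3; omega
  · exact Nat.findGreatest_spec (P := fun i => S i ≤ 2 ^ i) h0 h1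
  · intro j hj hjn
    have := Nat.findGreatest_is_greatest (P := fun i => S i ≤ 2 ^ i) hj hjn
    omega

lemma window (S : ℕ → ℕ) (hS1 : ∀ i, 1 ≤ S i) (hmono : Monotone S) (D : ℝ) (hD : 2 ≤ D)
    (hfreq : ∀ (G : ℝ) (K : ℕ), ∃ n, K ≤ n ∧ G * D ^ n < Real.log (S n)) (G0 : ℝ) (hG0 : 1 ≤ G0) (K : ℕ) :
    ∃ k n, K ≤ k ∧ k ≤ n ∧ (∀ i, k ≤ i → i ≤ n → 2 ^ i < S i) ∧
      G0 * Real.log (∏ i ∈ Finset.range k, (S i : ℝ)) * D ^ (n + 1 - k) ≤ Real.log (S n) := by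
  have hSR : ∀ i, (1 : ℝ) ≤ S i := fun i => by exact_mod_cast hS1 i
  have hq : ∀ k, 0 ≤ Real.log (∏ i ∈ Finset.range k, (S i : ℝ)) := by
    intro k
    rw [Real.log_prod (fun i _ => by linarith [hSR i])]
    exact Finset.sum_nonneg fun i _ => Real.log_nonneg (hSR i)
  by_cases hcase : ∃ n0, ∀ n, n0 ≤ n → 2 ^ n < S n
  · obtain ⟨n0, hn0⟩ := hcase
    obtain ⟨n, hn1, hn2⟩ := hfreq (G0 * Real.log (∏ i ∈ Finset.range (max K n0), (S i : ℝ)) * D) (max K n0)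
    refine ⟨max K n0, n, le_max_left _ _, hn1, fun i hi _ => hn0 i ((le_max_right _ _).trans hi), ?_⟩
    refine le_trans ?_ hn2.le
    rw [mul_assoc _ D, ← pow_succ']
    have := hq (max K n0)
    gcongr
    · linarith
    · omega
  · push Not at hcase
    have hlim := tendsto_pow_const_div_const_pow_of_one_lt 2 (show 1 < D by linarith)
    have hev := hlim.eventually_lt_const (show 0 < 1 / G0 by positivity)
    obtain ⟨k1, hk1⟩ := Filter.eventually_atTop.mp hev
    obtain ⟨i0, hi0, hi0'⟩ := hcase (max K k1)
    obtain ⟨n, hn1, hn2⟩ := hfreq D i0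
    have hnbig : 2 ^ n < S n := by
      have h1 : (n : ℝ) ≤ D * D ^ n := by
        have h2 : (n : ℝ) ≤ 2 ^ n := by exact_mod_cast Nat.lt_two_pow_self.le
        have h3 : (2 : ℝ) ^ n ≤ D ^ n := by gcongr
        have h4 : 0 ≤ D ^ n := by positivity
        nlinarith
      have h5 : Real.log ((2 : ℝ) ^ n) < Real.log (S n) := by
        rw [Real.log_pow]
        have h6 : Real.log 2 ≤ 1 := by linarith [Real.log_two_lt_d9]
        have : (n : ℝ) * Real.log 2 ≤ n * 1 := by gcongr
        linarith
      have := (Real.log_lt_log_iff (by positivity) (by linarith [hSR n])).mp h5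
      exact_mod_cast this
    obtain ⟨i, hi1, hi2, hi3, hi4⟩ := last_index S hn1 hi0' hnbig
    refine ⟨i + 1, n, ?_, hi2, fun j hj hjn => hi4 j hj hjn, ?_⟩
    · have := le_max_left K k1; omega
    · have hlogq : Real.log (∏ j ∈ Finset.range (i + 1), (S j : ℝ)) ≤ ((i + 1 : ℕ) : ℝ) ^ 2 := by
        rw [Real.log_prod (fun i _ => by linarith [hSR i])]
        have h1 : ∀ j ∈ Finset.range (i + 1), Real.log (S j : ℝ) ≤ ((i + 1 : ℕ) : ℝ) := by
          intro j hj
          have hji : j ≤ i := Nat.lt_succ_iff.mp (Finset.mem_range.mp hj)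
          have h2 : (S j : ℝ) ≤ 2 ^ i := by exact_mod_cast (hmono hji).trans hi3
          have h3 := Real.log_le_log (by linarith [hSR j]) h2
          rw [Real.log_pow] at h3
          have h6 : Real.log 2 ≤ 1 := by linarith [Real.log_two_lt_d9]
          have : (i : ℝ) * Real.log 2 ≤ i * 1 := by gcongr
          push_cast
          linarith
        refine (Finset.sum_le_sum h1).trans ?_
        rw [Finset.sum_const, Finset.card_range, nsmul_eq_mul, sq]
      have hk := hk1 (i + 1) (by have := le_max_right K k1; omega)
      have hDk : 0 < D ^ (i + 1) := by positivity
      rw [div_lt_div_iff₀ hDk (by linarith)] at hk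
      refine le_trans ?_ hn2.le
      calc G0 * Real.log (∏ j ∈ Finset.range (i + 1), (S j : ℝ)) * D ^ (n + 1 - (i + 1))
          ≤ G0 * ((i + 1 : ℕ) : ℝ) ^ 2 * D ^ (n + 1 - (i + 1)) := by gcongr
        _ ≤ D ^ (i + 1) * D ^ (n + 1 - (i + 1)) := by
            gcongr
            linarith
        _ = D * D ^ n := by
            rw [← pow_add, ← pow_succ']; congr 1; omega

/-- the first jump -/
lemma jump (S : ℕ → ℕ) (hS1 : ∀ i, 1 ≤ S i) (D : ℝ) (hD : 2 ≤ D) {k n : ℕ} (hkn : k ≤ n)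
    (hbig : Real.log (∏ i ∈ Finset.range k, (S i : ℝ)) * D ^ (n + 1 - k) ≤ Real.log (S n)) :
    ∃ N, k ≤ N ∧ N ≤ n ∧ (D - 1) * Real.log (∏ i ∈ Finset.range N, (S i : ℝ)) ≤ Real.log (S N) ∧
      Real.log (∏ i ∈ Finset.range N, (S i : ℝ)) ≤ Real.log (∏ i ∈ Finset.range k, (S i : ℝ)) * D ^ (n + 1 - k) := by
  have hSR : ∀ i, (1 : ℝ) ≤ S i := fun i => by exact_mod_cast hS1 i
  have hq : ∀ k, 0 ≤ Real.log (∏ i ∈ Finset.range k, (S i : ℝ)) := by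
    intro k
    rw [Real.log_prod (fun i _ => by linarith [hSR i])]
    exact Finset.sum_nonneg fun i _ => Real.log_nonneg (hSR i)
  have hstep : ∀ k, Real.log (∏ i ∈ Finset.range (k + 1), (S i : ℝ)) = Real.log (∏ i ∈ Finset.range k, (S i : ℝ)) + Real.log (S k) := by
    intro k
    rw [Real.log_prod (fun i _ => by linarith [hSR i]), Real.log_prod (fun i _ => by linarith [hSR i]), Finset.sum_range_succ]
  set lq : ℕ → ℝ := fun k => Real.log (∏ i ∈ Finset.range k, (S i : ℝ)) with hlq
  by_contra hcon
  push Not at hcon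
  have key : ∀ j, k + j ≤ n + 1 → lq (k + j) ≤ lq k * D ^ j ∧ (0 < j → lq (k + j) < lq k * D ^ j) := by
    intro j
    induction j with
    | zero => intro _; simp
    | succ j ih =>
      intro hj
      obtain ⟨ih1, _⟩ := ih (by omega)
      have hpow : lq k * D ^ j ≤ lq k * D ^ (n + 1 - k) := by
        apply mul_le_mul_of_nonneg_left _ (hq k)
        apply pow_le_pow_right₀ (by linarith); omega
      have h1 : Real.log (S (k + j)) < (D - 1) * lq (k + j) := by
        by_contra h
        push Not at h
        have := hcon (k + j) (by omega) (by omega) h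
        linarith
      have h2 := hstep (k + j)
      have h3 : lq (k + (j + 1)) < D * lq (k + j) := by
        have : lq (k + (j + 1)) = lq (k + j) + Real.log (S (k + j)) := h2
        rw [this]; linarith
      have h4 : D * lq (k + j) ≤ lq k * D ^ (j + 1) := by
        rw [pow_succ']
        nlinarith
      exact ⟨by linarith, fun _ => by linarith⟩
  have h5 := (key (n + 1 - k) (by omega)).2 (by omega)
  rw [show k + (n + 1 - k) = n + 1 by omega] at h5
  have h6 : lq (n + 1) = lq n + Real.log (S n) := hstep n
  have := hq n
  have h7 : 0 ≤ lq n := hq n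
  linarith

lemma good_N (S : ℕ → ℕ) (hS1 : ∀ i, 1 ≤ S i) (hmono : Monotone S) (ε θ κ η γ : ℝ) (hε : 0 < ε) (hθ0 : 0 < θ) (hθ1 : θ ≤ 1)
    (hκ : 2 < κ) (hη : 0 < η) (hηθ : η < θ) (hγ : 0 < γ) (hγθ : γ < θ)
    (hS : ∀ i : ℕ, ((i + 1 : ℕ) : ℝ) ^ (1 + ε) ≤ S i)
    (hfreq : ∀ (G : ℝ) (K : ℕ), ∃ n, K ≤ n ∧ G * (κ / θ + 1) ^ n < Real.log (S n)) (K : ℕ) :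
    ∃ N, K ≤ N ∧ ∀ i, N ≤ i → (S i : ℝ) ^ (-θ) ≤ (∏ i ∈ Finset.range N, (S i : ℝ)) ^ (-(κ * (θ - η) / θ)) *
      (((2 : ℝ) ^ (-η)) ^ i + 1 / ((i + 1 : ℕ) : ℝ) ^ ((1 + ε) * (θ - γ))) := by
  have hSR : ∀ i, (1 : ℝ) ≤ S i := fun i => by exact_mod_cast hS1 i
  have hD : 2 ≤ κ / θ + 1 := by
    have : 1 ≤ κ / θ := by rw [le_div_iff₀ hθ0]; linarith
    linarith
  obtain ⟨κ', hκ'⟩ : ∃ κ', κ' = κ * (θ - η) / θ := ⟨_, rfl⟩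
  have hκ'0 : 0 < κ' := by
    rw [hκ']; apply div_pos _ hθ0; apply mul_pos <;> linarith
  obtain ⟨k, n, hk1, hkn, hk2, hk3⟩ := window S hS1 hmono _ hD hfreq (max 1 (κ' / γ)) (le_max_left _ _) K
  set D := κ / θ + 1 with hDdef
  have hq : ∀ k, 0 ≤ Real.log (∏ i ∈ Finset.range k, (S i : ℝ)) := by
    intro k
    rw [Real.log_prod (fun i _ => by linarith [hSR i])]
    exact Finset.sum_nonneg fun i _ => Real.log_nonneg (hSR i)
  have hZ0 : 0 ≤ Real.log (∏ i ∈ Finset.range k, (S i : ℝ)) * D ^ (n + 1 - k) := mul_nonneg (hq k) (by positivity)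
  rw [mul_assoc] at hk3
  have hbig : Real.log (∏ i ∈ Finset.range k, (S i : ℝ)) * D ^ (n + 1 - k) ≤ Real.log (S n) := by
    refine le_trans ?_ hk3
    have := mul_le_mul_of_nonneg_right (le_max_left 1 (κ' / γ)) hZ0
    linarith
  obtain ⟨N, hN1, hN2, hN3, hN4⟩ := jump S hS1 D hD hkn hbig
  refine ⟨N, hk1.trans hN1, fun i hi => ?_⟩
  rw [← hκ']
  set qN := ∏ i ∈ Finset.range N, (S i : ℝ) with hqN
  have hqN1 : 0 < qN := Finset.prod_pos fun i _ => by linarith [hSR i]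
  have hSi : (0 : ℝ) < S i := by linarith [hSR i]
  have hqpow : 0 < qN ^ (-κ') := Real.rpow_pos_of_pos hqN1 _
  have hi1 : (0 : ℝ) < ((i + 1 : ℕ) : ℝ) := by positivity
  by_cases hin : i ≤ n
  · -- inside the window
    have h1 : (S i : ℝ) ^ (-θ) = (S i : ℝ) ^ (-(θ - η)) * (S i : ℝ) ^ (-η) := by
      rw [← Real.rpow_add hSi]; congr 1; ring
    have h2 : (S i : ℝ) ^ (-η) ≤ ((2 : ℝ) ^ (-η)) ^ i := by
      rw [← Real.rpow_natCast, ← Real.rpow_mul (by norm_num), mul_comm, Real.rpow_mul (by norm_num), Real.rpow_natCast]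
      apply Real.rpow_le_rpow_of_nonpos (by positivity) _ (by linarith)
      exact_mod_cast (hk2 i (hN1.trans hi) hin).le
    have h3 : (S i : ℝ) ^ (-(θ - η)) ≤ qN ^ (-κ') := by
      rw [Real.rpow_def_of_pos hSi, Real.rpow_def_of_pos hqN1]
      apply Real.exp_le_exp.mpr
      have h4 : Real.log (S N) ≤ Real.log (S i) :=
        Real.log_le_log (by linarith [hSR N]) (by exact_mod_cast hmono hi)
      have h5 : κ' = (D - 1) * (θ - η) := by rw [hκ', hDdef]; field_simp; ring
      rw [h5]
      have : 0 < θ - η := by linarith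
      nlinarith
    rw [h1]
    have h6 : (0 : ℝ) ≤ 1 / ((i + 1 : ℕ) : ℝ) ^ ((1 + ε) * (θ - γ)) := by positivity
    calc (S i : ℝ) ^ (-(θ - η)) * (S i : ℝ) ^ (-η) ≤ qN ^ (-κ') * ((2 : ℝ) ^ (-η)) ^ i := by
          gcongr
      _ ≤ _ := by gcongr; linarith
  · push Not at hin
    have h1 : (S i : ℝ) ^ (-θ) = (S i : ℝ) ^ (-γ) * (S i : ℝ) ^ (-(θ - γ)) := by
      rw [← Real.rpow_add hSi]; congr 1; ring
    have h2 : (S i : ℝ) ^ (-(θ - γ)) ≤ 1 / ((i + 1 : ℕ) : ℝ) ^ ((1 + ε) * (θ - γ)) := by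
      rw [one_div, ← Real.rpow_neg hi1.le, ← mul_neg, Real.rpow_mul hi1.le]
      apply Real.rpow_le_rpow_of_nonpos (by positivity) (hS i) (by linarith)
    have h3 : (S i : ℝ) ^ (-γ) ≤ qN ^ (-κ') := by
      rw [Real.rpow_def_of_pos hSi, Real.rpow_def_of_pos hqN1]
      apply Real.exp_le_exp.mpr
      have h4 : Real.log (S n) ≤ Real.log (S i) :=
        Real.log_le_log (by linarith [hSR n]) (by exact_mod_cast hmono hin.le)
      have h5 : κ' / γ * (Real.log (∏ i ∈ Finset.range k, (S i : ℝ)) * D ^ (n + 1 - k)) ≤ Real.log (S n) :=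
        le_trans (mul_le_mul_of_nonneg_right (le_max_right _ _) hZ0) hk3
      have h6 : κ' / γ * Real.log qN ≤ Real.log (S i) := by
        refine le_trans ?_ (h5.trans h4)
        gcongr
      have h7 : κ' * Real.log qN ≤ γ * Real.log (S i) := by
        calc κ' * Real.log qN = γ * (κ' / γ * Real.log qN) := by field_simp
          _ ≤ _ := by gcongr
      linarith
    rw [h1]
    have h6 : (0 : ℝ) ≤ ((2 : ℝ) ^ (-η)) ^ i := by positivity
    calc (S i : ℝ) ^ (-γ) * (S i : ℝ) ^ (-(θ - γ)) ≤ qN ^ (-κ') * (1 / ((i + 1 : ℕ) : ℝ) ^ ((1 + ε) * (θ - γ))) := by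
          gcongr
      _ ≤ _ := by gcongr; linarith

end

end RothAux


namespace RothAux

noncomputable section

lemma rat_gap (x y : ℚ) (h : x < y) (M : ℝ) (hx : (x.den : ℝ) ≤ M) (hy : (y.den : ℝ) ≤ M) :
    1 ≤ ((y : ℝ) - x) * M ^ 2 := by
  have e1 : (x : ℚ) * x.den = x.num := Rat.mul_den_eq_num x
  have e2 : (y : ℚ) * y.den = y.num := Rat.mul_den_eq_num y
  have px : (0 : ℚ) < x.den := by exact_mod_cast x.den_pos
  have py : (0 : ℚ) < y.den := by exact_mod_cast y.den_pos
  have h1 : (0 : ℚ) < (y.num * x.den - x.num * y.den : ℤ) := by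
    push_cast
    rw [← e1, ← e2]
    have : y * y.den * x.den - x * x.den * y.den = (y - x) * (y.den * x.den) := by ring
    rw [this]
    have : 0 < y - x := by linarith
    positivity
  have h2 : (1 : ℚ) ≤ (y.num * x.den - x.num * y.den : ℤ) := by
    have : (0 : ℤ) < (y.num * x.den - x.num * y.den : ℤ) := by exact_mod_cast h1
    exact_mod_cast this
  have h3 : (1 : ℚ) ≤ (y - x) * (y.den * x.den) := by
    refine h2.trans (le_of_eq ?_)
    push_cast
    rw [← e1, ← e2]
    ring
  have h4 : (1 : ℝ) ≤ ((y : ℝ) - x) * (y.den * x.den) := by exact_mod_cast h3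
  have h5 : (0 : ℝ) < (y : ℝ) - x := by
    have : (x : ℝ) < y := by exact_mod_cast h
    linarith
  refine h4.trans ?_
  rw [pow_two]
  gcongr
  exact le_trans (Nat.cast_nonneg _) hx

lemma den_le_prod (S Bv : ℕ → ℕ) (hS1 : ∀ i, 1 ≤ S i) (N : ℕ) :
    (∏ i ∈ Finset.range N, (1 + (Bv i : ℚ) / S i)).den ≤ ∏ i ∈ Finset.range N, S i := by
  have hpos : 0 < ∏ i ∈ Finset.range N, S i := Finset.prod_pos fun i _ => hS1 i
  have h : ∏ i ∈ Finset.range N, (1 + (Bv i : ℚ) / S i)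
      = (((∏ i ∈ Finset.range N, (S i + Bv i) : ℕ) : ℤ) : ℚ) / (((∏ i ∈ Finset.range N, S i : ℕ) : ℤ) : ℚ) := by
    push_cast
    rw [← Finset.prod_div_distrib]
    refine Finset.prod_congr rfl fun i _ => ?_
    have : (S i : ℚ) ≠ 0 := by have := hS1 i; positivity
    field_simp
  rw [h]
  have := Rat.den_dvd ((∏ i ∈ Finset.range N, (S i + Bv i) : ℕ) : ℤ) ((∏ i ∈ Finset.range N, S i : ℕ) : ℤ)
  exact Nat.le_of_dvd hpos (by exact_mod_cast this)

lemma main_sorted (S Bv : ℕ → ℕ) (hS1 : ∀ i, 1 ≤ S i) (hmono : Monotone S) (hB : ∀ i, 0 < Bv i)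
    (ε θ κ C1 : ℝ) (hε : 0 < ε) (hθ0 : 0 < θ) (hθ1 : θ ≤ 1) (hεθ : 1 < (1 + ε) * θ) (hκ : 2 < κ)
    (hS : ∀ i : ℕ, ((i + 1 : ℕ) : ℝ) ^ (1 + ε) ≤ S i)
    (hv : ∀ i, (Bv i : ℝ) / S i ≤ C1 * (S i : ℝ) ^ (-θ))
    (hfreq : ∀ (G : ℝ) (K : ℕ), ∃ n, K ≤ n ∧ G * (κ / θ + 1) ^ n < Real.log (S n))
    (L : ℝ) (hL : Filter.Tendsto (fun N => ∏ i ∈ Finset.range N, (1 + (Bv i : ℝ) / S i))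
      Filter.atTop (nhds L)) : Transcendental ℚ L := by
  intro halg
  -- parameters
  obtain ⟨η, hη, hηθ, hκ'⟩ : ∃ η, 0 < η ∧ η < θ ∧ 2 < κ * (θ - η) / θ := by
    refine ⟨θ * (κ - 2) / (2 * κ), by have : 0 < κ - 2 := by linarith
                                      have : 0 < κ := by linarith
                                      positivity, ?_, ?_⟩
    · rw [div_lt_iff₀ (by linarith)]; nlinarith
    · have : κ ≠ 0 := by linarith
      have : κ * (θ - θ * (κ - 2) / (2 * κ)) / θ = (κ + 2) / 2 := by field_simp; ring
      rw [this]; linarith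
  obtain ⟨γ, hγ, hγθ, hs⟩ : ∃ γ, 0 < γ ∧ γ < θ ∧ 1 < (1 + ε) * (θ - γ) := by
    refine ⟨((1 + ε) * θ - 1) / (2 * (1 + ε)), by have : 0 < (1 + ε) * θ - 1 := by linarith
                                                  positivity, ?_, ?_⟩
    · rw [div_lt_iff₀ (by linarith)]; nlinarith
    · have : (1 + ε) * (θ - ((1 + ε) * θ - 1) / (2 * (1 + ε))) = ((1 + ε) * θ + 1) / 2 := by
        field_simp; ring
      rw [this]; linarith
  set κ' := κ * (θ - η) / θ with hκdef
  set s := (1 + ε) * (θ - γ) with hsdef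
  set w : ℕ → ℝ := fun i => ((2 : ℝ) ^ (-η)) ^ i + 1 / ((i + 1 : ℕ) : ℝ) ^ s with hw
  have hw0 : ∀ i, 0 ≤ w i := fun i => by simp only [hw]; positivity
  have hws : Summable w := by
    refine Summable.add (summable_geometric_of_lt_one (by positivity) ?_) ?_
    · exact Real.rpow_lt_one_of_one_lt_of_neg (by norm_num) (by linarith)
    · exact (summable_nat_add_iff 1).2 (Real.summable_one_div_nat_rpow.2 hs)
  have hgood : ∀ K, ∃ N, K ≤ N ∧ ∀ i, N ≤ i → (S i : ℝ) ^ (-θ) ≤ (∏ i ∈ Finset.range N, (S i : ℝ)) ^ (-κ') * w i :=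
    good_N S hS1 hmono ε θ κ η γ hε hθ0 hθ1 hκ hη hηθ hγ hγθ hS hfreq
  set x : ℕ → ℝ := fun N => ∏ i ∈ Finset.range N, (1 + (Bv i : ℝ) / S i) with hx
  have hSR : ∀ i, (0 : ℝ) < S i := fun i => by exact_mod_cast hS1 i
  have hBR : ∀ i, (0 : ℝ) < Bv i := fun i => by exact_mod_cast hB i
  have hv0 : ∀ i, 0 < (Bv i : ℝ) / S i := fun i => div_pos (hBR i) (hSR i)
  have hx0 : ∀ N, 0 < x N := fun N => Finset.prod_pos fun i _ => by linarith [hv0 i]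
  have hstep : ∀ N, x (N + 1) = x N + x N * ((Bv N : ℝ) / S N) := fun N => by
    simp only [hx, Finset.prod_range_succ]; ring
  have hxm : StrictMono x := strictMono_nat_of_lt_succ fun N => by
    rw [hstep]; have := mul_pos (hx0 N) (hv0 N); linarith
  have hxL : ∀ N, x N ≤ L := fun N => hxm.monotone.ge_of_tendsto hL N
  have hL0 : 0 < L := (hx0 0).trans_le (hxL 0)
  have hC1 : 0 < C1 := by
    have h1 := (hv0 0).trans_le (hv 0)
    have h2 : 0 < (S 0 : ℝ) ^ (-θ) := Real.rpow_pos_of_pos (hSR 0) _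
    exact pos_of_mul_pos_left h1 h2.le
  have happrox : ∀ N, (∀ i, N ≤ i → (S i : ℝ) ^ (-θ) ≤ (∏ i ∈ Finset.range N, (S i : ℝ)) ^ (-κ') * w i) →
      L - x N ≤ (L * C1 * ∑' i, w i) * (∏ i ∈ Finset.range N, (S i : ℝ)) ^ (-κ') := by
    intro N hN
    set Q := (∏ i ∈ Finset.range N, (S i : ℝ)) ^ (-κ') with hQ
    have hQ0 : 0 ≤ Q := Real.rpow_nonneg (Finset.prod_nonneg fun i _ => (hSR i).le) _
    have hM : ∀ M, N ≤ M → x M - x N ≤ L * C1 * Q * ∑ i ∈ Finset.range M, w i := by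
      intro M hM
      induction M, hM using Nat.le_induction with
      | base =>
        rw [sub_self]
        have := Finset.sum_nonneg (s := Finset.range N) fun i _ => hw0 i
        positivity
      | succ M hNM ih =>
        rw [hstep, Finset.sum_range_succ, mul_add]
        have h1 : x M * ((Bv M : ℝ) / S M) ≤ L * (C1 * (Q * w M)) := by
          refine mul_le_mul (hxL M) ((hv M).trans ?_) (hv0 M).le hL0.le
          exact mul_le_mul_of_nonneg_left (hN M hNM) hC1.le
        nlinarith
    have h2 : ∀ M, N ≤ M → x M ≤ x N + (L * C1 * ∑' i, w i) * Q := by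
      intro M hNM
      have h3 := hM M hNM
      have h4 : ∑ i ∈ Finset.range M, w i ≤ ∑' i, w i := hws.sum_le_tsum _ fun i _ => hw0 i
      have h5 : L * C1 * Q * ∑ i ∈ Finset.range M, w i ≤ L * C1 * Q * ∑' i, w i := by gcongr
      linarith
    have := le_of_tendsto hL (Filter.eventually_atTop.2 ⟨N, h2⟩)
    linarith
  set X : ℕ → ℚ := fun N => ∏ i ∈ Finset.range N, (1 + (Bv i : ℚ) / S i) with hX
  have hXx : ∀ N, ((X N : ℚ) : ℝ) = x N := fun N => by simp only [hX, hx]; push_cast; rfl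
  have hW0 : 0 ≤ ∑' i, w i := tsum_nonneg hw0
  obtain ⟨M, hM⟩ := roth L halg κ' hκ' (L * C1 * ∑' i, w i)
  have hden : ∀ K, ∃ N, K ≤ N ∧ ((X N).den : ℝ) ≤ M := by
    intro K
    obtain ⟨N, hKN, hN⟩ := hgood K
    refine ⟨N, hKN, hM _ ?_⟩
    rw [hXx, abs_of_nonneg (by linarith [hxL N])]
    refine (happrox N hN).trans ?_
    refine mul_le_mul_of_nonneg_left ?_ (by positivity)
    refine Real.rpow_le_rpow_of_nonpos (by exact_mod_cast (X N).den_pos) ?_ (by linarith)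
    have := den_le_prod S Bv hS1 N
    exact_mod_cast this
  have hMpos : 0 < M := by
    obtain ⟨N, -, h⟩ := hden 0
    refine lt_of_lt_of_le ?_ h
    exact_mod_cast (X N).den_pos
  have hev : ∀ᶠ N in Filter.atTop, L - 1 / M ^ 2 < x N :=
    hL.eventually (lt_mem_nhds (by have : 0 < 1 / M ^ 2 := by positivity
                                   linarith))
  obtain ⟨K, hK⟩ := Filter.eventually_atTop.1 hev
  obtain ⟨N, hKN, hN⟩ := hden K
  obtain ⟨N', hKN', hN'⟩ := hden (N + 1)
  have hlt : X N < X N' := by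
    have : ((X N : ℚ) : ℝ) < X N' := by rw [hXx, hXx]; exact hxm (by omega)
    exact_mod_cast this
  have hg := rat_gap _ _ hlt M hN hN'
  rw [hXx, hXx] at hg
  have h1 := hK N hKN
  have h2 := hxL N'
  have h3 : (x N' - x N) * M ^ 2 < 1 / M ^ 2 * M ^ 2 := by
    refine mul_lt_mul_of_pos_right (by linarith) (by positivity)
  rw [one_div_mul_cancel (by positivity)] at h3
  linarith

end

end RothAux


namespace RothAux

noncomputable section

lemma pow_lin (α h : ℝ) (hα0 : 0 < α) (hα1 : α < 1) (hh : 0 < h) :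
    ∃ K : ℝ, ∀ y : ℝ, 0 ≤ y → y ^ α ≤ h * y + K := by
  set Y := h ^ (1 / (α - 1)) with hY
  have hY0 : 0 < Y := Real.rpow_pos_of_pos hh _
  have hYh : Y ^ (α - 1) = h := by
    rw [hY, ← Real.rpow_mul hh.le, one_div_mul_cancel (by linarith), Real.rpow_one]
  refine ⟨Y ^ α, fun y hy => ?_⟩
  rcases le_total y Y with hyY | hyY
  · have := Real.rpow_le_rpow hy hyY hα0.le
    have : 0 ≤ h * y := by positivity
    linarith
  · have hy0 : 0 < y := by linarith
    have h1 : y ^ (α - 1) ≤ h := by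
      rw [← hYh]; exact Real.rpow_le_rpow_of_nonpos hY0 hyY (by linarith)
    have h2 : y ^ α = y ^ (α - 1) * y := by
      rw [← Real.rpow_add_one hy0.ne']; ring_nf
    have : 0 ≤ Y ^ α := by positivity
    rw [h2]
    have := mul_le_mul_of_nonneg_right h1 hy
    linarith

lemma growth (α β β' : ℝ) (hα0 : 0 < α) (hα1 : α < 1) (hβ : β < β') :
    ∃ C : ℝ, 0 < C ∧ ∀ x : ℝ, 1 ≤ x → x ^ β * 2 ^ (Real.logb 2 x ^ α) ≤ C * x ^ β' := by
  obtain ⟨K, hK⟩ := pow_lin α (β' - β) hα0 hα1 (by linarith)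
  refine ⟨2 ^ K, by positivity, fun x hx => ?_⟩
  have hx0 : 0 < x := by linarith
  have hy : 0 ≤ Real.logb 2 x := Real.logb_nonneg (by norm_num) hx
  have h1 : (2 : ℝ) ^ (Real.logb 2 x ^ α) ≤ 2 ^ ((β' - β) * Real.logb 2 x + K) :=
    Real.rpow_le_rpow_of_exponent_le (by norm_num) (hK _ hy)
  have h2 : (2 : ℝ) ^ ((β' - β) * Real.logb 2 x + K) = x ^ (β' - β) * 2 ^ K := by
    rw [Real.rpow_add (by norm_num), mul_comm (β' - β), Real.rpow_mul (by norm_num),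
      Real.rpow_logb (by norm_num) (by norm_num) hx0]
  calc x ^ β * 2 ^ (Real.logb 2 x ^ α) ≤ x ^ β * (x ^ (β' - β) * 2 ^ K) := by
        rw [← h2]; gcongr
    _ = 2 ^ K * (x ^ β * x ^ (β' - β)) := by ring
    _ = 2 ^ K * x ^ β' := by rw [← Real.rpow_add hx0]; ring_nf

lemma exists_sort (A : ℕ → ℕ) (hA : ∀ n, n < A n) : ∃ σ : ℕ ≃ ℕ, Monotone (A ∘ σ) := by
  set key : ℕ → ℕ := fun n => A n ^ 2 + n with hkey
  have hle : ∀ m n, key m ≤ key n → A m ≤ A n := by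
    intro m n h
    by_contra hlt
    push Not at hlt
    have h1 := hA n
    simp only [hkey] at h
    nlinarith
  have hinj : Function.Injective key := by
    intro m n h
    have h1 : A m = A n := le_antisymm (hle _ _ h.le) (hle _ _ h.ge)
    simp only [hkey, h1] at h
    omega
  haveI : Infinite (Set.range key) := Set.infinite_coe_iff.2 (Set.infinite_range_of_injective hinj)
  set o := Nat.Subtype.orderIsoOfNat (Set.range key) with ho
  refine ⟨o.toEquiv.trans (Equiv.ofInjective key hinj).symm, ?_⟩
  have hk : ∀ i, key ((o.toEquiv.trans (Equiv.ofInjective key hinj).symm) i) = (o i : ℕ) := by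
    intro i
    have := (Equiv.ofInjective key hinj).apply_symm_apply (o i)
    exact congrArg Subtype.val this
  intro i j hij
  apply hle
  rw [hk, hk]
  exact o.monotone hij

lemma sort_ge (A a' : ℕ → ℕ) (ha : Monotone a') (haA : ∀ n, a' n ≤ A n) (σ : ℕ ≃ ℕ)
    (hσ : Monotone (A ∘ σ)) (i : ℕ) : a' i ≤ A (σ i) := by
  obtain ⟨j, hj, hji⟩ : ∃ j, j ≤ i ∧ i ≤ σ j := by
    by_contra hcon
    push Not at hcon
    have h1 : (Finset.range (i + 1)).card ≤ (Finset.range i).card := by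
      refine Finset.card_le_card_of_injOn σ (fun j hj => ?_) σ.injective.injOn
      have := hcon j (by have := Finset.mem_range.1 hj; omega)
      simpa using this
    simp at h1
  calc a' i ≤ a' (σ j) := ha hji
    _ ≤ A (σ j) := haA _
    _ ≤ A (σ i) := hσ hj

lemma freq_of_limsup (a : ℕ → ℕ) (hpos : ∀ n, 1 ≤ n → 0 < a n) (D : ℝ) (hD : 0 < D)
    (h : Filter.limsup (fun n : ℕ => (((a n : ℝ) ^ (D ^ (-(n : ℝ))) : ℝ) : EReal)) Filter.atTop = ⊤)
    (G : ℝ) (K : ℕ) : ∃ n, K ≤ n ∧ 1 ≤ n ∧ G * D ^ n < Real.log (a n) := by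
  have h1 : ((Real.exp G : ℝ) : EReal) < Filter.limsup (fun n : ℕ => (((a n : ℝ) ^ (D ^ (-(n : ℝ))) : ℝ) : EReal)) Filter.atTop := by
    rw [h]; exact EReal.coe_lt_top _
  have h2 := Filter.frequently_lt_of_lt_limsup (by isBoundedDefault) h1
  obtain ⟨n, hn, hlt⟩ := (Filter.frequently_atTop.1 h2) (K + 1)
  refine ⟨n, by omega, by omega, ?_⟩
  have han : (0 : ℝ) < a n := by exact_mod_cast hpos n (by omega)
  have h3 : Real.exp G < (a n : ℝ) ^ (D ^ (-(n : ℝ))) := by exact_mod_cast hlt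
  have h4 : G < D ^ (-(n : ℝ)) * Real.log (a n) := by
    rw [← Real.log_rpow han, Real.lt_log_iff_exp_lt (Real.rpow_pos_of_pos han _)]
    exact h3
  have h5 : D ^ (-(n : ℝ)) = (D ^ n)⁻¹ := by rw [Real.rpow_neg hD.le, Real.rpow_natCast]
  rw [h5, inv_mul_eq_div, lt_div_iff₀ (by positivity)] at h4
  exact h4

end

end RothAux

open Filter

theorem stmt_1 (ε α β : ℝ) (hε : 0 < ε) (hα : 0 < α ∧ α < 1)
    (hβ : 0 ≤ β ∧ β < ε / (1 + ε))
    (a b : ℕ → ℕ)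
    (hpos : ∀ n : ℕ, 1 ≤ n → 0 < a n ∧ 0 < b n)
    (ha : ∀ n : ℕ, 1 ≤ n → (n : ℝ) ^ (1 + ε) < (a n : ℝ) ∧ a n ≤ a (n + 1))
    (hb : ∀ n : ℕ, 1 ≤ n →
      (b n : ℝ) ≤ (a n : ℝ) ^ β * 2 ^ (Real.logb 2 (a n : ℝ) ^ α))
    (hlimsup : ∃ δ : ℝ, 0 < δ ∧ Filter.limsup (fun n : ℕ =>
        (((a n : ℝ) ^ (((2 + δ) / (1 - β) + 1) ^ (-(n : ℝ))) : ℝ) : EReal))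
        Filter.atTop = ⊤) :
    ∀ c : ℕ → ℕ, (∀ n, 0 < c n) →
      ∃ L : ℝ,
        Tendsto (fun N => ∏ n ∈ Finset.Icc 1 N,
          (1 + (b n : ℝ) / ((a n : ℝ) * (c n : ℝ)))) atTop (nhds L) ∧
        Transcendental ℚ L := by
  intro c hc
  obtain ⟨δ, hδ, hlim⟩ := hlimsup
  obtain ⟨hα0, hα1⟩ := hα
  obtain ⟨hβ0, hβ1⟩ := hβ
  have hE1 : ε / (1 + ε) < 1 := by rw [div_lt_one (by linarith)]; linarith
  have hβlt : β < 1 := by linarith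
  -- choice of the auxiliary exponent
  obtain ⟨β', hββ', hβ'E, hβ'κ⟩ : ∃ β', β < β' ∧ β' < ε / (1 + ε) ∧ 2 < (2 + δ) * (1 - β') / (1 - β) := by
    have hm : β < min (ε / (1 + ε)) (1 - 2 * (1 - β) / (2 + δ)) := by
      refine lt_min hβ1 ?_
      have : 2 * (1 - β) / (2 + δ) < 1 - β := by
        rw [div_lt_iff₀ (by linarith)]; nlinarith
      linarith
    obtain ⟨β', h1, h2⟩ := exists_between hm
    refine ⟨β', h1, h2.trans_le (min_le_left _ _), ?_⟩
    have h3 := h2.trans_le (min_le_right _ _)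
    rw [lt_div_iff₀ (by linarith)]
    have h4 : 2 * (1 - β) / (2 + δ) < 1 - β' := by linarith
    rw [div_lt_iff₀ (by linarith)] at h4
    linarith
  set θ := 1 - β' with hθ
  have hθ0 : 0 < θ := by linarith
  have hθ1 : θ ≤ 1 := by linarith
  have hεθ : 1 < (1 + ε) * θ := by
    rw [lt_div_iff₀ (by linarith)] at hβ'E
    rw [hθ]; nlinarith
  set κ := (2 + δ) * θ / (1 - β) with hκ
  have hD : κ / θ + 1 = (2 + δ) / (1 - β) + 1 := by
    have : 1 - β ≠ 0 := by linarith
    rw [hκ]; field_simp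
  rw [← hD] at hlim
  have hκ0 : 0 < κ := by linarith
  have hDpos : 0 < κ / θ + 1 := by positivity
  obtain ⟨C1, hC1, hgrow⟩ := RothAux.growth α β β' hα0 hα1 hββ'
  -- shifted sequences
  set A : ℕ → ℕ := fun i => a (i + 1) * c (i + 1) with hA
  have ha1 : ∀ i, 1 ≤ a (i + 1) := fun i => (hpos (i + 1) (by omega)).1
  have hmono : Monotone fun i => a (i + 1) := monotone_nat_of_le_succ fun i => (ha (i + 1) (by omega)).2
  have haA : ∀ i, a (i + 1) ≤ A i := fun i => Nat.le_mul_of_pos_right _ (hc _)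
  have hapow : ∀ i : ℕ, ((i + 1 : ℕ) : ℝ) ^ (1 + ε) < a (i + 1) := fun i => (ha (i + 1) (by omega)).1
  have hAlt : ∀ i, i < A i := by
    intro i
    have h1 : ((i + 1 : ℕ) : ℝ) ≤ ((i + 1 : ℕ) : ℝ) ^ (1 + ε) :=
      Real.self_le_rpow_of_one_le (by push_cast; linarith [Nat.cast_nonneg (α := ℝ) i]) (by linarith)
    have h2 : i + 1 < a (i + 1) := by exact_mod_cast h1.trans_lt (hapow i)
    have := haA i
    omega
  have hA1 : ∀ i, 1 ≤ A i := fun i => by have := hAlt i; omega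
  have hAR : ∀ i, (0 : ℝ) < A i := fun i => by exact_mod_cast hA1 i
  have hv : ∀ i, (b (i + 1) : ℝ) / A i ≤ C1 * (A i : ℝ) ^ (-θ) := by
    intro i
    have h1 := (hb (i + 1) (by omega)).trans (hgrow _ (by exact_mod_cast ha1 i))
    have h2 : (a (i + 1) : ℝ) ^ β' ≤ (A i : ℝ) ^ β' :=
      Real.rpow_le_rpow (by positivity) (by exact_mod_cast haA i) (by linarith)
    have h3 : (A i : ℝ) ^ (-θ) = (A i : ℝ) ^ β' / A i := by
      rw [← Real.rpow_sub_one (hAR i).ne', hθ]; ring_nf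
    rw [h3, ← mul_div_assoc]
    have := mul_le_mul_of_nonneg_left h2 hC1.le
    gcongr
    linarith
  obtain ⟨σ, hσ⟩ := RothAux.exists_sort A hAlt
  have hge := RothAux.sort_ge A (fun i => a (i + 1)) hmono haA σ hσ
  -- convergence
  have hsum : Summable fun i => (b (i + 1) : ℝ) / A i := by
    have hs : Summable fun i : ℕ => C1 * (1 / ((i + 1 : ℕ) : ℝ) ^ ((1 + ε) * θ)) :=
      ((summable_nat_add_iff 1).2 (Real.summable_one_div_nat_rpow.2 hεθ)).mul_left C1
    refine Summable.of_nonneg_of_le (fun i => by positivity) (fun i => (hv i).trans ?_) hs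
    refine mul_le_mul_of_nonneg_left ?_ hC1.le
    have h1 : ((i + 1 : ℕ) : ℝ) ^ (1 + ε) ≤ A i :=
      (hapow i).le.trans (by exact_mod_cast haA i)
    have h0 : (0 : ℝ) < ((i + 1 : ℕ) : ℝ) := by positivity
    have h2 := Real.rpow_le_rpow_of_nonpos (Real.rpow_pos_of_pos h0 (1 + ε)) h1 (z := -θ) (by linarith)
    refine h2.trans (le_of_eq ?_)
    rw [← Real.rpow_mul h0.le, mul_neg, Real.rpow_neg h0.le, one_div]
  have hmult := Real.multipliable_one_add_of_summable hsum
  have hprod := hmult.hasProd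
  set L := ∏' i, (1 + (b (i + 1) : ℝ) / A i) with hL
  refine ⟨L, ?_, ?_⟩
  · have ht := hprod.tendsto_prod_nat
    refine ht.congr fun N => ?_
    rw [Finset.range_eq_Ico, Finset.prod_Ico_add' (fun n => 1 + (b n : ℝ) / ((a n * c n : ℕ) : ℝ)) 0 N 1]
    refine Finset.prod_congr ?_ fun n _ => by push_cast; rfl
    ext n; simp
  · have hprod' := (Equiv.hasProd_iff σ).2 hprod
    refine RothAux.main_sorted (fun i => A (σ i)) (fun i => b (σ i + 1)) (fun i => hA1 _) hσ
      (fun i => (hpos _ (by omega)).2) ε θ κ C1 hε hθ0 hθ1 hεθ hβ'κ ?_ (fun i => hv _) ?_ L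
      hprod'.tendsto_prod_nat
    · intro i
      exact (hapow i).le.trans (by exact_mod_cast hge i)
    · intro G K
      obtain ⟨n, hn, hn1, hlog⟩ := RothAux.freq_of_limsup a (fun n hn => (hpos n hn).1) _ hDpos hlim
        (|G|) (K + 1)
      obtain ⟨m, rfl⟩ : ∃ m, n = m + 1 := ⟨n - 1, by omega⟩
      refine ⟨m, by omega, ?_⟩
      have h1 : Real.log (a (m + 1)) ≤ Real.log (A (σ m)) :=
        Real.log_le_log (by exact_mod_cast ha1 m) (by exact_mod_cast hge m)
      refine lt_of_le_of_lt ?_ (hlog.trans_le h1)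
      have h2 : (1 : ℝ) ≤ κ / θ + 1 := by
        have : 0 ≤ κ / θ := by positivity
        linarith
      have h3 : (κ / θ + 1) ^ m ≤ (κ / θ + 1) ^ (m + 1) := pow_le_pow_right₀ h2 (by omega)
      calc G * (κ / θ + 1) ^ m ≤ |G| * (κ / θ + 1) ^ m := by
            gcongr; exact le_abs_self G
        _ ≤ _ := by gcongr
end
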